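/- arXiv:0805.4823 — 2 statements merged into one kernel-verified Lean document; each statement's English description precedes it below -/
import Mathlib

section
/- (Theorem 2.2: positivity for the minimal Dirichlet problem.) Let d ≥ 1, 0 < m < 1 and 0 < 2R < R₀. There exist positive constants a and b depending only on d such that the following holds. Let u solve the minimal Dirichlet problem for the FDE ∂ₜu = Δ(u^m) on B_{R₀}(x₀) with nonnegative initial data u₀ supported in the closure of B_R(x₀), u₀ not identically zero, and extinction time T. Set A₀ = B_{R₀}(x₀) \ B_{2R}(x₀) and t_* = a (R₀ − 2R)² ( (∫_{B_R(x₀)} u₀ dx) / |A₀| )^{1−m}. Then T ≥ 2 t_*, and for every t ∈ (0, t_*]: u(t,x₀)^m ≥ b (R₀ − 2R)² |A₀|^{−1} T^{−1/(1−m)} t^{m/(1−m)} ∫_{B_R(x₀)} u₀(x) dx. -/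
open MeasureTheory Metric Set Real

/-- The spatial Laplacian of `f : ℝ^d → ℝ` at a point, as the sum of second
coordinate derivatives. -/
noncomputable def spaceLap {d : ℕ} (f : EuclideanSpace ℝ (Fin d) → ℝ)
    (x : EuclideanSpace ℝ (Fin d)) : ℝ :=
  ∑ i : Fin d, fderiv ℝ (fun y => fderiv ℝ f y (EuclideanSpace.single i 1)) x
    (EuclideanSpace.single i 1)

/-- `u` is a classical solution of the fast diffusion equation `∂ₜ u = Δ(u^m)`
on the space-time set `Q`: it is positive and smooth on `Q` and satisfies the
equation pointwise on `Q`. -/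
def IsFDESol {d : ℕ} (m : ℝ) (Q : Set (ℝ × EuclideanSpace ℝ (Fin d)))
    (u : ℝ → EuclideanSpace ℝ (Fin d) → ℝ) : Prop :=
  (∀ p ∈ Q, 0 < u p.1 p.2) ∧
  ContDiffOn ℝ (⊤ : ℕ∞) (fun p : ℝ × EuclideanSpace ℝ (Fin d) => u p.1 p.2) Q ∧
  ∀ p ∈ Q, deriv (fun s => u s p.2) p.1 = spaceLap (fun y => u p.1 y ^ m) p.2

/-- `u` solves the homogeneous Dirichlet problem for the FDE `∂ₜ u = Δ(u^m)` on the
ball `B_ρ(x₀)` with initial data `u₀` and extinction time `T`. -/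
def IsDirichletSol {d : ℕ} (m : ℝ) (x₀ : EuclideanSpace ℝ (Fin d)) (ρ T : ℝ)
    (u : ℝ → EuclideanSpace ℝ (Fin d) → ℝ) (u₀ : EuclideanSpace ℝ (Fin d) → ℝ) : Prop :=
  (∀ t ∈ Icc 0 T, ∀ x ∈ closedBall x₀ ρ, 0 ≤ u t x) ∧
  ContinuousOn (fun p : ℝ × EuclideanSpace ℝ (Fin d) => u p.1 p.2)
    (Icc 0 T ×ˢ closedBall x₀ ρ) ∧
  IsFDESol m (Ioo 0 T ×ˢ ball x₀ ρ) u ∧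
  (∀ x ∈ ball x₀ ρ, u 0 x = u₀ x) ∧
  (∀ t ∈ Ioc 0 T, ∀ x ∈ sphere x₀ ρ, u t x = 0) ∧
  (∀ x ∈ closedBall x₀ ρ, u T x = 0) ∧
  ∀ t ∈ Ioo 0 T, ∃ x ∈ ball x₀ ρ, u t x ≠ 0

section
open MeasureTheory Metric Set Real

theorem spaceLap_congr {d : ℕ} {f g : EuclideanSpace ℝ (Fin d) → ℝ} {x : EuclideanSpace ℝ (Fin d)}
    (h : f =ᶠ[nhds x] g) : spaceLap f x = spaceLap g x := by
  unfold spaceLap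
  refine Finset.sum_congr rfl fun i _ => ?_
  have : (fun y => fderiv ℝ f y (EuclideanSpace.single i 1)) =ᶠ[nhds x]
      (fun y => fderiv ℝ g y (EuclideanSpace.single i 1)) := by
    filter_upwards [h.fderiv (𝕜 := ℝ)] with y hy
    rw [hy]
  rw [this.fderiv_eq]

theorem cd2_diff {d : ℕ} {f : EuclideanSpace ℝ (Fin d) → ℝ} {x : EuclideanSpace ℝ (Fin d)}
    (hf : ContDiffAt ℝ 2 f x) : ∀ᶠ y in nhds x, DifferentiableAt ℝ f y := by
  filter_upwards [hf.eventually (by simp)] with y hy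
  exact hy.differentiableAt (by simp)

theorem cd2_diff_partial {d : ℕ} {f : EuclideanSpace ℝ (Fin d) → ℝ} {x : EuclideanSpace ℝ (Fin d)}
    (hf : ContDiffAt ℝ 2 f x) (v : EuclideanSpace ℝ (Fin d)) :
    DifferentiableAt ℝ (fun y => fderiv ℝ f y v) x := by
  have : ContDiffAt ℝ 1 (fderiv ℝ f) x := hf.fderiv_right (by norm_num)
  have h2 := this.differentiableAt (by simp)
  exact h2.clm_apply (differentiableAt_const _)

theorem spaceLap_sub {d : ℕ} {f g : EuclideanSpace ℝ (Fin d) → ℝ} {x : EuclideanSpace ℝ (Fin d)}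
    (hf : ContDiffAt ℝ 2 f x) (hg : ContDiffAt ℝ 2 g x) :
    spaceLap (fun y => f y - g y) x = spaceLap f x - spaceLap g x := by
  unfold spaceLap
  rw [← Finset.sum_sub_distrib]
  refine Finset.sum_congr rfl fun i _ => ?_
  have : (fun y => fderiv ℝ (fun y => f y - g y) y (EuclideanSpace.single i 1)) =ᶠ[nhds x]
      (fun y => fderiv ℝ f y (EuclideanSpace.single i 1)
        - fderiv ℝ g y (EuclideanSpace.single i 1)) := by
    filter_upwards [cd2_diff hf, cd2_diff hg] with y h1 h2
    rw [fderiv_fun_sub h1 h2]; rfl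
  rw [this.fderiv_eq, fderiv_fun_sub (cd2_diff_partial hf _) (cd2_diff_partial hg _)]; rfl

theorem spaceLap_const {d : ℕ} (c : ℝ) (x : EuclideanSpace ℝ (Fin d)) :
    spaceLap (fun _ => c) x = 0 := by
  simp [spaceLap]

theorem spaceLap_const_mul {d : ℕ} {f : EuclideanSpace ℝ (Fin d) → ℝ}
    {x : EuclideanSpace ℝ (Fin d)}
    (hf : ContDiffAt ℝ 2 f x) (c : ℝ) :
    spaceLap (fun y => c * f y) x = c * spaceLap f x := by
  unfold spaceLap
  rw [Finset.mul_sum]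
  refine Finset.sum_congr rfl fun i _ => ?_
  have : (fun y => fderiv ℝ (fun y => c * f y) y (EuclideanSpace.single i 1)) =ᶠ[nhds x]
      (fun y => c * fderiv ℝ f y (EuclideanSpace.single i 1)) := by
    filter_upwards [cd2_diff hf] with y h1
    rw [fderiv_const_mul h1]; rfl
  rw [this.fderiv_eq, fderiv_const_mul (cd2_diff_partial hf _)]; rfl

theorem spaceLap_mul {d : ℕ} {f g : EuclideanSpace ℝ (Fin d) → ℝ} {x : EuclideanSpace ℝ (Fin d)}
    (hf : ContDiffAt ℝ 2 f x) (hg : ContDiffAt ℝ 2 g x) :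
    spaceLap (fun y => f y * g y) x = f x * spaceLap g x + g x * spaceLap f x
      + 2 * ∑ i, fderiv ℝ f x (EuclideanSpace.single i 1)
        * fderiv ℝ g x (EuclideanSpace.single i 1) := by
  unfold spaceLap
  rw [Finset.mul_sum, Finset.mul_sum, Finset.mul_sum, ← Finset.sum_add_distrib,
    ← Finset.sum_add_distrib]
  refine Finset.sum_congr rfl fun i _ => ?_
  have : (fun y => fderiv ℝ (fun y => f y * g y) y (EuclideanSpace.single i 1)) =ᶠ[nhds x]
      (fun y => f y * fderiv ℝ g y (EuclideanSpace.single i 1)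
        + g y * fderiv ℝ f y (EuclideanSpace.single i 1)) := by
    filter_upwards [cd2_diff hf, cd2_diff hg] with y h1 h2
    rw [fderiv_fun_mul h1 h2]; rfl
  have h1 := (cd2_diff hf).self_of_nhds
  have h2 := (cd2_diff hg).self_of_nhds
  have h3 := cd2_diff_partial hf (EuclideanSpace.single i 1)
  have h4 := cd2_diff_partial hg (EuclideanSpace.single i 1)
  rw [this.fderiv_eq, fderiv_fun_add (h1.fun_mul h4) (h2.fun_mul h3), fderiv_fun_mul h1 h4,
    fderiv_fun_mul h2 h3]
  simp only [ContinuousLinearMap.add_apply, ContinuousLinearMap.smul_apply, smul_eq_mul]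
  ring

theorem spaceLap_comp {d : ℕ} {f : EuclideanSpace ℝ (Fin d) → ℝ} {x : EuclideanSpace ℝ (Fin d)}
    {h h1 h2 : ℝ → ℝ} (hh : ∀ s, HasDerivAt h (h1 s) s) (hh1 : ∀ s, HasDerivAt h1 (h2 s) s)
    (hf : ContDiffAt ℝ 2 f x) :
    spaceLap (fun y => h (f y)) x = h1 (f x) * spaceLap f x
      + h2 (f x) * ∑ i, (fderiv ℝ f x (EuclideanSpace.single i 1)) ^ 2 := by
  unfold spaceLap
  rw [Finset.mul_sum, Finset.mul_sum, ← Finset.sum_add_distrib]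
  refine Finset.sum_congr rfl fun i _ => ?_
  have : (fun y => fderiv ℝ (fun y => h (f y)) y (EuclideanSpace.single i 1)) =ᶠ[nhds x]
      (fun y => h1 (f y) * fderiv ℝ f y (EuclideanSpace.single i 1)) := by
    filter_upwards [cd2_diff hf] with y hy
    have := ((hh (f y)).comp_hasFDerivAt y hy.hasFDerivAt).fderiv
    simp only [Function.comp_def] at this
    rw [this]; rfl
  have hd := (cd2_diff hf).self_of_nhds
  have h3 := cd2_diff_partial hf (EuclideanSpace.single i 1)
  have h4 := (hh1 (f x)).comp_hasFDerivAt x hd.hasFDerivAt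
  have h5 := (h4.fun_mul h3.hasFDerivAt).fderiv
  simp only [Function.comp_def] at h5
  rw [this.fderiv_eq, h5]
  simp only [ContinuousLinearMap.add_apply, ContinuousLinearMap.smul_apply, smul_eq_mul,
    Function.comp]
  ring

theorem continuous_partial {d : ℕ} {f : EuclideanSpace ℝ (Fin d) → ℝ} (hf : ContDiff ℝ 1 f)
    (v : EuclideanSpace ℝ (Fin d)) : Continuous (fun y => fderiv ℝ f y v) :=
  (hf.continuous_fderiv (by simp)).clm_apply continuous_const

theorem contDiff_partial {d : ℕ} {f : EuclideanSpace ℝ (Fin d) → ℝ} (hf : ContDiff ℝ 2 f)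
    (v : EuclideanSpace ℝ (Fin d)) : ContDiff ℝ 1 (fun y => fderiv ℝ f y v) :=
  (hf.fderiv_right (m := 1) (by norm_num)).clm_apply contDiff_const

theorem continuous_spaceLap {d : ℕ} {f : EuclideanSpace ℝ (Fin d) → ℝ} (hf : ContDiff ℝ 2 f) :
    Continuous (spaceLap f) := by
  unfold spaceLap
  exact continuous_finsetSum _ fun i _ => continuous_partial (contDiff_partial hf _) _

theorem spaceLap_zero_of_notMem {d : ℕ} {f : EuclideanSpace ℝ (Fin d) → ℝ}
    {x : EuclideanSpace ℝ (Fin d)} (hx : x ∉ tsupport f) : spaceLap f x = 0 := by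
  have : f =ᶠ[nhds x] fun _ => 0 := by
    have := notMem_tsupport_iff_eventuallyEq.1 hx
    exact this
  rw [spaceLap_congr this, spaceLap_const]

theorem partial_hcs {d : ℕ} {f : EuclideanSpace ℝ (Fin d) → ℝ} (hf : HasCompactSupport f)
    (v : EuclideanSpace ℝ (Fin d)) : HasCompactSupport (fun y => fderiv ℝ f y v) := by
  exact (hf.fderiv (𝕜 := ℝ)).comp_left (g := fun L : EuclideanSpace ℝ (Fin d) →L[ℝ] ℝ => L v) rfl

theorem ibp_partial {d : ℕ} {F χ : EuclideanSpace ℝ (Fin d) → ℝ} (hF : ContDiff ℝ 1 F)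
    (hχ : ContDiff ℝ 1 χ) (hc : HasCompactSupport χ) (v : EuclideanSpace ℝ (Fin d)) :
    ∫ x, F x * fderiv ℝ χ x v = - ∫ x, fderiv ℝ F x v * χ x := by
  apply integral_mul_fderiv_eq_neg_fderiv_mul_of_integrable
  · exact ((continuous_partial hF v).mul hχ.continuous).integrable_of_hasCompactSupport
      hc.mul_left
  · exact (hF.continuous.mul (continuous_partial hχ v)).integrable_of_hasCompactSupport
      (partial_hcs hc v).mul_left
  · exact (hF.continuous.mul hχ.continuous).integrable_of_hasCompactSupport hc.mul_left
  · exact fun x _ => (hF.differentiable (by simp)) x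
  · exact fun x _ => (hχ.differentiable (by simp)) x

theorem ibp_lap {d : ℕ} {F χ : EuclideanSpace ℝ (Fin d) → ℝ} (hF : ContDiff ℝ 2 F)
    (hχ : ContDiff ℝ 2 χ) (hc : HasCompactSupport χ) :
    ∫ x, spaceLap F x * χ x = ∫ x, F x * spaceLap χ x := by
  unfold spaceLap
  simp only [Finset.sum_mul, Finset.mul_sum]
  have hF1 : ContDiff ℝ 1 F := hF.of_le (by norm_num)
  have hχ1 : ContDiff ℝ 1 χ := hχ.of_le (by norm_num)
  rw [integral_finset_sum, integral_finset_sum]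
  · refine Finset.sum_congr rfl fun i _ => ?_
    have h1 := ibp_partial (contDiff_partial hF (EuclideanSpace.single i 1)) hχ1 hc
      (EuclideanSpace.single i 1)
    have h2 := ibp_partial hF1 (contDiff_partial hχ (EuclideanSpace.single i 1))
      (partial_hcs hc _) (EuclideanSpace.single i 1)
    rw [h2, h1, neg_neg]
  · intro i _
    exact (hF.continuous.mul (continuous_partial (contDiff_partial hχ _) _)).integrable_of_hasCompactSupport
      (partial_hcs (partial_hcs hc _) _).mul_left
  · intro i _
    exact ((continuous_partial (contDiff_partial hF _) _).mul hχ.continuous).integrable_of_hasCompactSupport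
      hc.mul_left

theorem spaceLap_eq_laplacian {d : ℕ} {f : EuclideanSpace ℝ (Fin d) → ℝ}
    {x : EuclideanSpace ℝ (Fin d)} (hf : ContDiffAt ℝ 2 f x)
    (v : OrthonormalBasis (Fin d) ℝ (EuclideanSpace ℝ (Fin d))) :
    spaceLap f x = ∑ i, fderiv ℝ (fderiv ℝ f) x (v i) (v i) := by
  have h0 := InnerProductSpace.laplacian_eq_iteratedFDeriv_orthonormalBasis f v
  have h1 := InnerProductSpace.laplacian_eq_iteratedFDeriv_orthonormalBasis f
    (EuclideanSpace.basisFun (Fin d) ℝ)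
  have h2 := congrFun (h0.symm.trans h1) x
  simp only [iteratedFDeriv_two_apply, Matrix.cons_val_zero, Matrix.cons_val_one,
    EuclideanSpace.basisFun_apply] at h2
  rw [h2]
  unfold spaceLap
  refine Finset.sum_congr rfl fun i _ => ?_
  have : ContDiffAt ℝ 1 (fderiv ℝ f) x := hf.fderiv_right (by norm_num)
  have h2 := this.differentiableAt (by simp)
  rw [fderiv_clm_apply h2 (differentiableAt_const _)]
  simp

theorem spaceLap_isometry {d : ℕ} {f : EuclideanSpace ℝ (Fin d) → ℝ}
    (S : EuclideanSpace ℝ (Fin d) ≃ₗᵢ[ℝ] EuclideanSpace ℝ (Fin d))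
    (y0 x : EuclideanSpace ℝ (Fin d)) (hf : ContDiffAt ℝ 2 f (S x + y0)) :
    spaceLap (fun y => f (S y + y0)) x = spaceLap f (S x + y0) := by
  have hS : ∀ y, HasFDerivAt (fun y => S y + y0)
      (S.toContinuousLinearEquiv : EuclideanSpace ℝ (Fin d) →L[ℝ] EuclideanSpace ℝ (Fin d)) y :=
    fun y => (S.toContinuousLinearEquiv.hasFDerivAt).add_const y0
  have hcd : ContDiff ℝ 2 (fun y => S y + y0) := S.contDiff.add contDiff_const
  have hg : ContDiffAt ℝ 2 (fun y => f (S y + y0)) x :=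
    ContDiffAt.comp x hf hcd.contDiffAt
  rw [spaceLap_eq_laplacian hf ((EuclideanSpace.basisFun (Fin d) ℝ).map S)]
  unfold spaceLap
  refine Finset.sum_congr rfl fun i _ => ?_
  have hev : ∀ᶠ y in nhds x, DifferentiableAt ℝ f (S y + y0) :=
    (hcd.continuous.continuousAt.eventually (cd2_diff hf))
  have : (fun y => fderiv ℝ (fun y => f (S y + y0)) y (EuclideanSpace.single i 1)) =ᶠ[nhds x]
      (fun y => fderiv ℝ f (S y + y0) (S (EuclideanSpace.single i 1))) := by
    filter_upwards [hev] with y hy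
    have := (hy.hasFDerivAt.comp y (hS y)).fderiv
    simp only [Function.comp_def] at this
    rw [this]; rfl
  have h1 : ContDiffAt ℝ 1 (fderiv ℝ f) (S x + y0) := hf.fderiv_right (by norm_num)
  have h2 := (h1.differentiableAt (by simp)).hasFDerivAt.comp x (hS x)
  have h3 := h2.clm_apply (hasFDerivAt_const (S (EuclideanSpace.single i 1)) x)
  rw [this.fderiv_eq]
  simp only [Function.comp_def] at h3
  rw [h3.fderiv]
  simp

end

section
open MeasureTheory Metric Set Real

theorem extend_local {d : ℕ} {Ω K : Set (EuclideanSpace ℝ (Fin d))} (hΩ : IsOpen Ω)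
    (hK : IsClosed K) (hKΩ : K ⊆ Ω) {D : EuclideanSpace ℝ (Fin d) → ℝ}
    (hD : ContDiffOn ℝ 2 D Ω) :
    ∃ D' : EuclideanSpace ℝ (Fin d) → ℝ, ContDiff ℝ 2 D' ∧ ∀ x ∈ K, D' =ᶠ[nhds x] D := by
  obtain ⟨f, h0, h1, -⟩ := exists_contMDiffMap_zero_one_nhds_of_isClosed
    (n := 2) (modelWithCornersSelf ℝ (EuclideanSpace ℝ (Fin d))) hΩ.isClosed_compl hK
    (disjoint_left.2 fun x hx hx' => hx (hKΩ hx'))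
  have hf : ContDiff ℝ 2 f := f.contMDiff.contDiff
  obtain ⟨U, hU, hsU, hU0⟩ := (eventually_nhdsSet_iff_exists (p := fun x => f x = 0)).1 h0
  refine ⟨fun x => f x * D x, ?_, ?_⟩
  · refine contDiff_of_contDiffOn_union_of_isOpen (s := Ω) (t := U) (hf.contDiffOn.mul hD) ?_ ?_
      hΩ hU
    · refine (contDiffOn_const (c := (0 : ℝ))).congr fun x hx => ?_
      rw [hU0 x hx, zero_mul]
    · exact eq_univ_of_forall fun x => by
        by_cases hx : x ∈ Ω
        · exact Or.inl hx
        · exact Or.inr (hsU hx)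
  · intro x hx
    filter_upwards [(eventually_nhdsSet_iff_forall.1 h1) x hx] with y hy
    rw [hy, one_mul]

/-- convex ramp -/
noncomputable def HH (s : ℝ) : ℝ := ∫ a in (0 : ℝ)..s, smoothTransition a

theorem HH_deriv (s : ℝ) : HasDerivAt HH (smoothTransition s) s :=
  intervalIntegral.integral_hasDerivAt_right
    (smoothTransition.continuous.intervalIntegrable _ _)
    (smoothTransition.continuous.stronglyMeasurableAtFilter _ _)
    smoothTransition.continuous.continuousAt

theorem sT_diff : Differentiable ℝ smoothTransition :=
  (smoothTransition.contDiff (n := 2)).differentiable (by simp)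

theorem sT_deriv_nonneg (s : ℝ) : 0 ≤ deriv smoothTransition s :=
  smoothTransition.monotone.deriv_nonneg

theorem HH_mono : Monotone HH :=
  monotone_of_deriv_nonneg (fun s => (HH_deriv s).differentiableAt)
    fun s => by rw [(HH_deriv s).deriv]; exact smoothTransition.nonneg s

theorem HH_zero : HH 0 = 0 := by simp [HH]

theorem HH_nonpos {s : ℝ} (hs : s ≤ 0) : HH s = 0 := by
  unfold HH
  rw [intervalIntegral.integral_congr (g := fun _ => 0)]
  · simp
  · intro a ha
    rw [uIcc_of_ge hs] at ha
    exact smoothTransition.zero_of_nonpos ha.2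

theorem HH_nonneg (s : ℝ) : 0 ≤ HH s := by
  rcases le_total s 0 with h | h
  · rw [HH_nonpos h]
  · rw [← HH_zero]; exact HH_mono h

theorem HH_sub_mono : Monotone (fun s => s - HH s) :=
  monotone_of_deriv_nonneg (fun s => differentiableAt_id.sub (HH_deriv s).differentiableAt)
    fun s => by
      rw [((hasDerivAt_id' s).fun_sub (HH_deriv s)).deriv]
      linarith [smoothTransition.le_one s]

theorem HH_le (s : ℝ) : HH s ≤ max s 0 := by
  rcases le_total s 0 with h | h
  · rw [HH_nonpos h]; exact le_max_right _ _
  · have := HH_sub_mono h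
    simp only [HH_zero] at this
    rw [max_eq_left h]; linarith

theorem HH_ge (s : ℝ) : s - 1 ≤ HH s := by
  rcases le_total s 1 with h | h
  · linarith [HH_nonneg s]
  · have h1 : HH 1 + ∫ a in (1 : ℝ)..s, smoothTransition a = HH s :=
      intervalIntegral.integral_add_adjacent_intervals
        (smoothTransition.continuous.intervalIntegrable _ _)
        (smoothTransition.continuous.intervalIntegrable _ _)
    have h2 : ∫ a in (1 : ℝ)..s, smoothTransition a = ∫ a in (1 : ℝ)..s, (1 : ℝ) := by
      refine intervalIntegral.integral_congr fun a ha => ?_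
      rw [uIcc_of_le h] at ha
      exact smoothTransition.one_of_one_le ha.1
    rw [h2] at h1
    simp at h1
    linarith [HH_nonneg 1]

/-- scaled ramp -/
noncomputable def hr (δ s : ℝ) : ℝ := δ * HH (s / δ - 1)

theorem hr_deriv {δ : ℝ} (hδ : 0 < δ) (s : ℝ) :
    HasDerivAt (hr δ) (smoothTransition (s / δ - 1)) s := by
  have h1 : HasDerivAt (fun s => s / δ - 1) (1 / δ) s :=
    ((hasDerivAt_id s).div_const δ).sub_const 1
  have h2 := ((HH_deriv (s / δ - 1)).comp s h1).const_mul δ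
  have h3 : δ * (smoothTransition (s / δ - 1) * (1 / δ)) = smoothTransition (s / δ - 1) := by
    field_simp
  rw [h3] at h2
  exact h2

theorem hr_deriv2 (δ : ℝ) (s : ℝ) :
    HasDerivAt (fun s => smoothTransition (s / δ - 1))
      (deriv smoothTransition (s / δ - 1) * (1 / δ)) s := by
  have h1 : HasDerivAt (fun s => s / δ - 1) (1 / δ) s :=
    ((hasDerivAt_id s).div_const δ).sub_const 1
  exact (sT_diff (s / δ - 1)).hasDerivAt.comp s h1

theorem HH_contDiff : ContDiff ℝ 2 HH := by
  have : ContDiff ℝ (1 + 1) HH := by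
    rw [contDiff_succ_iff_deriv]
    refine ⟨fun s => (HH_deriv s).differentiableAt, by simp, ?_⟩
    rw [show deriv HH = smoothTransition from funext fun s => (HH_deriv s).deriv]
    exact smoothTransition.contDiff (n := 1)
  exact this

theorem hr_contDiff (δ : ℝ) : ContDiff ℝ 2 (hr δ) := by
  unfold hr
  exact contDiff_const.mul (HH_contDiff.comp ((contDiff_id.div_const δ).sub contDiff_const))

theorem hr_zero {δ s : ℝ} (hδ : 0 < δ) (hs : s ≤ δ) : hr δ s = 0 := by
  unfold hr
  rw [HH_nonpos, mul_zero]
  rw [sub_nonpos, div_le_one hδ]; exact hs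

theorem hr_nonneg {δ : ℝ} (hδ : 0 < δ) (s : ℝ) : 0 ≤ hr δ s :=
  mul_nonneg hδ.le (HH_nonneg _)

theorem hr_le {δ : ℝ} (hδ : 0 < δ) (s : ℝ) : hr δ s ≤ max s 0 := by
  rcases le_total s δ with h | h
  · rw [hr_zero hδ h]; exact le_max_right _ _
  · unfold hr
    have := HH_le (s / δ - 1)
    rw [max_eq_left (by rw [sub_nonneg, le_div_iff₀ hδ]; linarith)] at this
    have h2 := mul_le_mul_of_nonneg_left this hδ.le
    have h3 : δ * (s / δ - 1) = s - δ := by field_simp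
    rw [h3] at h2
    exact le_trans h2 (le_trans (by linarith) (le_max_left _ _))

theorem hr_ge {δ : ℝ} (hδ : 0 < δ) (s : ℝ) : s - 2 * δ ≤ hr δ s := by
  have h2 := mul_le_mul_of_nonneg_left (HH_ge (s / δ - 1)) hδ.le
  have h3 : δ * (s / δ - 1 - 1) = s - 2 * δ := by field_simp; ring
  rw [h3] at h2
  exact h2

end

section
open MeasureTheory Metric Set Real Filter

theorem kato_global {d : ℕ} {D χ : EuclideanSpace ℝ (Fin d) → ℝ} (hD : ContDiff ℝ 2 D)
    (hχ : ContDiff ℝ 2 χ) (hc : HasCompactSupport χ) (h0 : ∀ x, 0 ≤ χ x) :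
    ∫ x, (if 0 < D x then spaceLap D x else 0) * χ x ≤ ∫ x, max (D x) 0 * spaceLap χ x := by
  have hLc : HasCompactSupport (spaceLap χ) := by
    refine hc.of_isClosed_subset (isClosed_tsupport _) (closure_minimal ?_ (isClosed_tsupport χ))
    intro x hx
    by_contra h
    exact hx (spaceLap_zero_of_notMem h)
  have hLD := continuous_spaceLap hD
  have hLχ := continuous_spaceLap hχ
  set δ : ℕ → ℝ := fun n => 1 / ((n : ℝ) + 1) with hδ
  have hδ0 : ∀ n, 0 < δ n := fun n => by positivity
  have hδt : Tendsto δ atTop (nhds 0) := tendsto_one_div_add_atTop_nhds_zero_nat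
  have hA : Tendsto (fun n => ∫ x, (smoothTransition (D x / δ n - 1) * spaceLap D x) * χ x) atTop
      (nhds (∫ x, (if 0 < D x then spaceLap D x else 0) * χ x)) := by
    refine tendsto_integral_of_dominated_convergence (fun x => |spaceLap D x * χ x|) ?_ ?_ ?_ ?_
    · intro n
      exact (((smoothTransition.continuous.comp ((hD.continuous.div_const _).sub
        continuous_const)).mul hLD).mul hχ.continuous).aestronglyMeasurable
    · exact ((hLD.mul hχ.continuous).integrable_of_hasCompactSupport hc.mul_left).abs
    · intro n
      refine Eventually.of_forall fun x => ?_
      rw [mul_assoc, norm_mul, Real.norm_eq_abs, Real.norm_eq_abs,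
        abs_of_nonneg (smoothTransition.nonneg _)]
      exact mul_le_of_le_one_left (abs_nonneg _) (smoothTransition.le_one _)
    · refine Eventually.of_forall fun x => ?_
      by_cases hx : 0 < D x
      · rw [if_pos hx]
        refine tendsto_const_nhds.congr' ?_
        have : ∀ᶠ n in atTop, δ n < D x / 2 := hδt.eventually (gt_mem_nhds (by linarith))
        filter_upwards [this] with n hn
        rw [smoothTransition.one_of_one_le, one_mul]
        have : 2 ≤ D x / δ n := by rw [le_div_iff₀ (hδ0 n)]; linarith
        linarith
      · rw [if_neg hx]
        refine tendsto_const_nhds.congr' (Eventually.of_forall fun n => ?_)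
        beta_reduce
        rw [smoothTransition.zero_of_nonpos]
        · simp
        · have : D x / δ n ≤ 0 := div_nonpos_of_nonpos_of_nonneg (not_lt.1 hx) (hδ0 n).le
          linarith
  have hB : Tendsto (fun n => ∫ x, hr (δ n) (D x) * spaceLap χ x) atTop
      (nhds (∫ x, max (D x) 0 * spaceLap χ x)) := by
    refine tendsto_integral_of_dominated_convergence (fun x => |D x * spaceLap χ x|) ?_ ?_ ?_ ?_
    · intro n
      exact (((hr_contDiff _).continuous.comp hD.continuous).mul hLχ).aestronglyMeasurable
    · exact ((hD.continuous.mul hLχ).integrable_of_hasCompactSupport hLc.mul_left).abs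
    · intro n
      refine Eventually.of_forall fun x => ?_
      rw [norm_mul, abs_mul, Real.norm_eq_abs, Real.norm_eq_abs,
        abs_of_nonneg (hr_nonneg (hδ0 n) _)]
      refine mul_le_mul_of_nonneg_right ?_ (abs_nonneg _)
      exact (hr_le (hδ0 n) _).trans (max_le (le_abs_self _) (abs_nonneg _))
    · refine Eventually.of_forall fun x => ?_
      refine Tendsto.mul_const _ ?_
      refine tendsto_of_tendsto_of_tendsto_of_le_of_le (g := fun n => max (D x) 0 - 2 * δ n)
        (h := fun _ => max (D x) 0) ?_ tendsto_const_nhds ?_ ?_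
      · have := (tendsto_const_nhds (x := max (D x) 0)).sub (hδt.const_mul 2)
        simpa using this
      · intro n
        simp only
        rcases le_total (D x) 0 with h | h
        · rw [max_eq_right h]; linarith [hr_nonneg (hδ0 n) (D x), hδ0 n]
        · rw [max_eq_left h]; exact hr_ge (hδ0 n) _
      · intro n
        exact hr_le (hδ0 n) _
  refine le_of_tendsto_of_tendsto' hA hB fun n => ?_
  have hF : ContDiff ℝ 2 (fun x => hr (δ n) (D x)) := (hr_contDiff _).comp hD
  rw [← ibp_lap hF hχ hc]
  refine integral_mono ?_ ?_ ?_
  · exact (((smoothTransition.continuous.comp ((hD.continuous.div_const _).sub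
        continuous_const)).mul hLD).mul hχ.continuous).integrable_of_hasCompactSupport hc.mul_left
  · exact ((continuous_spaceLap hF).mul hχ.continuous).integrable_of_hasCompactSupport hc.mul_left
  · intro x
    refine mul_le_mul_of_nonneg_right ?_ (h0 x)
    rw [spaceLap_comp (hr_deriv (hδ0 n)) (hr_deriv2 (δ n)) hD.contDiffAt]
    have : 0 ≤ deriv smoothTransition (D x / δ n - 1) * (1 / δ n) *
        ∑ i, (fderiv ℝ D x (EuclideanSpace.single i 1)) ^ 2 := by
      refine mul_nonneg (mul_nonneg (sT_deriv_nonneg _) ?_) (Finset.sum_nonneg fun i _ => sq_nonneg _)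
      exact (one_div_pos.2 (hδ0 n)).le
    linarith

theorem kato_local {d : ℕ} {Ω : Set (EuclideanSpace ℝ (Fin d))} (hΩ : IsOpen Ω)
    {D χ : EuclideanSpace ℝ (Fin d) → ℝ} (hD : ContDiffOn ℝ 2 D Ω)
    (hχ : ContDiff ℝ 2 χ) (hc : HasCompactSupport χ) (hs : tsupport χ ⊆ Ω) (h0 : ∀ x, 0 ≤ χ x) :
    ∫ x, (if 0 < D x then spaceLap D x else 0) * χ x ≤ ∫ x, max (D x) 0 * spaceLap χ x := by
  obtain ⟨D', hD', heq⟩ := extend_local hΩ (isClosed_tsupport χ) hs hD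
  have := kato_global hD' hχ hc h0
  convert this using 2
  · funext x
    by_cases hx : x ∈ tsupport χ
    · rw [(heq x hx).self_of_nhds, spaceLap_congr (heq x hx)]
    · rw [image_eq_zero_of_notMem_tsupport hx]; simp
  · funext x
    by_cases hx : x ∈ tsupport χ
    · rw [(heq x hx).self_of_nhds]
    · rw [spaceLap_zero_of_notMem hx]; simp

end

section
open MeasureTheory Metric Set Real Filter

theorem integ_supp {d : ℕ} {f χ : EuclideanSpace ℝ (Fin d) → ℝ} (hc : HasCompactSupport χ)
    (hχ : Continuous χ) (hf : ContinuousOn f (tsupport χ)) : Integrable (fun x => f x * χ x) := by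
  have h1 : IntegrableOn (fun x => f x * χ x) (tsupport χ) :=
    (hf.mul hχ.continuousOn).integrableOn_compact hc
  refine (integrableOn_iff_integrable_of_support_subset ?_).1 h1
  intro x hx
  by_contra h
  exact hx (by simp [image_eq_zero_of_notMem_tsupport h])

theorem fde_time {d : ℕ} {m T : ℝ} {Ω : Set (EuclideanSpace ℝ (Fin d))} (hΩ : IsOpen Ω)
    {u : ℝ → EuclideanSpace ℝ (Fin d) → ℝ} (hu : IsFDESol m (Ioo 0 T ×ˢ Ω) u) :
    ∃ ut : ℝ × EuclideanSpace ℝ (Fin d) → ℝ, ContinuousOn ut (Ioo 0 T ×ˢ Ω) ∧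
      ∀ τ ∈ Ioo 0 T, ∀ x ∈ Ω, HasDerivAt (fun s => u s x) (ut (τ, x)) τ ∧
        ut (τ, x) = spaceLap (fun y => u τ y ^ m) x := by
  obtain ⟨h1, h2, h3⟩ := hu
  have hO : IsOpen (Ioo 0 T ×ˢ Ω) := isOpen_Ioo.prod hΩ
  refine ⟨fun p => fderiv ℝ (fun p : ℝ × EuclideanSpace ℝ (Fin d) => u p.1 p.2) p (1, 0), ?_, ?_⟩
  · exact (h2.continuousOn_fderiv_of_isOpen hO (by simp)).clm_apply continuousOn_const
  · intro τ hτ x hx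
    have hd : DifferentiableAt ℝ (fun p : ℝ × EuclideanSpace ℝ (Fin d) => u p.1 p.2) (τ, x) :=
      (h2.contDiffAt (hO.mem_nhds ⟨hτ, hx⟩)).differentiableAt (by simp)
    have hg : HasDerivAt (fun s : ℝ => (s, x)) ((1 : ℝ), (0 : EuclideanSpace ℝ (Fin d))) τ :=
      (hasDerivAt_id τ).prodMk (hasDerivAt_const τ x)
    have := hd.hasFDerivAt.comp_hasDerivAt τ hg
    refine ⟨this, ?_⟩
    rw [← h3 (τ, x) ⟨hτ, hx⟩]
    exact this.deriv.symm

theorem fde_space {d : ℕ} {m T : ℝ} {Ω : Set (EuclideanSpace ℝ (Fin d))}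
    {u : ℝ → EuclideanSpace ℝ (Fin d) → ℝ} (hu : IsFDESol m (Ioo 0 T ×ˢ Ω) u) {τ : ℝ}
    (hτ : τ ∈ Ioo 0 T) : ContDiffOn ℝ 2 (fun y => u τ y ^ m) Ω := by
  have h : ContDiffOn ℝ 2 (fun y => u τ y) Ω := by
    have h2 := hu.2.1.comp (t := Ioo 0 T ×ˢ Ω) (s := Ω)
      (f := fun y : EuclideanSpace ℝ (Fin d) => (τ, y)) (by fun_prop) (fun y hy => ⟨hτ, hy⟩)
    exact h2.of_le (WithTop.coe_le_coe.2 (le_top : (2 : ℕ∞) ≤ ⊤))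
  exact h.rpow_const_of_ne (fun x hx => (hu.1 (τ, x) ⟨hτ, hx⟩).ne')

theorem contr_step {d : ℕ} {m T : ℝ} (hm : 0 < m) {Ω : Set (EuclideanSpace ℝ (Fin d))}
    (hΩ : IsOpen Ω) {u v : ℝ → EuclideanSpace ℝ (Fin d) → ℝ}
    (hu : IsFDESol m (Ioo 0 T ×ˢ Ω) u) (hv : IsFDESol m (Ioo 0 T ×ˢ Ω) v)
    {χ : EuclideanSpace ℝ (Fin d) → ℝ} (hχ : ContDiff ℝ 2 χ) (hc : HasCompactSupport χ)
    (hs : tsupport χ ⊆ Ω) (h0 : ∀ x, 0 ≤ χ x) {s t B : ℝ} (hs0 : 0 < s) (hst : s ≤ t) (htT : t < T)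
    (hB : ∀ τ ∈ Icc s t, ∫ x, max (u τ x ^ m - v τ x ^ m) 0 * spaceLap χ x ≤ B) :
    ∫ x, max (u t x - v t x) 0 * χ x ≤ (∫ x, max (u s x - v s x) 0 * χ x) + (t - s) * B := by
  obtain ⟨ut, hut, hut'⟩ := fde_time hΩ hu
  obtain ⟨vt, hvt, hvt'⟩ := fde_time hΩ hv
  have hsub : Icc s t ×ˢ tsupport χ ⊆ Ioo 0 T ×ˢ Ω :=
    prod_mono (fun τ hτ => ⟨hs0.trans_le hτ.1, hτ.2.trans_lt htT⟩) hs
  have hI : ∀ τ ∈ Icc s t, τ ∈ Ioo 0 T := fun τ hτ => ⟨hs0.trans_le hτ.1, hτ.2.trans_lt htT⟩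
  have hUC : UniformContinuousOn (fun p => ut p - vt p) (Icc s t ×ˢ tsupport χ) :=
    (isCompact_Icc.prod hc).uniformContinuousOn_of_continuous ((hut.sub hvt).mono hsub)
  have hmap : ∀ τ ∈ Icc s t, ContinuousOn (fun x : EuclideanSpace ℝ (Fin d) => (τ, x)) (tsupport χ) ∧
      MapsTo (fun x : EuclideanSpace ℝ (Fin d) => (τ, x)) (tsupport χ) (Ioo 0 T ×ˢ Ω) :=
    fun τ hτ => ⟨by fun_prop, fun x hx => ⟨hI τ hτ, hs hx⟩⟩
  have hcu : ∀ τ ∈ Icc s t, ContinuousOn (fun x => u τ x) (tsupport χ) := fun τ hτ =>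
    hu.2.1.continuousOn.comp (hmap τ hτ).1 (hmap τ hτ).2
  have hcv : ∀ τ ∈ Icc s t, ContinuousOn (fun x => v τ x) (tsupport χ) := fun τ hτ =>
    hv.2.1.continuousOn.comp (hmap τ hτ).1 (hmap τ hτ).2
  have hcD : ∀ τ ∈ Icc s t, ContinuousOn (fun x => ut (τ, x) - vt (τ, x)) (tsupport χ) := fun τ hτ =>
    (hut.comp (hmap τ hτ).1 (hmap τ hτ).2).sub (hvt.comp (hmap τ hτ).1 (hmap τ hτ).2)
  set N : ℝ → ℝ := fun τ => ∫ x, max (u τ x - v τ x) 0 * χ x with hN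
  have hiN : ∀ τ ∈ Icc s t, Integrable (fun x => max (u τ x - v τ x) 0 * χ x) := fun τ hτ =>
    integ_supp hc hχ.continuous (ContinuousOn.sup ((hcu τ hτ).sub (hcv τ hτ)) continuousOn_const)
  have hiχ : Integrable χ := hχ.continuous.integrable_of_hasCompactSupport hc
  have key : ∀ ε > 0, ∃ δ > 0, ∀ τ ∈ Icc s t, ∀ τ' ∈ Icc s t, τ ≤ τ' → τ' - τ < δ →
      N τ' - N τ ≤ (τ' - τ) * (B + ε * ∫ x, χ x) := by
    intro ε hε
    obtain ⟨δ, hδ, hδ'⟩ := Metric.uniformContinuousOn_iff.1 hUC ε hε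
    refine ⟨δ, hδ, fun τ hτ τ' hτ' hle hlt => ?_⟩
    rcases hle.eq_or_lt with rfl | hlt'
    · simp
    set D : EuclideanSpace ℝ (Fin d) → ℝ := fun x => u τ' x ^ m - v τ' x ^ m with hD
    have hDC : ContDiffOn ℝ 2 D Ω := (fde_space hu (hI τ' hτ')).sub (fde_space hv (hI τ' hτ'))
    have hDL : ∀ x ∈ Ω, spaceLap D x = ut (τ', x) - vt (τ', x) := by
      intro x hx
      rw [(hut' τ' (hI τ' hτ') x hx).2, (hvt' τ' (hI τ' hτ') x hx).2]
      exact spaceLap_sub ((fde_space hu (hI τ' hτ')).contDiffAt (hΩ.mem_nhds hx))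
        ((fde_space hv (hI τ' hτ')).contDiffAt (hΩ.mem_nhds hx))
    have hK := (kato_local hΩ hDC hχ hc hs h0).trans (hB τ' hτ')
    have hiD : Integrable (fun x => (if 0 < D x then spaceLap D x else 0) * χ x) := by
      have hO : IsOpen (Ω ∩ D ⁻¹' Ioi 0) := hDC.continuousOn.isOpen_inter_preimage hΩ isOpen_Ioi
      have h1 := (integ_supp hc hχ.continuous (hcD τ' hτ')).indicator hO.measurableSet
      refine h1.congr (Eventually.of_forall fun x => ?_)
      symm
      beta_reduce
      by_cases hx : x ∈ tsupport χ
      · by_cases hx' : 0 < D x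
        · rw [if_pos hx', indicator_of_mem (show x ∈ Ω ∩ D ⁻¹' Ioi 0 from ⟨hs hx, hx'⟩),
            hDL x (hs hx)]
        · rw [if_neg hx', indicator_of_notMem (fun h => hx' h.2), zero_mul]
      · simp [image_eq_zero_of_notMem_tsupport hx, indicator]
    have hpt : ∀ x, max (u τ' x - v τ' x) 0 * χ x - max (u τ x - v τ x) 0 * χ x ≤
        (τ' - τ) * ((if 0 < D x then spaceLap D x else 0) * χ x + ε * χ x) := by
      intro x
      by_cases hx : x ∈ tsupport χ
      swap
      · simp [image_eq_zero_of_notMem_tsupport hx]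
      have hxΩ := hs hx
      rw [← sub_mul, ← add_mul, ← mul_assoc]
      refine mul_le_mul_of_nonneg_right ?_ (h0 x)
      have hup := hu.1 (τ', x) ⟨hI _ hτ', hxΩ⟩
      have hvp := hv.1 (τ', x) ⟨hI _ hτ', hxΩ⟩
      have hiff : 0 < D x ↔ 0 < u τ' x - v τ' x := by
        simp only [hD, sub_pos]
        exact Real.rpow_lt_rpow_iff hvp.le hup.le hm
      by_cases hx' : 0 < D x
      · rw [if_pos hx', max_eq_left (hiff.1 hx').le]
        have hder : ∀ σ ∈ Icc s t, HasDerivAt (fun σ => u σ x - v σ x) (ut (σ, x) - vt (σ, x)) σ :=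
          fun σ hσ => (hut' σ (hI σ hσ) x hxΩ).1.sub (hvt' σ (hI σ hσ) x hxΩ).1
        obtain ⟨ξ, hξ, hξ'⟩ := exists_hasDerivAt_eq_slope (fun σ => u σ x - v σ x)
          (fun σ => ut (σ, x) - vt (σ, x)) hlt'
          (fun σ hσ => (hder σ ⟨hτ.1.trans hσ.1, hσ.2.trans hτ'.2⟩).continuousAt.continuousWithinAt)
          (fun σ hσ => hder σ ⟨hτ.1.trans hσ.1.le, hσ.2.le.trans hτ'.2⟩)
        have hξI : ξ ∈ Icc s t := ⟨hτ.1.trans hξ.1.le, hξ.2.le.trans hτ'.2⟩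
        have hdist := hδ' (ξ, x) ⟨hξI, hx⟩ (τ', x) ⟨hτ', hx⟩ (by
          rw [Prod.dist_eq, dist_self, max_eq_left dist_nonneg, Real.dist_eq, abs_sub_comm,
            abs_of_pos (sub_pos.2 hξ.2)]
          linarith [hξ.1])
        rw [Real.dist_eq] at hdist
        have h5 := (abs_lt.1 hdist).2
        rw [eq_div_iff (sub_pos.2 hlt').ne'] at hξ'
        have h6 : u τ' x - v τ' x - max (u τ x - v τ x) 0 ≤ (ut (ξ, x) - vt (ξ, x)) * (τ' - τ) := by
          rw [hξ']
          linarith [le_max_left (u τ x - v τ x) 0]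
        refine h6.trans ?_
        rw [mul_comm]
        refine mul_le_mul_of_nonneg_left ?_ (sub_pos.2 hlt').le
        rw [hDL x hxΩ]
        linarith
      · rw [if_neg hx', max_eq_right (not_lt.1 fun h => hx' (hiff.2 h))]
        have := le_max_right (u τ x - v τ x) 0
        have : 0 ≤ (τ' - τ) * (0 + ε) := mul_nonneg (sub_pos.2 hlt').le (by linarith)
        linarith
    have hint := integral_mono ((hiN τ' hτ').sub (hiN τ hτ))
      ((hiD.add (hiχ.const_mul ε)).const_mul (τ' - τ)) hpt
    rw [integral_sub' (hiN τ' hτ') (hiN τ hτ), integral_const_mul] at hint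
    have h7 : ∫ x, ((fun x => (if 0 < D x then spaceLap D x else 0) * χ x) + fun x => ε * χ x) x
      = (∫ x, (if 0 < D x then spaceLap D x else 0) * χ x) + ε * ∫ x, χ x := by
      rw [integral_add' hiD (hiχ.const_mul ε), integral_const_mul]
    rw [h7] at hint
    refine hint.trans (mul_le_mul_of_nonneg_left ?_ (sub_pos.2 hlt').le)
    linarith
  have hχint : 0 ≤ ∫ x, χ x := integral_nonneg h0
  have key2 : ∀ ε > 0, N t ≤ N s + (t - s) * (B + ε * ∫ x, χ x) := by
    intro ε hε
    obtain ⟨δ, hδ, hδ'⟩ := key ε hε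
    obtain ⟨n, hn⟩ := exists_nat_gt ((t - s) / δ)
    have hts : 0 ≤ t - s := by linarith
    have hn0 : (0 : ℝ) < n := lt_of_le_of_lt (by positivity) hn
    set h := (t - s) / n with hh
    have hh0 : 0 ≤ h := by positivity
    have hhδ : h < δ := by
      rw [hh, div_lt_iff₀ hn0]
      rw [div_lt_iff₀ hδ] at hn
      linarith
    have hnh : n * h = t - s := by rw [hh]; field_simp
    have hind : ∀ k : ℕ, k ≤ n → N (s + k * h) ≤ N s + (k * h) * (B + ε * ∫ x, χ x) := by
      intro k
      induction k with
      | zero => intro _; simp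
      | succ k ih =>
        intro hk
        have h1 := ih (by omega)
        have hkn : ((k + 1 : ℕ) : ℝ) ≤ n := by exact_mod_cast hk
        have h2 : ((k + 1 : ℕ) : ℝ) * h ≤ t - s := by
          rw [← hnh]; exact mul_le_mul_of_nonneg_right hkn hh0
        have h3 : 0 ≤ (k : ℝ) * h := by positivity
        push_cast at h2 ⊢
        have h4 := hδ' (s + k * h) ⟨by linarith, by linarith⟩ (s + (k + 1) * h)
          ⟨by linarith, by linarith⟩ (by linarith) (by linarith)
        nlinarith
    have := hind n le_rfl
    rw [hnh] at this
    convert this using 2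
    ring
  have hlim : Tendsto (fun ε : ℝ => N s + (t - s) * (B + ε * ∫ x, χ x)) (nhdsWithin 0 (Ioi 0))
      (nhds (N s + (t - s) * (B + 0 * ∫ x, χ x))) := by
    refine Tendsto.mono_left (Continuous.tendsto ?_ 0) nhdsWithin_le_nhds
    fun_prop
  rw [zero_mul, add_zero] at hlim
  exact ge_of_tendsto hlim (eventually_nhdsWithin_of_forall fun ε hε => key2 ε hε)

end

section
open MeasureTheory Metric Set Real Filter

theorem N_cont {d : ℕ} {T : ℝ} {w : ℝ → EuclideanSpace ℝ (Fin d) → ℝ}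
    {χ : EuclideanSpace ℝ (Fin d) → ℝ} (hχ : Continuous χ) (hc : HasCompactSupport χ)
    (hw : ContinuousOn (fun p : ℝ × EuclideanSpace ℝ (Fin d) => w p.1 p.2) (Icc 0 T ×ˢ tsupport χ)) :
    ContinuousOn (fun τ => ∫ x, w τ x * χ x) (Icc 0 T) := by
  have h1 : ∀ τ, ∫ x, w τ x * χ x = ∫ x in tsupport χ, w τ x * χ x := by
    intro τ
    rw [setIntegral_eq_integral_of_forall_compl_eq_zero]
    intro x hx
    simp [image_eq_zero_of_notMem_tsupport hx]
  simp_rw [h1]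
  have hK : IsCompact (Icc 0 T ×ˢ tsupport χ) := isCompact_Icc.prod hc
  obtain ⟨C, hC⟩ := hK.exists_bound_of_continuousOn hw
  intro τ0 hτ0
  refine continuousWithinAt_of_dominated (bound := fun x => C * |χ x|) ?_ ?_ ?_ ?_
  · refine eventually_nhdsWithin_of_forall fun τ hτ => ?_
    refine ContinuousOn.aestronglyMeasurable ?_ (isClosed_tsupport χ).measurableSet
    refine ContinuousOn.mul ?_ hχ.continuousOn
    exact hw.comp (f := fun x => (τ, x)) (by fun_prop) (fun x hx => ⟨hτ, hx⟩)
  · refine eventually_nhdsWithin_of_forall fun τ hτ => ?_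
    refine (ae_restrict_iff' (isClosed_tsupport χ).measurableSet).2 (Eventually.of_forall fun x hx => ?_)
    rw [norm_mul, Real.norm_eq_abs (χ x)]
    exact mul_le_mul_of_nonneg_right (hC (τ, x) ⟨hτ, hx⟩) (abs_nonneg _)
  · exact ((hχ.integrable_of_hasCompactSupport hc).abs.const_mul C).integrableOn
  · refine (ae_restrict_iff' (isClosed_tsupport χ).measurableSet).2 (Eventually.of_forall fun x hx => ?_)
    refine ContinuousWithinAt.mul ?_ continuousWithinAt_const
    exact (hw.comp (f := fun τ => (τ, x)) (s := Icc 0 T) (by fun_prop) (fun τ hτ => ⟨hτ, hx⟩)) τ0 hτ0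

theorem contr {d : ℕ} {m T : ℝ} (hm : 0 < m) {Ω : Set (EuclideanSpace ℝ (Fin d))}
    (hΩ : IsOpen Ω) {u v : ℝ → EuclideanSpace ℝ (Fin d) → ℝ}
    (hu : IsFDESol m (Ioo 0 T ×ˢ Ω) u) (hv : IsFDESol m (Ioo 0 T ×ˢ Ω) v)
    {χ : EuclideanSpace ℝ (Fin d) → ℝ} (hχ : ContDiff ℝ 2 χ) (hc : HasCompactSupport χ)
    (hs : tsupport χ ⊆ Ω) (h0 : ∀ x, 0 ≤ χ x)
    (huc : ContinuousOn (fun p : ℝ × EuclideanSpace ℝ (Fin d) => u p.1 p.2) (Icc 0 T ×ˢ tsupport χ))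
    (hvc : ContinuousOn (fun p : ℝ × EuclideanSpace ℝ (Fin d) => v p.1 p.2) (Icc 0 T ×ˢ tsupport χ))
    {s t B : ℝ} (hs0 : 0 ≤ s) (hst : s ≤ t) (htT : t ≤ T)
    (hB : ∀ τ ∈ Ioo s t, ∫ x, max (u τ x ^ m - v τ x ^ m) 0 * spaceLap χ x ≤ B) :
    ∫ x, max (u t x - v t x) 0 * χ x ≤ (∫ x, max (u s x - v s x) 0 * χ x) + (t - s) * B := by
  rcases hst.eq_or_lt with rfl | hlt
  · simp
  have hN := N_cont (w := fun τ x => max (u τ x - v τ x) 0) hχ.continuous hc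
    (ContinuousOn.sup (huc.sub hvc) continuousOn_const)
  set N : ℝ → ℝ := fun τ => ∫ x, max (u τ x - v τ x) 0 * χ x with hNdef
  have hG : ContinuousOn (fun τ => N τ - τ * B) (Icc s t) := by
    refine (hN.mono (Icc_subset_Icc hs0 htT)).sub (by fun_prop)
  have hmono : ∀ a ∈ Ioo s t, ∀ b ∈ Ioo s t, a ≤ b → N b - b * B ≤ N a - a * B := by
    intro a ha b hb hab
    have := contr_step (B := B) hm hΩ hu hv hχ hc hs h0 (hs0.trans_lt ha.1) hab (hb.2.trans_le htT)
      (fun τ hτ => hB τ ⟨ha.1.trans_le hτ.1, hτ.2.trans_lt hb.2⟩)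
    simp only [hNdef]
    linarith
  have hc' : (s + t) / 2 ∈ Ioo s t := ⟨by linarith, by linarith⟩
  have h1 : N ((s + t) / 2) - ((s + t) / 2) * B ≤ N s - s * B := by
    have h2 := (hG s ⟨le_rfl, hlt.le⟩).mono (Ioo_subset_Icc_self)
    have : (nhdsWithin s (Ioo s t)).NeBot := left_nhdsWithin_Ioo_neBot hlt
    have h3 : ∀ᶠ τ in nhdsWithin s (Ioo s t), τ < (s + t) / 2 :=
      nhdsWithin_le_nhds (Iio_mem_nhds hc'.1)
    refine ge_of_tendsto h2 ?_
    filter_upwards [h3, self_mem_nhdsWithin] with τ h4 h5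
    exact hmono τ h5 _ hc' h4.le
  have h2 : N t - t * B ≤ N ((s + t) / 2) - ((s + t) / 2) * B := by
    have h2 := (hG t ⟨hlt.le, le_rfl⟩).mono (Ioo_subset_Icc_self)
    have : (nhdsWithin t (Ioo s t)).NeBot := right_nhdsWithin_Ioo_neBot hlt
    have h3 : ∀ᶠ τ in nhdsWithin t (Ioo s t), (s + t) / 2 < τ :=
      nhdsWithin_le_nhds (Ioi_mem_nhds hc'.2)
    refine le_of_tendsto h2 ?_
    filter_upwards [h3, self_mem_nhdsWithin] with τ h4 h5
    exact hmono _ hc' τ h5 h4.le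
  have := h2.trans h1
  simp only [hNdef] at this
  linarith

theorem const_sol {d : ℕ} {m T M : ℝ} (hM : 0 < M) {Ω : Set (EuclideanSpace ℝ (Fin d))} :
    IsFDESol m (Ioo 0 T ×ˢ Ω) (fun _ _ => M) := by
  refine ⟨fun _ _ => hM, contDiffOn_const, fun p hp => ?_⟩
  simp [spaceLap_const]

theorem lap_hcs {d : ℕ} {χ : EuclideanSpace ℝ (Fin d) → ℝ} (hc : HasCompactSupport χ) :
    tsupport (spaceLap χ) ⊆ tsupport χ := by
  refine closure_minimal ?_ (isClosed_tsupport χ)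
  intro x hx
  by_contra h
  exact hx (spaceLap_zero_of_notMem h)

theorem integ_lap {d : ℕ} {f χ : EuclideanSpace ℝ (Fin d) → ℝ} (hc : HasCompactSupport χ)
    (hχ : ContDiff ℝ 2 χ) (hf : ContinuousOn f (tsupport χ)) :
    Integrable (fun x => f x * spaceLap χ x) :=
  integ_supp (hc.of_isClosed_subset (isClosed_tsupport _) (lap_hcs hc)) (continuous_spaceLap hχ)
    (hf.mono (lap_hcs hc))

theorem integral_lap_zero {d : ℕ} {χ : EuclideanSpace ℝ (Fin d) → ℝ} (hc : HasCompactSupport χ)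
    (hχ : ContDiff ℝ 2 χ) : ∫ x, spaceLap χ x = 0 := by
  have := ibp_lap (F := fun _ => 1) contDiff_const hχ hc
  simp only [spaceLap_const, one_mul, zero_mul, integral_zero] at this
  exact this.symm

theorem flux {d : ℕ} {m T : ℝ} (hm : 0 < m) {Ω : Set (EuclideanSpace ℝ (Fin d))}
    (hΩ : IsOpen Ω) {u : ℝ → EuclideanSpace ℝ (Fin d) → ℝ}
    (hu : IsFDESol m (Ioo 0 T ×ˢ Ω) u)
    {χ : EuclideanSpace ℝ (Fin d) → ℝ} (hχ : ContDiff ℝ 2 χ) (hc : HasCompactSupport χ)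
    (hs : tsupport χ ⊆ Ω) (h0 : ∀ x, 0 ≤ χ x)
    (huc : ContinuousOn (fun p : ℝ × EuclideanSpace ℝ (Fin d) => u p.1 p.2) (Icc 0 T ×ˢ tsupport χ))
    {s t B : ℝ} (hs0 : 0 ≤ s) (hst : s ≤ t) (htT : t ≤ T)
    (hB : ∀ τ ∈ Ioo s t, - ∫ x, u τ x ^ m * spaceLap χ x ≤ B) :
    ∫ x, u s x * χ x ≤ (∫ x, u t x * χ x) + (t - s) * B := by
  have hK : IsCompact (Icc 0 T ×ˢ tsupport χ) := isCompact_Icc.prod hc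
  obtain ⟨C, hC⟩ := hK.exists_bound_of_continuousOn huc
  set M := max C 1 with hM
  have hM0 : 0 < M := lt_of_lt_of_le one_pos (le_max_right _ _)
  have huM : ∀ τ ∈ Icc 0 T, ∀ x ∈ tsupport χ, u τ x ≤ M := fun τ hτ x hx =>
    (le_abs_self _).trans ((hC (τ, x) ⟨hτ, hx⟩).trans (le_max_left _ _))
  have hcu : ∀ τ ∈ Icc 0 T, ContinuousOn (fun x => u τ x) (tsupport χ) := fun τ hτ =>
    huc.comp (f := fun x => (τ, x)) (by fun_prop) (fun x hx => ⟨hτ, hx⟩)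
  have h := contr (B := B) hm hΩ (const_sol hM0) hu hχ hc hs h0 continuousOn_const huc hs0 hst htT ?_
  · have h1 : ∀ τ ∈ Icc 0 T, ∫ x, max (M - u τ x) 0 * χ x = M * (∫ x, χ x) - ∫ x, u τ x * χ x := by
      intro τ hτ
      rw [← integral_const_mul, ← integral_sub]
      · refine integral_congr_ae (Eventually.of_forall fun x => ?_)
        beta_reduce
        by_cases hx : x ∈ tsupport χ
        · rw [max_eq_left (by linarith [huM τ hτ x hx])]; ring
        · simp [image_eq_zero_of_notMem_tsupport hx]
      · exact (hχ.continuous.integrable_of_hasCompactSupport hc).const_mul M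
      · exact integ_supp hc hχ.continuous (hcu τ hτ)
    rw [h1 t ⟨hs0.trans hst, htT⟩, h1 s ⟨hs0, hst.trans htT⟩] at h
    linarith
  · intro τ hτ
    have hτ' : τ ∈ Icc 0 T := ⟨hs0.trans hτ.1.le, hτ.2.le.trans htT⟩
    have hτ'' : τ ∈ Ioo 0 T := ⟨hs0.trans_lt hτ.1, hτ.2.trans_le htT⟩
    refine le_trans (le_of_eq ?_) (hB τ hτ)
    have h2 : ∫ x, max (M ^ m - u τ x ^ m) 0 * spaceLap χ x =
        ∫ x, (M ^ m * spaceLap χ x - u τ x ^ m * spaceLap χ x) := by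
      refine integral_congr_ae (Eventually.of_forall fun x => ?_)
      beta_reduce
      by_cases hx : x ∈ tsupport χ
      · rw [max_eq_left]
        · ring
        · have := Real.rpow_le_rpow (hu.1 (τ, x) ⟨hτ'', hs hx⟩).le (huM τ hτ' x hx) hm.le
          simp only at this
          linarith
      · simp [spaceLap_zero_of_notMem hx]
    rw [h2, integral_sub, integral_const_mul, integral_lap_zero hc hχ]
    · simp
    · exact integ_lap (f := fun _ => M ^ m) hc hχ continuousOn_const
    · exact integ_lap hc hχ ((fde_space hu hτ'').continuousOn.mono hs)

end

section
open MeasureTheory Metric Set Real Filter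

theorem sT_deriv_zero {y : ℝ} (hy : 1 < y) : deriv smoothTransition y = 0 := by
  have : smoothTransition =ᶠ[nhds y] fun _ => 1 := by
    filter_upwards [Ioi_mem_nhds hy] with z hz
    exact smoothTransition.one_of_one_le (le_of_lt hz)
  rw [this.deriv_eq]; simp

theorem comparison {d : ℕ} {m T : ℝ} (hm : 0 < m) {Ω K : Set (EuclideanSpace ℝ (Fin d))}
    (hΩ : IsOpen Ω) (hK : IsCompact K) (hΩK : Ω ⊆ K)
    {ψ : EuclideanSpace ℝ (Fin d) → ℝ} (hψ : ContDiff ℝ 2 ψ) (hψpos : ∀ x ∈ Ω, 0 < ψ x)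
    (hψ0 : ∀ x ∈ K, x ∉ Ω → ψ x ≤ 0) (hψL : ∀ x ∈ Ω, spaceLap ψ x ≤ 0)
    {u v : ℝ → EuclideanSpace ℝ (Fin d) → ℝ}
    (hu : IsFDESol m (Ioo 0 T ×ˢ Ω) u) (hv : IsFDESol m (Ioo 0 T ×ˢ Ω) v)
    (huc : ContinuousOn (fun p : ℝ × EuclideanSpace ℝ (Fin d) => u p.1 p.2) (Icc 0 T ×ˢ K))
    (hvc : ContinuousOn (fun p : ℝ × EuclideanSpace ℝ (Fin d) => v p.1 p.2) (Icc 0 T ×ˢ K))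
    (hu0 : ∀ t ∈ Icc 0 T, ∀ x ∈ K, 0 ≤ u t x)
    (hinit : ∀ x ∈ Ω, u 0 x ≤ v 0 x)
    (hbd : ∀ t ∈ Icc 0 T, ∀ x ∈ K, x ∉ Ω → u t x ≤ v t x) :
    ∀ t ∈ Ioo 0 T, ∀ x ∈ Ω, u t x ≤ v t x := by
  intro t ht
  have htI : t ∈ Icc 0 T := ⟨ht.1.le, ht.2.le⟩
  obtain ⟨C0, hC0⟩ := hK.exists_bound_of_continuousOn (continuous_spaceLap hψ).continuousOn
  have hDc : ContinuousOn (fun p : ℝ × EuclideanSpace ℝ (Fin d) => u p.1 p.2 ^ m - v p.1 p.2 ^ m)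
      (Icc 0 T ×ˢ K) :=
    (huc.rpow_const fun _ _ => Or.inr hm.le).sub (hvc.rpow_const fun _ _ => Or.inr hm.le)
  have hIK : IsCompact (Icc 0 T ×ˢ K) := isCompact_Icc.prod hK
  have hΩfin : volume Ω ≠ ⊤ := ((measure_mono hΩK).trans_lt hK.measure_lt_top).ne
  have hdelta : ∀ ε > 0, ∃ δ > 0, δ ≤ ε ∧ ∀ τ ∈ Icc 0 T, ∀ x ∈ K, ψ x ≤ 2 * δ →
      u τ x ^ m - v τ x ^ m ≤ ε := by
    intro ε hε
    have hcl : IsCompact ((Icc 0 T ×ˢ K) ∩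
        (fun p : ℝ × EuclideanSpace ℝ (Fin d) => u p.1 p.2 ^ m - v p.1 p.2 ^ m) ⁻¹' Ici ε) :=
      hIK.of_isClosed_subset (hDc.preimage_isClosed_of_isClosed hIK.isClosed isClosed_Ici)
        inter_subset_left
    rcases Set.eq_empty_or_nonempty ((Icc 0 T ×ˢ K) ∩
        (fun p : ℝ × EuclideanSpace ℝ (Fin d) => u p.1 p.2 ^ m - v p.1 p.2 ^ m) ⁻¹' Ici ε) with he | hne
    · refine ⟨ε, hε, le_rfl, fun τ hτ x hx _ => ?_⟩
      by_contra h
      have : (τ, x) ∈ (Icc 0 T ×ˢ K) ∩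
        (fun p : ℝ × EuclideanSpace ℝ (Fin d) => u p.1 p.2 ^ m - v p.1 p.2 ^ m) ⁻¹' Ici ε :=
        ⟨⟨hτ, hx⟩, (not_le.1 h).le⟩
      rw [he] at this
      exact this
    · obtain ⟨p, hp, hmin⟩ := hcl.exists_isMinOn hne
        ((hψ.continuous.comp continuous_snd).continuousOn (s := (Icc 0 T ×ˢ K) ∩
        (fun p : ℝ × EuclideanSpace ℝ (Fin d) => u p.1 p.2 ^ m - v p.1 p.2 ^ m) ⁻¹' Ici ε))
      have hp2 : 0 < ψ p.2 := by
        refine hψpos _ ?_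
        by_contra hn
        have h1 := hbd p.1 hp.1.1 p.2 hp.1.2 hn
        have h2 := Real.rpow_le_rpow (hu0 p.1 hp.1.1 p.2 hp.1.2) h1 hm.le
        have h3 : ε ≤ u p.1 p.2 ^ m - v p.1 p.2 ^ m := hp.2
        linarith
      refine ⟨min ε (ψ p.2 / 3), lt_min hε (by linarith), min_le_left _ _, fun τ hτ x hx hle => ?_⟩
      by_contra h
      have h4 : ψ p.2 ≤ ψ x := hmin (a := (τ, x)) ⟨⟨hτ, hx⟩, (not_le.1 h).le⟩
      have := min_le_right ε (ψ p.2 / 3)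
      linarith
  have hct : ContinuousOn (fun x => u t x - v t x) K :=
    (huc.sub hvc).comp (f := fun x => (t, x)) (by fun_prop) (fun x hx => ⟨htI, hx⟩)
  have hctp : ContinuousOn (fun x => max (u t x - v t x) 0) K :=
    ContinuousOn.sup hct continuousOn_const
  have hintJ : IntegrableOn (fun x => max (u t x - v t x) 0) Ω :=
    (hctp.integrableOn_compact hK).mono_set hΩK
  have hintI : IntegrableOn (fun x => max (u t x - v t x) 0 * ψ x) Ω :=
    ((hctp.mul hψ.continuous.continuousOn).integrableOn_compact hK).mono_set hΩK
  have main : ∀ ε > 0, ∫ x in Ω, max (u t x - v t x) 0 * ψ x ≤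
      ε * (t * (C0 * (volume Ω).toReal) + 2 * ∫ x in Ω, max (u t x - v t x) 0) := by
    intro ε hε
    obtain ⟨δ, hδ, hδε, hDε⟩ := hdelta ε hε
    set χ : EuclideanSpace ℝ (Fin d) → ℝ := Ω.indicator (fun x => hr δ (ψ x)) with hχdef
    have hKc : IsCompact (K ∩ ψ ⁻¹' Ici δ) := hK.inter_right (isClosed_Ici.preimage hψ.continuous)
    have hKΩ : K ∩ ψ ⁻¹' Ici δ ⊆ Ω := by
      intro x hx
      by_contra hn
      have h1 : δ ≤ ψ x := hx.2
      linarith [hψ0 x hx.1 hn]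
    have hsupp : tsupport χ ⊆ K ∩ ψ ⁻¹' Ici δ := by
      refine closure_minimal (fun x hx => ?_) hKc.isClosed
      by_cases hxΩ : x ∈ Ω
      · refine ⟨hΩK hxΩ, ?_⟩
        by_contra hn
        refine hx ?_
        rw [hχdef, indicator_of_mem hxΩ]
        exact hr_zero hδ (not_le.1 hn).le
      · exact absurd (indicator_of_notMem hxΩ _) hx
    have hc : HasCompactSupport χ := hKc.of_isClosed_subset (isClosed_tsupport _) hsupp
    have heqΩ : ∀ x ∈ Ω, χ =ᶠ[nhds x] fun x => hr δ (ψ x) := by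
      intro x hx
      filter_upwards [hΩ.mem_nhds hx] with y hy
      exact indicator_of_mem hy _
    have hχ : ContDiff ℝ 2 χ := by
      rw [contDiff_iff_contDiffAt]
      intro x
      by_cases hx : x ∈ Ω
      · exact ((hr_contDiff δ).comp hψ).contDiffAt.congr_of_eventuallyEq (heqΩ x hx)
      · have : χ =ᶠ[nhds x] 0 :=
          notMem_tsupport_iff_eventuallyEq.1 (fun h => hx (hKΩ (hsupp h)))
        exact (contDiffAt_const (c := (0 : ℝ))).congr_of_eventuallyEq this
    have h0 : ∀ x, 0 ≤ χ x := fun x => indicator_nonneg (fun y _ => hr_nonneg hδ _) x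
    have hLχ : ∀ x ∈ Ω, spaceLap χ x = smoothTransition (ψ x / δ - 1) * spaceLap ψ x +
        deriv smoothTransition (ψ x / δ - 1) * (1 / δ) *
          ∑ i, (fderiv ℝ ψ x (EuclideanSpace.single i 1)) ^ 2 := by
      intro x hx
      rw [spaceLap_congr (heqΩ x hx)]
      exact spaceLap_comp (hr_deriv hδ) (hr_deriv2 δ) hψ.contDiffAt
    have hiI : Integrable (Ω.indicator fun _ => ε * C0) := by
      rw [integrable_indicator_iff hΩ.measurableSet]
      exact integrableOn_const hΩfin
    have hiL : Integrable (fun x => ε * spaceLap χ x) :=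
      integ_lap (f := fun _ => ε) hc hχ continuousOn_const
    have hB : ∀ τ ∈ Ioo 0 t, ∫ x, max (u τ x ^ m - v τ x ^ m) 0 * spaceLap χ x ≤
        ε * (C0 * (volume Ω).toReal) := by
      intro τ hτ
      have hτI : τ ∈ Icc 0 T := ⟨hτ.1.le, hτ.2.le.trans ht.2.le⟩
      have hpt : ∀ x, max (u τ x ^ m - v τ x ^ m) 0 * spaceLap χ x ≤
          ε * spaceLap χ x + Ω.indicator (fun _ => ε * C0) x := by
        intro x
        by_cases hx : x ∈ Ω
        · rw [indicator_of_mem hx, hLχ x hx]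
          have hS0 := smoothTransition.nonneg (ψ x / δ - 1)
          have hS1 := smoothTransition.le_one (ψ x / δ - 1)
          have hL := hψL x hx
          have hLC : -C0 ≤ spaceLap ψ x := (abs_le.1 (hC0 x (hΩK hx))).1
          set S := smoothTransition (ψ x / δ - 1)
          set L := spaceLap ψ x
          have hP : 0 ≤ max (u τ x ^ m - v τ x ^ m) 0 := le_max_right _ _
          have hSL : S * L ≤ 0 := mul_nonpos_of_nonneg_of_nonpos hS0 hL
          have hSL2 : -C0 ≤ S * L := by nlinarith
          by_cases h2 : ψ x ≤ 2 * δ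
          · have hPε : max (u τ x ^ m - v τ x ^ m) 0 ≤ ε :=
              max_le (hDε τ hτI x (hΩK hx) h2) hε.le
            have hG : 0 ≤ deriv smoothTransition (ψ x / δ - 1) * (1 / δ) *
              ∑ i, (fderiv ℝ ψ x (EuclideanSpace.single i 1)) ^ 2 :=
              mul_nonneg (mul_nonneg (sT_deriv_nonneg _) (one_div_pos.2 hδ).le)
                (Finset.sum_nonneg fun i _ => sq_nonneg _)
            set G := deriv smoothTransition (ψ x / δ - 1) * (1 / δ) *
              ∑ i, (fderiv ℝ ψ x (EuclideanSpace.single i 1)) ^ 2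
            set P := max (u τ x ^ m - v τ x ^ m) 0
            have e1 : P * (S * L) ≤ 0 := mul_nonpos_of_nonneg_of_nonpos hP hSL
            have e2 : P * G ≤ ε * G := mul_le_mul_of_nonneg_right hPε hG
            have e3 : 0 ≤ ε * (S * L + C0) := mul_nonneg hε.le (by linarith)
            linarith
          · rw [sT_deriv_zero (by
              rw [not_le] at h2
              have : 2 < ψ x / δ := by rw [lt_div_iff₀ hδ]; exact h2
              linarith)]
            simp only [zero_mul, add_zero]
            have e1 := mul_nonpos_of_nonneg_of_nonpos hP hSL
            have e3 : 0 ≤ ε * (S * L + C0) := mul_nonneg hε.le (by linarith)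
            linarith
        · rw [indicator_of_notMem hx,
            spaceLap_zero_of_notMem (fun h => hx (hKΩ (hsupp h)))]
          simp
      have hτ' : τ ∈ Ioo 0 T := ⟨hτ.1, hτ.2.trans ht.2⟩
      have hsK : tsupport χ ⊆ Ω := hsupp.trans hKΩ
      have hcont : ContinuousOn (fun x => max (u τ x ^ m - v τ x ^ m) 0) (tsupport χ) :=
        ContinuousOn.sup (((fde_space hu hτ').continuousOn.mono hsK).sub
          ((fde_space hv hτ').continuousOn.mono hsK)) continuousOn_const
      refine (integral_mono (integ_lap hc hχ hcont) (hiL.add hiI) hpt).trans (le_of_eq ?_)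
      rw [integral_add' hiL hiI, integral_const_mul, integral_lap_zero hc hχ,
        integral_indicator hΩ.measurableSet, setIntegral_const]
      simp [Measure.real]
      ring
    have hsK : tsupport χ ⊆ Ω := hsupp.trans hKΩ
    have hsub : Icc 0 T ×ˢ tsupport χ ⊆ Icc 0 T ×ˢ K := prod_mono le_rfl (hsK.trans hΩK)
    have h := contr hm hΩ hu hv hχ hc hsK h0 (huc.mono hsub) (hvc.mono hsub) le_rfl ht.1.le ht.2.le hB
    have hz : ∫ x, max (u 0 x - v 0 x) 0 * χ x = 0 := by
      refine integral_eq_zero_of_ae (Eventually.of_forall fun x => ?_)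
      by_cases hx : x ∈ Ω
      · simp only [Pi.zero_apply]
        rw [max_eq_right (by linarith [hinit x hx]), zero_mul]
      · simp [hχdef, indicator_of_notMem hx]
    have hlow : (∫ x in Ω, max (u t x - v t x) 0 * ψ x) - 2 * δ * ∫ x in Ω, max (u t x - v t x) 0 ≤
        ∫ x, max (u t x - v t x) 0 * χ x := by
      have e1 : ∫ x, max (u t x - v t x) 0 * χ x = ∫ x in Ω, max (u t x - v t x) 0 * χ x := by
        rw [setIntegral_eq_integral_of_forall_compl_eq_zero]
        intro x hx
        simp [hχdef, indicator_of_notMem hx]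
      rw [e1, ← integral_const_mul, ← integral_sub hintI (hintJ.const_mul _)]
      refine setIntegral_mono_on (hintI.sub (hintJ.const_mul _)) ?_ hΩ.measurableSet ?_
      · exact ((hctp.mul hχ.continuous.continuousOn).integrableOn_compact hK).mono_set hΩK
      · intro x hx
        have : ψ x - 2 * δ ≤ χ x := by
          rw [hχdef, indicator_of_mem hx]; exact hr_ge hδ _
        have hP : 0 ≤ max (u t x - v t x) 0 := le_max_right _ _
        nlinarith
    have hJ : 0 ≤ ∫ x in Ω, max (u t x - v t x) 0 := integral_nonneg fun x => le_max_right _ _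
    rw [hz] at h
    nlinarith
  have hI0 : ∫ x in Ω, max (u t x - v t x) 0 * ψ x ≤ 0 := by
    set X := t * (C0 * (volume Ω).toReal) + 2 * ∫ x in Ω, max (u t x - v t x) 0
    have hlim : Tendsto (fun ε : ℝ => ε * X) (nhdsWithin 0 (Ioi 0)) (nhds (0 * X)) :=
      Tendsto.mono_left (Continuous.tendsto (by fun_prop) 0) nhdsWithin_le_nhds
    rw [zero_mul] at hlim
    exact ge_of_tendsto hlim (eventually_nhdsWithin_of_forall fun ε hε => main ε hε)
  have hnn : 0 ≤ᵐ[volume.restrict Ω] fun x => max (u t x - v t x) 0 * ψ x :=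
    (ae_restrict_iff' hΩ.measurableSet).2 (Eventually.of_forall fun x hx =>
      mul_nonneg (le_max_right _ _) (hψpos x hx).le)
  have hae := (setIntegral_eq_zero_iff_of_nonneg_ae hnn hintI).1
    (le_antisymm hI0 (setIntegral_nonneg hΩ.measurableSet fun x hx =>
      mul_nonneg (le_max_right _ _) (hψpos x hx).le))
  have heq := Measure.eqOn_open_of_ae_eq hae hΩ ((hctp.mul hψ.continuous.continuousOn).mono hΩK)
    continuousOn_const
  intro x hx
  have h1 : max (u t x - v t x) 0 * ψ x = 0 := heq hx
  have h2 : max (u t x - v t x) 0 = 0 := (mul_eq_zero.1 h1).resolve_right (hψpos x hx).ne'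
  have := le_max_left (u t x - v t x) 0
  linarith

end

section
open MeasureTheory Metric Set Real Filter

theorem fderiv_q {d : ℕ} (x₀ y v : EuclideanSpace ℝ (Fin d)) :
    fderiv ℝ (fun x => ‖x - x₀‖ ^ 2) y v = 2 * inner ℝ (y - x₀) v := by
  have h := ((hasFDerivAt_id y).sub_const x₀).norm_sq
  simp only [id] at h
  rw [h.fderiv]
  simp [inner_sub_left]

theorem q_contDiff {d : ℕ} (x₀ : EuclideanSpace ℝ (Fin d)) :
    ContDiff ℝ 2 (fun x => ‖x - x₀‖ ^ 2) := (contDiff_id.sub contDiff_const).norm_sq ℝ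

theorem inner_single' {d : ℕ} (w : EuclideanSpace ℝ (Fin d)) (i : Fin d) :
    inner ℝ w (EuclideanSpace.single i (1 : ℝ)) = w i := by
  simp [EuclideanSpace.inner_single_right]

theorem fderiv_lin {d : ℕ} (x₀ e y v : EuclideanSpace ℝ (Fin d)) (c : ℝ) :
    fderiv ℝ (fun x => inner ℝ (x - x₀) e - c) y v = inner ℝ v e := by
  have h := (((hasFDerivAt_id y).sub_const x₀).inner ℝ (hasFDerivAt_const e y)).sub_const c
  simp only [id] at h
  rw [h.fderiv]
  simp

theorem lin_contDiff {d : ℕ} (x₀ e : EuclideanSpace ℝ (Fin d)) (c : ℝ) :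
    ContDiff ℝ 2 (fun x => inner ℝ (x - x₀) e - c) :=
  ((contDiff_id.sub contDiff_const).inner ℝ contDiff_const).sub contDiff_const

theorem spaceLap_q {d : ℕ} (x₀ x : EuclideanSpace ℝ (Fin d)) :
    spaceLap (fun x => ‖x - x₀‖ ^ 2) x = 2 * d := by
  unfold spaceLap
  have : ∀ i : Fin d, fderiv ℝ (fun y => fderiv ℝ (fun x => ‖x - x₀‖ ^ 2) y
      (EuclideanSpace.single i 1)) x (EuclideanSpace.single i 1) = 2 := by
    intro i
    have h1 : (fun y => fderiv ℝ (fun x => ‖x - x₀‖ ^ 2) y (EuclideanSpace.single i 1)) =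
        fun y => inner ℝ (y - x₀) ((2 : ℝ) • EuclideanSpace.single i 1) - 0 := by
      funext y
      rw [fderiv_q, inner_smul_right, sub_zero]
    rw [h1, fderiv_lin, inner_smul_right, inner_single']
    simp
  simp only [this, Finset.sum_const, Finset.card_univ, Fintype.card_fin, nsmul_eq_mul]
  ring

theorem spaceLap_lin {d : ℕ} (x₀ e x : EuclideanSpace ℝ (Fin d)) (c : ℝ) :
    spaceLap (fun x => inner ℝ (x - x₀) e - c) x = 0 := by
  unfold spaceLap
  simp only [fderiv_lin]
  simp

theorem sum_q {d : ℕ} (x₀ x : EuclideanSpace ℝ (Fin d)) :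
    ∑ i, (fderiv ℝ (fun x => ‖x - x₀‖ ^ 2) x (EuclideanSpace.single i 1)) ^ 2 = 4 * ‖x - x₀‖ ^ 2 := by
  simp only [fderiv_q, inner_single']
  rw [EuclideanSpace.real_norm_sq_eq, Finset.mul_sum]
  refine Finset.sum_congr rfl fun i _ => ?_
  ring

/-- the barrier for balls -/
theorem spaceLap_barrier {d : ℕ} (x₀ x : EuclideanSpace ℝ (Fin d)) (c : ℝ) :
    spaceLap (fun x => c - ‖x - x₀‖ ^ 2) x = - (2 * d) := by
  rw [spaceLap_sub contDiffAt_const (q_contDiff x₀).contDiffAt, spaceLap_const, spaceLap_q]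
  ring

theorem barrier_contDiff {d : ℕ} (x₀ : EuclideanSpace ℝ (Fin d)) (c : ℝ) :
    ContDiff ℝ 2 (fun x => c - ‖x - x₀‖ ^ 2) := contDiff_const.sub (q_contDiff x₀)

theorem fderiv_barrier {d : ℕ} (x₀ y v : EuclideanSpace ℝ (Fin d)) (c : ℝ) :
    fderiv ℝ (fun x => c - ‖x - x₀‖ ^ 2) y v = - (2 * inner ℝ (y - x₀) v) := by
  rw [fderiv_const_sub, ← fderiv_q]
  rfl

theorem spaceLap_barrier2 {d : ℕ} (x₀ e x : EuclideanSpace ℝ (Fin d)) (b c : ℝ) :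
    spaceLap (fun x => (inner ℝ (x - x₀) e - b) * (c - ‖x - x₀‖ ^ 2)) x =
      - (2 * d) * (inner ℝ (x - x₀) e - b) - 4 * inner ℝ (x - x₀) e := by
  rw [spaceLap_mul (lin_contDiff x₀ e b).contDiffAt (barrier_contDiff x₀ c).contDiffAt,
    spaceLap_barrier, spaceLap_lin]
  simp only [fderiv_lin, fderiv_barrier, inner_single']
  have : ∑ i, inner ℝ (EuclideanSpace.single i (1 : ℝ)) e * -(2 * (x - x₀) i) =
      - (2 * inner ℝ (x - x₀) e) := by
    rw [PiLp.inner_apply, Finset.mul_sum, ← Finset.sum_neg_distrib]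
    refine Finset.sum_congr rfl fun i _ => ?_
    rw [real_inner_comm, inner_single']
    simp
    ring
  rw [this]
  ring

end

section
open MeasureTheory Metric Set Real Filter

theorem bdry_zero {d : ℕ} {m R₀ T : ℝ} (hT : 0 < T) {x₀ : EuclideanSpace ℝ (Fin d)}
    {u : ℝ → EuclideanSpace ℝ (Fin d) → ℝ} {u₀ : EuclideanSpace ℝ (Fin d) → ℝ}
    (h : IsDirichletSol m x₀ R₀ T u u₀) :
    ∀ t ∈ Icc 0 T, ∀ x ∈ closedBall x₀ R₀, x ∉ ball x₀ R₀ → u t x = 0 := by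
  obtain ⟨h1, h2, h3, h4, h5, h6, h7⟩ := h
  intro t ht x hx hx'
  have hs : x ∈ sphere x₀ R₀ := le_antisymm (mem_closedBall.1 hx) (not_lt.1 hx')
  rcases ht.1.eq_or_lt with rfl | h0
  · have hc : ContinuousOn (fun τ => u τ x) (Icc 0 T) :=
      h2.comp (f := fun τ => (τ, x)) (by fun_prop) (fun τ hτ => ⟨hτ, hx⟩)
    have hc0 := (hc 0 ht).mono (Ioo_subset_Icc_self)
    have : (nhdsWithin 0 (Ioo 0 T)).NeBot := left_nhdsWithin_Ioo_neBot hT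
    refine tendsto_nhds_unique hc0 (tendsto_const_nhds.congr' ?_)
    filter_upwards [self_mem_nhdsWithin] with τ hτ
    exact (h5 τ ⟨hτ.1, hτ.2.le⟩ x hs).symm
  · exact h5 t ⟨h0, ht.2⟩ x hs

theorem benilan {d : ℕ} {m R₀ T : ℝ} (hm : 0 < m) (hm1 : m < 1) (hT : 0 < T)
    {x₀ : EuclideanSpace ℝ (Fin d)}
    {u : ℝ → EuclideanSpace ℝ (Fin d) → ℝ} {u₀ : EuclideanSpace ℝ (Fin d) → ℝ}
    (h : IsDirichletSol m x₀ R₀ T u u₀) {lam t : ℝ} (hl : 1 ≤ lam) (ht : 0 < t) (hlt : lam * t < T)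
    {x : EuclideanSpace ℝ (Fin d)} (hx : x ∈ ball x₀ R₀) :
    u (lam * t) x ≤ lam ^ (1 / (1 - m)) * u t x := by
  have hb := bdry_zero hT h
  obtain ⟨h1, h2, h3, h4, h5, h6, h7⟩ := h
  have hl0 : 0 < lam := by linarith
  set k := lam ^ (1 / (1 - m)) with hk
  have hk0 : 0 < k := Real.rpow_pos_of_pos hl0 _
  have hk1 : 1 ≤ k := Real.one_le_rpow hl (by apply one_div_nonneg.2; linarith)
  have hkm : k⁻¹ * lam = k⁻¹ ^ m := by
    have e : k ^ (1 - m) = lam := by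
      rw [hk, ← Real.rpow_mul hl0.le, one_div_mul_cancel (by linarith), Real.rpow_one]
    rw [Real.inv_rpow hk0.le]
    nth_rewrite 1 [← e]
    rw [Real.rpow_sub hk0, Real.rpow_one]
    field_simp
  have hTl : T / lam ≤ T := div_le_self hT.le hl
  have hmem : ∀ {τ}, τ ∈ Icc 0 (T / lam) → lam * τ ∈ Icc 0 T := by
    intro τ hτ
    refine ⟨mul_nonneg hl0.le hτ.1, ?_⟩
    have := hτ.2
    rw [le_div_iff₀ hl0] at this
    linarith
  have hmemo : ∀ {τ}, τ ∈ Ioo 0 (T / lam) → lam * τ ∈ Ioo 0 T := by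
    intro τ hτ
    refine ⟨mul_pos hl0 hτ.1, ?_⟩
    have := hτ.2
    rw [lt_div_iff₀ hl0] at this
    linarith
  have hsol : IsFDESol m (Ioo 0 (T / lam) ×ˢ ball x₀ R₀) (fun τ y => k⁻¹ * u (lam * τ) y) := by
    refine ⟨fun p hp => mul_pos (inv_pos.2 hk0) (h3.1 (lam * p.1, p.2) ⟨hmemo hp.1, hp.2⟩), ?_, ?_⟩
    · refine contDiffOn_const.mul ?_
      exact h3.2.1.comp (f := fun p : ℝ × EuclideanSpace ℝ (Fin d) => (lam * p.1, p.2))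
        (by fun_prop) (fun p hp => ⟨hmemo hp.1, hp.2⟩)
    · intro p hp
      obtain ⟨ut, -, hut⟩ := fde_time isOpen_ball h3
      obtain ⟨e1, e2⟩ := hut (lam * p.1) (hmemo hp.1) p.2 hp.2
      have e3 : HasDerivAt (fun τ : ℝ => lam * τ) lam p.1 := by
        simpa using (hasDerivAt_id p.1).const_mul lam
      have e4 := (HasDerivAt.comp p.1 e1 e3).const_mul k⁻¹
      have e5 : (fun y => (k⁻¹ * u (lam * p.1) y) ^ m) =ᶠ[nhds p.2]
          fun y => k⁻¹ ^ m * u (lam * p.1) y ^ m := by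
        filter_upwards [isOpen_ball.mem_nhds hp.2] with y hy
        exact Real.mul_rpow (inv_pos.2 hk0).le (h3.1 (lam * p.1, y) ⟨hmemo hp.1, hy⟩).le
      rw [spaceLap_congr e5, spaceLap_const_mul
        ((fde_space h3 (hmemo hp.1)).contDiffAt (isOpen_ball.mem_nhds hp.2)), ← e2, ← hkm]
      refine e4.deriv.trans ?_
      ring
  have hsol2 : IsFDESol m (Ioo 0 (T / lam) ×ˢ ball x₀ R₀) u := by
    have hs : Ioo 0 (T / lam) ×ˢ ball x₀ R₀ ⊆ Ioo 0 T ×ˢ ball x₀ R₀ :=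
      prod_mono (Ioo_subset_Ioo le_rfl hTl) le_rfl
    exact ⟨fun p hp => h3.1 p (hs hp), h3.2.1.mono hs, fun p hp => h3.2.2 p (hs hp)⟩
  have hcmp := comparison (T := T / lam) hm isOpen_ball (isCompact_closedBall x₀ R₀)
    ball_subset_closedBall (barrier_contDiff x₀ (R₀ ^ 2)) ?_ ?_ ?_ hsol hsol2 ?_ ?_ ?_ ?_ ?_ t
    ⟨ht, by rw [lt_div_iff₀ hl0]; linarith⟩ x hx
  · rw [inv_mul_le_iff₀ hk0] at hcmp
    exact hcmp
  · intro y hy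
    rw [mem_ball, dist_eq_norm] at hy
    nlinarith [norm_nonneg (y - x₀)]
  · intro y _ hy
    rw [mem_ball, dist_eq_norm, not_lt] at hy
    have hR : 0 ≤ R₀ := dist_nonneg.trans (mem_ball.1 hx).le
    nlinarith [norm_nonneg (y - x₀)]
  · intro y _
    rw [spaceLap_barrier]
    have : (0 : ℝ) ≤ d := Nat.cast_nonneg d
    linarith
  · refine continuousOn_const.mul ?_
    exact h2.comp (f := fun p : ℝ × EuclideanSpace ℝ (Fin d) => (lam * p.1, p.2))
        (by fun_prop) (fun p hp => ⟨hmem hp.1, hp.2⟩)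
  · exact h2.mono (prod_mono (Icc_subset_Icc le_rfl hTl) le_rfl)
  · intro τ hτ y hy
    exact mul_nonneg (inv_pos.2 hk0).le (h1 _ (hmem hτ) y hy)
  · intro y hy
    rw [mul_zero]
    exact mul_le_of_le_one_left (h1 0 ⟨le_rfl, hT.le⟩ y (ball_subset_closedBall hy))
      (inv_le_one_of_one_le₀ hk1)
  · intro τ hτ y hy hy'
    rw [hb _ (hmem hτ) y hy hy', hb τ ⟨hτ.1, hτ.2.trans hTl⟩ y hy hy', mul_zero]

theorem aleks {d : ℕ} {m R R₀ T : ℝ} (hm : 0 < m) (hT : 0 < T) (hR : 0 < R)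
    {x₀ : EuclideanSpace ℝ (Fin d)}
    {u : ℝ → EuclideanSpace ℝ (Fin d) → ℝ} {u₀ : EuclideanSpace ℝ (Fin d) → ℝ}
    (hsupp : Function.support u₀ ⊆ closedBall x₀ R)
    (h : IsDirichletSol m x₀ R₀ T u u₀) {t : ℝ} (ht : t ∈ Ioo 0 T)
    {x : EuclideanSpace ℝ (Fin d)} (hx : x ∈ ball x₀ R₀) (hx2 : x ∉ ball x₀ (2 * R)) :
    u t x ≤ u t x₀ := by
  have hb := bdry_zero hT h
  obtain ⟨h1, h2, h3, h4, h5, h6, h7⟩ := h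
  rw [mem_ball, dist_eq_norm, not_lt] at hx2
  have hR0 : 0 < R₀ := dist_nonneg.trans_lt (mem_ball.1 hx)
  set n := ‖x - x₀‖ with hn
  have hn0 : 0 < n := by linarith
  set c := n / 2 with hc
  have hcR : R ≤ c := by linarith
  set e : EuclideanSpace ℝ (Fin d) := n⁻¹ • (x - x₀) with he
  have hen : ‖e‖ = 1 := by
    rw [he, norm_smul, norm_inv, Real.norm_of_nonneg hn0.le, ← hn, inv_mul_cancel₀ hn0.ne']
  have hee : inner ℝ e e = 1 := by rw [real_inner_self_eq_norm_sq, hen]; norm_num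
  have hxe : x - x₀ = n • e := by rw [he, smul_smul, mul_inv_cancel₀ hn0.ne', one_smul]
  set S := (Submodule.span ℝ {e})ᗮ.reflection with hS
  set y0 : EuclideanSpace ℝ (Fin d) := (2 * (inner ℝ x₀ e + c)) • e with hy0
  have hσ : ∀ y, S y + y0 = y - (2 * (inner ℝ (y - x₀) e - c)) • e := by
    intro y
    rw [hS, Submodule.reflection_orthogonal_apply, Submodule.reflection_singleton_apply, hen, hy0,
      inner_sub_left, real_inner_comm]
    simp only [one_pow, RCLike.ofReal_real_eq_id, id, div_one]
    module
  have hσn : ∀ y, ‖S y + y0 - x₀‖ ^ 2 = ‖y - x₀‖ ^ 2 - 4 * c * (inner ℝ (y - x₀) e - c) := by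
    intro y
    rw [hσ, show y - (2 * (inner ℝ (y - x₀) e - c)) • e - x₀ =
      (y - x₀) - (2 * (inner ℝ (y - x₀) e - c)) • e by abel, norm_sub_sq_real, norm_smul, hen,
      inner_smul_right, mul_one, Real.norm_eq_abs, sq_abs]
    ring
  have hσle : ∀ y, c ≤ inner ℝ (y - x₀) e → ‖S y + y0 - x₀‖ ≤ ‖y - x₀‖ := by
    intro y hy
    have h8 := hσn y
    have : 0 ≤ 4 * c * (inner ℝ (y - x₀) e - c) := by
      have : 0 < c := by linarith
      have : 0 ≤ inner ℝ (y - x₀) e - c := by linarith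
      positivity
    exact (sq_le_sq₀ (norm_nonneg _) (norm_nonneg _)).1 (by linarith)
  have hcontp : Continuous fun y => inner ℝ (y - x₀) e := by fun_prop
  set Ω := ball x₀ R₀ ∩ (fun y => inner ℝ (y - x₀) e) ⁻¹' Ioi c with hΩ
  set K := closedBall x₀ R₀ ∩ (fun y => inner ℝ (y - x₀) e) ⁻¹' Ici c with hK
  have hΩo : IsOpen Ω := isOpen_ball.inter (isOpen_Ioi.preimage hcontp)
  have hKc : IsCompact K := (isCompact_closedBall x₀ R₀).inter_right (isClosed_Ici.preimage hcontp)
  have hΩK : Ω ⊆ K := inter_subset_inter ball_subset_closedBall (preimage_mono Ioi_subset_Ici_self)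
  have hσΩ : ∀ y ∈ Ω, S y + y0 ∈ ball x₀ R₀ := by
    intro y hy
    rw [mem_ball, dist_eq_norm]
    have := mem_ball.1 hy.1
    rw [dist_eq_norm] at this
    exact (hσle y (le_of_lt hy.2)).trans_lt this
  have hσK : ∀ y ∈ K, S y + y0 ∈ closedBall x₀ R₀ := by
    intro y hy
    rw [mem_closedBall, dist_eq_norm]
    have := mem_closedBall.1 hy.1
    rw [dist_eq_norm] at this
    exact (hσle y hy.2).trans this
  have hSc : ContDiff ℝ (⊤ : ℕ∞) (fun p : ℝ × EuclideanSpace ℝ (Fin d) => (p.1, S p.2 + y0)) :=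
    contDiff_fst.prodMk ((S.contDiff.comp contDiff_snd).add contDiff_const)
  have hsolu : IsFDESol m (Ioo 0 T ×ˢ Ω) u := by
    have hs : Ioo 0 T ×ˢ Ω ⊆ Ioo 0 T ×ˢ ball x₀ R₀ := prod_mono le_rfl inter_subset_left
    exact ⟨fun p hp => h3.1 p (hs hp), h3.2.1.mono hs, fun p hp => h3.2.2 p (hs hp)⟩
  have hsolv : IsFDESol m (Ioo 0 T ×ˢ Ω) (fun τ y => u τ (S y + y0)) := by
    refine ⟨fun p hp => h3.1 (p.1, S p.2 + y0) ⟨hp.1, hσΩ _ hp.2⟩, ?_, ?_⟩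
    · exact h3.2.1.comp hSc.contDiffOn (fun p hp => ⟨hp.1, hσΩ _ hp.2⟩)
    · intro p hp
      rw [h3.2.2 (p.1, S p.2 + y0) ⟨hp.1, hσΩ _ hp.2⟩]
      exact (spaceLap_isometry (f := fun y => u p.1 y ^ m) S y0 p.2
        ((fde_space h3 hp.1).contDiffAt (isOpen_ball.mem_nhds (hσΩ _ hp.2)))).symm
  have hxp : inner ℝ (x - x₀) e = n := by rw [hxe, inner_smul_left, hee]; simp
  have hcmp := comparison hm hΩo hKc hΩK ((lin_contDiff x₀ e c).mul (barrier_contDiff x₀ (R₀ ^ 2)))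
    ?_ ?_ ?_ hsolu hsolv ?_ ?_ ?_ ?_ ?_ t ht x ⟨hx, by
      simp only [mem_preimage, mem_Ioi, hxp]; linarith⟩
  · rwa [hσ, hxp, show 2 * (n - c) = n by rw [hc]; ring, ← hxe, sub_sub_cancel] at hcmp
  · intro y hy
    have e1 := mem_ball.1 hy.1
    rw [dist_eq_norm] at e1
    have e2 : c < inner ℝ (y - x₀) e := hy.2
    refine mul_pos (by linarith) ?_
    nlinarith [norm_nonneg (y - x₀)]
  · intro y hy hy'
    have e1 := mem_closedBall.1 hy.1
    have e2 : c ≤ inner ℝ (y - x₀) e := hy.2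
    by_cases hball : y ∈ ball x₀ R₀
    · have : inner ℝ (y - x₀) e = c := le_antisymm (not_lt.1 fun hh => hy' ⟨hball, hh⟩) e2
      rw [this]; simp
    · rw [mem_ball, dist_eq_norm, not_lt] at hball
      refine mul_nonpos_of_nonneg_of_nonpos (by linarith) ?_
      nlinarith [norm_nonneg (y - x₀)]
  · intro y hy
    rw [spaceLap_barrier2]
    have e2 : c < inner ℝ (y - x₀) e := hy.2
    have : (0 : ℝ) ≤ d := Nat.cast_nonneg d
    have : 0 ≤ (2 * (d : ℝ)) * (inner ℝ (y - x₀) e - c) := mul_nonneg (by linarith) (by linarith)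
    linarith
  · exact h2.mono (prod_mono le_rfl inter_subset_left)
  · exact h2.comp hSc.continuous.continuousOn (fun p hp => ⟨hp.1, hσK _ hp.2⟩)
  · intro τ hτ y hy
    exact h1 τ hτ y hy.1
  · intro y hy
    have e2 : c < inner ℝ (y - x₀) e := hy.2
    have e3 := real_inner_le_norm (y - x₀) e
    rw [hen, mul_one] at e3
    have : u 0 y = 0 := by
      rw [h4 y hy.1]
      by_contra hne
      have := mem_closedBall.1 (hsupp hne)
      rw [dist_eq_norm] at this
      linarith
    rw [this]
    exact h1 0 ⟨le_rfl, hT.le⟩ _ (hσK y (hΩK hy))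
  · intro τ hτ y hy hy'
    have e2 : c ≤ inner ℝ (y - x₀) e := hy.2
    by_cases hball : y ∈ ball x₀ R₀
    · have : inner ℝ (y - x₀) e = c := le_antisymm (not_lt.1 fun hh => hy' ⟨hball, hh⟩) e2
      rw [hσ, this]; simp
    · rw [hb τ hτ y hy.1 hball]
      exact h1 τ hτ _ (hσK y hy)

end

section
open MeasureTheory Metric Set Real Filter

theorem sT_bounds : ∃ C : ℝ, 0 < C ∧ (∀ y, |deriv smoothTransition y| ≤ C) ∧
    ∀ y, |deriv (deriv smoothTransition) y| ≤ C := by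
  have hs : ContDiff ℝ 2 smoothTransition := smoothTransition.contDiff
  have h1 : ContDiff ℝ 1 (deriv smoothTransition) :=
    ((contDiff_succ_iff_deriv (n := 1)).1 (by simpa [one_add_one_eq_two] using hs)).2.2
  have h2 : Continuous (deriv (deriv smoothTransition)) := h1.continuous_deriv le_rfl
  have hc : HasCompactSupport (deriv smoothTransition) := by
    refine HasCompactSupport.of_support_subset_isCompact (isCompact_Icc (a := (0 : ℝ)) (b := 1)) ?_
    intro y hy
    by_contra hn
    rw [mem_Icc, not_and_or, not_le, not_le] at hn
    refine hy ?_
    rcases hn with hn | hn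
    · have : smoothTransition =ᶠ[nhds y] fun _ => 0 := by
        filter_upwards [Iio_mem_nhds hn] with z hz
        exact smoothTransition.zero_of_nonpos (le_of_lt hz)
      rw [this.deriv_eq]; simp
    · exact sT_deriv_zero hn
  obtain ⟨C1, hC1⟩ := h1.continuous.bounded_above_of_compact_support hc
  obtain ⟨C2, hC2⟩ := h2.bounded_above_of_compact_support hc.deriv
  refine ⟨max (max C1 C2) 1, lt_of_lt_of_le one_pos (le_max_right _ _), fun y => ?_, fun y => ?_⟩
  · exact (hC1 y).trans ((le_max_left _ _).trans (le_max_left _ _))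
  · exact (hC2 y).trans ((le_max_right _ _).trans (le_max_left _ _))

noncomputable def cut {d : ℕ} (x₀ : EuclideanSpace ℝ (Fin d)) (r1 r2 : ℝ)
    (x : EuclideanSpace ℝ (Fin d)) : ℝ :=
  smoothTransition ((r2 ^ 2 - ‖x - x₀‖ ^ 2) / (r2 ^ 2 - r1 ^ 2))

theorem cut_contDiff {d : ℕ} (x₀ : EuclideanSpace ℝ (Fin d)) (r1 r2 : ℝ) :
    ContDiff ℝ 2 (cut x₀ r1 r2) :=
  smoothTransition.contDiff.comp ((barrier_contDiff x₀ _).div_const _)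

theorem cut_nonneg {d : ℕ} (x₀ : EuclideanSpace ℝ (Fin d)) (r1 r2 : ℝ) (x) : 0 ≤ cut x₀ r1 r2 x :=
  smoothTransition.nonneg _

theorem cut_le_one {d : ℕ} (x₀ : EuclideanSpace ℝ (Fin d)) (r1 r2 : ℝ) (x) : cut x₀ r1 r2 x ≤ 1 :=
  smoothTransition.le_one _

theorem cut_one {d : ℕ} (x₀ : EuclideanSpace ℝ (Fin d)) {r1 r2 : ℝ} (h1 : 0 ≤ r1) (h2 : r1 < r2)
    {x : EuclideanSpace ℝ (Fin d)} (hx : ‖x - x₀‖ ≤ r1) : cut x₀ r1 r2 x = 1 := by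
  refine smoothTransition.one_of_one_le ?_
  have : 0 < r2 ^ 2 - r1 ^ 2 := by nlinarith
  rw [le_div_iff₀ this]
  nlinarith [norm_nonneg (x - x₀)]

theorem cut_zero {d : ℕ} (x₀ : EuclideanSpace ℝ (Fin d)) {r1 r2 : ℝ} (h1 : 0 ≤ r1) (h2 : r1 < r2)
    {x : EuclideanSpace ℝ (Fin d)} (hx : r2 ≤ ‖x - x₀‖) : cut x₀ r1 r2 x = 0 := by
  refine smoothTransition.zero_of_nonpos ?_
  have : 0 < r2 ^ 2 - r1 ^ 2 := by nlinarith
  refine div_nonpos_of_nonpos_of_nonneg ?_ this.le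
  nlinarith [norm_nonneg (x - x₀)]

theorem cut_tsupport {d : ℕ} (x₀ : EuclideanSpace ℝ (Fin d)) {r1 r2 : ℝ} (h1 : 0 ≤ r1) (h2 : r1 < r2) :
    tsupport (cut x₀ r1 r2) ⊆ closedBall x₀ r2 := by
  refine closure_minimal (fun x hx => ?_) isClosed_closedBall
  by_contra hn
  rw [mem_closedBall, dist_eq_norm, not_le] at hn
  exact hx (cut_zero x₀ h1 h2 hn.le)

theorem cut_hcs {d : ℕ} (x₀ : EuclideanSpace ℝ (Fin d)) {r1 r2 : ℝ} (h1 : 0 ≤ r1) (h2 : r1 < r2) :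
    HasCompactSupport (cut x₀ r1 r2) :=
  (isCompact_closedBall x₀ r2).of_isClosed_subset (isClosed_tsupport _) (cut_tsupport x₀ h1 h2)

theorem cut_lap_zero {d : ℕ} (x₀ : EuclideanSpace ℝ (Fin d)) {r1 r2 : ℝ} (h1 : 0 ≤ r1) (h2 : r1 < r2)
    {x : EuclideanSpace ℝ (Fin d)} (hx : x ∈ ball x₀ r1) : spaceLap (cut x₀ r1 r2) x = 0 := by
  have : cut x₀ r1 r2 =ᶠ[nhds x] fun _ => 1 := by
    filter_upwards [isOpen_ball.mem_nhds hx] with y hy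
    rw [mem_ball, dist_eq_norm] at hy
    exact cut_one x₀ h1 h2 hy.le
  rw [spaceLap_congr this, spaceLap_const]

theorem cut_lap_bound (d : ℕ) : ∃ C : ℝ, 0 < C ∧ ∀ (x₀ : EuclideanSpace ℝ (Fin d)) (r1 r2 : ℝ),
    0 ≤ r1 → r1 < r2 → ∀ x, |spaceLap (cut x₀ r1 r2) x| ≤ C * (r2 - r1)⁻¹ ^ 2 := by
  obtain ⟨C, hC, hC1, hC2⟩ := sT_bounds
  refine ⟨C * (2 * d) + C * 4, by positivity, fun x₀ r1 r2 h1 h2 x => ?_⟩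
  have hs : ContDiff ℝ 2 smoothTransition := smoothTransition.contDiff
  have hs1 : ContDiff ℝ 1 (deriv smoothTransition) :=
    ((contDiff_succ_iff_deriv (n := 1)).1 (by simpa [one_add_one_eq_two] using hs)).2.2
  set D := r2 ^ 2 - r1 ^ 2 with hD
  have hD0 : 0 < D := by rw [hD]; nlinarith
  have hr : 0 < r2 - r1 := by linarith
  by_cases hx : x ∈ tsupport (cut x₀ r1 r2)
  swap
  · rw [spaceLap_zero_of_notMem hx, abs_zero]; positivity
  have hxr : ‖x - x₀‖ ≤ r2 := by
    have := cut_tsupport x₀ h1 h2 hx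
    rwa [mem_closedBall, dist_eq_norm] at this
  have hdiv : ∀ s : ℝ, HasDerivAt (fun s : ℝ => s / D) (1 / D) s := fun s =>
    (hasDerivAt_id s).div_const D
  have key := spaceLap_comp (h := fun s => smoothTransition (s / D))
    (h1 := fun s => deriv smoothTransition (s / D) * (1 / D))
    (h2 := fun s => deriv (deriv smoothTransition) (s / D) * (1 / D) * (1 / D))
    (f := fun x => r2 ^ 2 - ‖x - x₀‖ ^ 2) (x := x)
    (fun s => HasDerivAt.comp (h₂ := smoothTransition) s (hs.differentiable (by simp) (s / D)).hasDerivAt (hdiv s))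
    (fun s => (HasDerivAt.comp (h₂ := deriv smoothTransition) s (hs1.differentiable (by simp) (s / D)).hasDerivAt
      (hdiv s)).mul_const _)
    (barrier_contDiff x₀ _).contDiffAt
  have hsum : ∑ i, (fderiv ℝ (fun x => r2 ^ 2 - ‖x - x₀‖ ^ 2) x (EuclideanSpace.single i 1)) ^ 2 =
      4 * ‖x - x₀‖ ^ 2 := by
    rw [← sum_q]
    refine Finset.sum_congr rfl fun i _ => ?_
    rw [fderiv_barrier, fderiv_q]; ring
  have hkey : spaceLap (cut x₀ r1 r2) x =
      deriv smoothTransition ((r2 ^ 2 - ‖x - x₀‖ ^ 2) / D) * (1 / D) * (-(2 * d)) +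
      deriv (deriv smoothTransition) ((r2 ^ 2 - ‖x - x₀‖ ^ 2) / D) * (1 / D) * (1 / D) *
        (4 * ‖x - x₀‖ ^ 2) := by
    rw [spaceLap_barrier, hsum] at key
    exact key
  rw [hkey]
  set A := deriv smoothTransition ((r2 ^ 2 - ‖x - x₀‖ ^ 2) / D)
  set B := deriv (deriv smoothTransition) ((r2 ^ 2 - ‖x - x₀‖ ^ 2) / D)
  have hA : |A| ≤ C := hC1 _
  have hB : |B| ≤ C := hC2 _
  have i1 : 1 / D ≤ (r2 - r1)⁻¹ ^ 2 := by
    rw [inv_pow, ← one_div]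
    exact one_div_le_one_div_of_le (by positivity) (by rw [hD]; nlinarith)
  have i2 : 1 / D * (1 / D) * ‖x - x₀‖ ^ 2 ≤ (r2 - r1)⁻¹ ^ 2 := by
    have : ‖x - x₀‖ / D ≤ (r2 - r1)⁻¹ := by
      rw [← one_div, div_le_div_iff₀ hD0 hr, hD]
      nlinarith
    calc 1 / D * (1 / D) * ‖x - x₀‖ ^ 2 = (‖x - x₀‖ / D) ^ 2 := by ring
      _ ≤ _ := pow_le_pow_left₀ (by positivity) this 2
  refine (abs_add_le _ _).trans ?_
  rw [add_mul]
  refine add_le_add ?_ ?_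
  · rw [mul_assoc, abs_mul, abs_mul, abs_neg, abs_of_pos (one_div_pos.2 hD0),
      abs_of_nonneg (by positivity : (0 : ℝ) ≤ 2 * d)]
    calc |A| * (1 / D * (2 * d)) ≤ C * ((r2 - r1)⁻¹ ^ 2 * (2 * d)) := by
          gcongr
      _ = _ := by ring
  · have : B * (1 / D) * (1 / D) * (4 * ‖x - x₀‖ ^ 2) = B * (4 * (1 / D * (1 / D) * ‖x - x₀‖ ^ 2)) := by
      ring
    rw [this, abs_mul, abs_of_nonneg (by positivity : 0 ≤ 4 * (1 / D * (1 / D) * ‖x - x₀‖ ^ 2))]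
    calc |B| * (4 * (1 / D * (1 / D) * ‖x - x₀‖ ^ 2)) ≤ C * (4 * (r2 - r1)⁻¹ ^ 2) := by
          gcongr
      _ = _ := by ring

theorem mass {d : ℕ} {m R₀ T : ℝ} (hm : 0 < m) (hT : 0 < T) (hR0 : 0 < R₀)
    {x₀ : EuclideanSpace ℝ (Fin d)}
    {u : ℝ → EuclideanSpace ℝ (Fin d) → ℝ} {u₀ : EuclideanSpace ℝ (Fin d) → ℝ}
    (h : IsDirichletSol m x₀ R₀ T u u₀) {t : ℝ} (ht : t ∈ Icc 0 T) :
    ∫ x in ball x₀ R₀, u t x ≤ ∫ x in ball x₀ R₀, u 0 x := by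
  have hb := bdry_zero hT h
  obtain ⟨h1, h2, h3, h4, h5, h6, h7⟩ := h
  have hIK : IsCompact (Icc 0 T ×ˢ closedBall x₀ R₀) := isCompact_Icc.prod (isCompact_closedBall _ _)
  have hct : ∀ τ ∈ Icc 0 T, ContinuousOn (fun x => u τ x) (closedBall x₀ R₀) := fun τ hτ =>
    h2.comp (f := fun x => (τ, x)) (by fun_prop) (fun x hx => ⟨hτ, hx⟩)
  have hit : ∀ τ ∈ Icc 0 T, IntegrableOn (fun x => u τ x) (ball x₀ R₀) := fun τ hτ =>
    ((hct τ hτ).integrableOn_compact (isCompact_closedBall _ _)).mono_set ball_subset_closedBall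
  have h0I : (0 : ℝ) ∈ Icc 0 T := ⟨le_rfl, hT.le⟩
  have main : ∀ η > 0, (∫ x in ball x₀ R₀, u t x) - η * (volume (ball x₀ R₀)).toReal ≤
      ∫ x in ball x₀ R₀, u 0 x := by
    intro η hη
    obtain ⟨ρ, hρ0, hρ, hρu⟩ : ∃ ρ, 0 ≤ ρ ∧ ρ < R₀ ∧ ∀ τ ∈ Icc 0 T, ∀ x ∈ closedBall x₀ R₀,
        ρ < ‖x - x₀‖ → u τ x < η := by
      set F := (Icc 0 T ×ˢ closedBall x₀ R₀) ∩
        (fun p : ℝ × EuclideanSpace ℝ (Fin d) => u p.1 p.2) ⁻¹' Ici η with hF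
      have hcl : IsCompact F :=
        hIK.of_isClosed_subset (h2.preimage_isClosed_of_isClosed hIK.isClosed isClosed_Ici)
          inter_subset_left
      rcases Set.eq_empty_or_nonempty F with he | hne
      · refine ⟨0, le_rfl, hR0, fun τ hτ x hx _ => ?_⟩
        by_contra hn
        have : (τ, x) ∈ F := ⟨⟨hτ, hx⟩, not_lt.1 hn⟩
        rw [he] at this
        exact this
      · have hcq : Continuous fun p : ℝ × EuclideanSpace ℝ (Fin d) => ‖p.2 - x₀‖ := by fun_prop
        obtain ⟨p, hp, hmax⟩ := hcl.exists_isMaxOn hne hcq.continuousOn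
        refine ⟨‖p.2 - x₀‖, norm_nonneg _, ?_, fun τ hτ x hx hlt => ?_⟩
        · by_contra hn
          have e1 := hb p.1 hp.1.1 p.2 hp.1.2 (by rwa [mem_ball, dist_eq_norm])
          have e2 : η ≤ u p.1 p.2 := hp.2
          linarith
        · by_contra hn
          have : ‖x - x₀‖ ≤ ‖p.2 - x₀‖ := hmax (a := (τ, x)) ⟨⟨hτ, hx⟩, not_lt.1 hn⟩
          linarith
    set r1 := (2 * ρ + R₀) / 3 with hr1
    set r2 := (ρ + 2 * R₀) / 3 with hr2
    have hr10 : 0 ≤ r1 := by positivity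
    have hr12 : r1 < r2 := by linarith
    have hr2R : r2 < R₀ := by linarith
    have hρr : ρ < r1 := by linarith
    have hts : tsupport (cut x₀ r1 r2) ⊆ ball x₀ R₀ :=
      (cut_tsupport x₀ hr10 hr12).trans (closedBall_subset_ball hr2R)
    have hsub : Icc 0 T ×ˢ tsupport (cut x₀ r1 r2) ⊆ Icc 0 T ×ˢ closedBall x₀ R₀ :=
      prod_mono le_rfl (hts.trans ball_subset_closedBall)
    have hcon := contr (B := 0) hm isOpen_ball h3 (const_sol hη) (cut_contDiff x₀ r1 r2)
      (cut_hcs x₀ hr10 hr12) hts (cut_nonneg x₀ r1 r2) (h2.mono hsub) continuousOn_const le_rfl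
      ht.1 ht.2 (by
        intro τ hτ
        refine le_of_eq (integral_eq_zero_of_ae (Eventually.of_forall fun x => ?_))
        have hτI : τ ∈ Icc 0 T := ⟨hτ.1.le, hτ.2.le.trans ht.2⟩
        simp only [Pi.zero_apply]
        by_cases hx : x ∈ ball x₀ r1
        · rw [cut_lap_zero x₀ hr10 hr12 hx, mul_zero]
        by_cases hx' : x ∈ tsupport (cut x₀ r1 r2)
        · have hxb := ball_subset_closedBall (hts hx')
          rw [mem_ball, dist_eq_norm, not_lt] at hx
          have := hρu τ hτI x hxb (by linarith)
          have := Real.rpow_le_rpow (h1 τ hτI x hxb) this.le hm.le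
          rw [max_eq_right (by linarith), zero_mul]
        · rw [spaceLap_zero_of_notMem hx', mul_zero])
    have hswap : ∀ τ, ∫ x, max (u τ x - η) 0 * cut x₀ r1 r2 x =
        ∫ x in ball x₀ R₀, max (u τ x - η) 0 * cut x₀ r1 r2 x := by
      intro τ
      rw [setIntegral_eq_integral_of_forall_compl_eq_zero]
      intro x hx
      rw [image_eq_zero_of_notMem_tsupport (fun hh => hx (hts hh)), mul_zero]
    have hint : ∀ τ ∈ Icc 0 T, IntegrableOn (fun x => max (u τ x - η) 0 * cut x₀ r1 r2 x)
        (ball x₀ R₀) := fun τ hτ =>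
      (((ContinuousOn.sup ((hct τ hτ).sub continuousOn_const) continuousOn_const).mul
        (cut_contDiff x₀ r1 r2).continuous.continuousOn).integrableOn_compact
          (isCompact_closedBall _ _)).mono_set ball_subset_closedBall
    have e1 : (∫ x in ball x₀ R₀, u t x) - η * (volume (ball x₀ R₀)).toReal ≤
        ∫ x, max (u t x - η) 0 * cut x₀ r1 r2 x := by
      have e0 : η * (volume (ball x₀ R₀)).toReal = ∫ x in ball x₀ R₀, η := by
        rw [setIntegral_const]; simp [Measure.real, mul_comm]
      have hic : IntegrableOn (fun _ : EuclideanSpace ℝ (Fin d) => η) (ball x₀ R₀) :=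
        integrableOn_const measure_ball_lt_top.ne
      rw [e0, hswap, ← integral_sub (hit t ht) hic]
      refine setIntegral_mono_on ((hit t ht).sub hic) (hint t ht) measurableSet_ball ?_
      intro x hx
      by_cases hxρ : ‖x - x₀‖ ≤ r1
      · rw [cut_one x₀ hr10 hr12 hxρ, mul_one]
        exact le_max_left _ _
      · have := hρu t ht x (ball_subset_closedBall hx) (by linarith)
        have := mul_nonneg (le_max_right (u t x - η) 0) (cut_nonneg x₀ r1 r2 x)
        linarith
    have e2 : ∫ x, max (u 0 x - η) 0 * cut x₀ r1 r2 x ≤ ∫ x in ball x₀ R₀, u 0 x := by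
      rw [hswap]
      refine setIntegral_mono_on (hint 0 h0I) (hit 0 h0I) measurableSet_ball ?_
      intro x hx
      have e3 := h1 0 h0I x (ball_subset_closedBall hx)
      have e4 : max (u 0 x - η) 0 ≤ u 0 x := max_le (by linarith) e3
      exact (mul_le_of_le_one_right (le_max_right _ _) (cut_le_one x₀ r1 r2 x)).trans e4
    linarith
  have hlim : Tendsto (fun η : ℝ => (∫ x in ball x₀ R₀, u t x) - η * (volume (ball x₀ R₀)).toReal)
      (nhdsWithin 0 (Ioi 0))
      (nhds ((∫ x in ball x₀ R₀, u t x) - 0 * (volume (ball x₀ R₀)).toReal)) :=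
    Tendsto.mono_left (Continuous.tendsto (by fun_prop) 0) nhdsWithin_le_nhds
  rw [zero_mul, sub_zero] at hlim
  exact le_of_tendsto hlim (eventually_nhdsWithin_of_forall fun ε hε => main ε hε)

theorem mass0 {d : ℕ} (hd : 1 ≤ d) {m R R₀ T : ℝ} (hRR : R < R₀)
    {x₀ : EuclideanSpace ℝ (Fin d)}
    {u : ℝ → EuclideanSpace ℝ (Fin d) → ℝ} {u₀ : EuclideanSpace ℝ (Fin d) → ℝ}
    (hsupp : Function.support u₀ ⊆ closedBall x₀ R) (hR : 0 < R)
    (h : IsDirichletSol m x₀ R₀ T u u₀) :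
    ∫ x in ball x₀ R₀, u 0 x = ∫ x in ball x₀ R, u₀ x := by
  obtain ⟨h1, h2, h3, h4, h5, h6, h7⟩ := h
  have : Nonempty (Fin d) := ⟨⟨0, hd⟩⟩
  rw [setIntegral_congr_fun measurableSet_ball (g := u₀) (fun x hx => h4 x hx)]
  have e1 : ∫ x in ball x₀ R₀, u₀ x = ∫ x in closedBall x₀ R, u₀ x := by
    rw [setIntegral_eq_of_subset_of_forall_sdiff_eq_zero measurableSet_ball
      (closedBall_subset_ball hRR)]
    intro x hx
    by_contra hn
    exact hx.2 (hsupp hn)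
  rw [e1]
  refine setIntegral_congr_set ?_
  rw [← ball_union_sphere]
  refine union_ae_eq_left_of_ae_eq_empty ?_
  exact ae_eq_empty.2 (Measure.addHaar_sphere _ _ _)

end

section
open MeasureTheory Metric Set Real Filter

theorem annulus_pos {d : ℕ} (hd : 1 ≤ d) {R R₀ : ℝ} (hR : 0 < R) (hRR : 2 * R < R₀)
    (x₀ : EuclideanSpace ℝ (Fin d)) :
    0 < (volume (ball x₀ R₀ \ ball x₀ (2 * R))).toReal := by
  have hfin : volume (ball x₀ R₀ \ ball x₀ (2 * R)) ≠ ⊤ :=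
    ((measure_mono sdiff_subset).trans_lt measure_ball_lt_top).ne
  refine ENNReal.toReal_pos (ne_of_gt ?_) hfin
  have hO : IsOpen (ball x₀ R₀ \ closedBall x₀ (2 * R)) := isOpen_ball.sdiff isClosed_closedBall
  have hne : (ball x₀ R₀ \ closedBall x₀ (2 * R)).Nonempty := by
    refine ⟨x₀ + EuclideanSpace.single ⟨0, hd⟩ ((2 * R + R₀) / 2), ?_, ?_⟩
    · rw [mem_ball, dist_eq_norm, add_sub_cancel_left, EuclideanSpace.norm_single,
        Real.norm_of_nonneg (by linarith)]
      linarith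
    · rw [mem_closedBall, dist_eq_norm, add_sub_cancel_left, EuclideanSpace.norm_single,
        Real.norm_of_nonneg (by linarith), not_le]
      linarith
  exact (hO.measure_pos volume hne).trans_le
    (measure_mono (sdiff_subset_sdiff_right ball_subset_closedBall))

theorem tangent {m α y : ℝ} (hm : 0 < m) (hm1 : m < 1) (hα : 0 < α) (hy : 0 ≤ y) :
    y ^ m ≤ α ^ m * (1 - m) + α ^ m * m / α * y := by
  have h1 : (1 + (y / α - 1)) ^ m ≤ 1 + m * (y / α - 1) :=
    rpow_one_add_le_one_add_mul_self (by have : 0 ≤ y / α := by positivity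
                                         linarith) hm.le hm1.le
  have h2 : y ^ m = α ^ m * (1 + (y / α - 1)) ^ m := by
    rw [add_sub_cancel, Real.div_rpow hy hα.le]
    have : 0 < α ^ m := Real.rpow_pos_of_pos hα m
    field_simp
  have h3 : 0 < α ^ m := Real.rpow_pos_of_pos hα m
  rw [h2]
  refine (mul_le_mul_of_nonneg_left h1 h3.le).trans (le_of_eq ?_)
  field_simp
  ring

theorem minimal_aux
    (d : ℕ) (hd : 1 ≤ d) :
    ∃ a b : ℝ, 0 < a ∧ 0 < b ∧
      ∀ (m : ℝ), 0 < m → m < 1 →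
      ∀ (x₀ : EuclideanSpace ℝ (Fin d)) (R R₀ T : ℝ), 0 < R → 2 * R < R₀ → 0 < T →
      ∀ (u : ℝ → EuclideanSpace ℝ (Fin d) → ℝ) (u₀ : EuclideanSpace ℝ (Fin d) → ℝ),
        (∀ x, 0 ≤ u₀ x) →
        (Function.support u₀ ⊆ closedBall x₀ R) →
        IsDirichletSol m x₀ R₀ T u u₀ →
        T ≥ 2 * (a * (R₀ - 2 * R) ^ 2 *
          ((∫ x in ball x₀ R, u₀ x) /
            (volume (ball x₀ R₀ \ ball x₀ (2 * R))).toReal) ^ (1 - m)) ∧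
        ∀ t : ℝ, 0 < t →
          t ≤ a * (R₀ - 2 * R) ^ 2 *
            ((∫ x in ball x₀ R, u₀ x) /
              (volume (ball x₀ R₀ \ ball x₀ (2 * R))).toReal) ^ (1 - m) →
          u t x₀ ^ m ≥
            b * (R₀ - 2 * R) ^ 2 * (volume (ball x₀ R₀ \ ball x₀ (2 * R))).toReal⁻¹ *
              T ^ (-(1 / (1 - m))) * t ^ (m / (1 - m)) * ∫ x in ball x₀ R, u₀ x := by
  obtain ⟨C', hC', hcut⟩ := cut_lap_bound d
  set C := 16 * C' with hCdef
  have hC : 0 < C := by positivity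
  refine ⟨1 / (2 * C), 1 / (2 * C), by positivity, by positivity, ?_⟩
  intro m hm hm1 x₀ R R₀ T hR hRR hT u u₀ hu₀ hsupp hsol
  have hV := annulus_pos hd hR hRR x₀
  set A := ball x₀ R₀ \ ball x₀ (2 * R) with hA
  set V := (volume A).toReal with hVdef
  set ρ := R₀ - 2 * R with hρ
  have hρ0 : 0 < ρ := by linarith
  have hM0 : 0 ≤ ∫ x in ball x₀ R, u₀ x := integral_nonneg fun x => hu₀ x
  have hmass0 := mass0 hd (by linarith) hsupp hR hsol
  have hmass := fun t ht => mass (t := t) hm hT (by linarith) hsol ht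
  rw [hmass0] at hmass
  have hben := fun lam t hl ht hlt x hx => benilan (lam := lam) (t := t) (x := x) hm hm1 hT hsol hl ht hlt hx
  have hal := fun t ht x hx hx2 => aleks (t := t) (x := x) hm hT hR hsupp hsol ht hx hx2
  have hb := bdry_zero hT hsol
  obtain ⟨h1, h2, h3, h4, h5, h6, h7⟩ := hsol
  set M := ∫ x in ball x₀ R, u₀ x with hM
  rcases hM0.eq_or_lt with hMz | hMpos
  · rw [← hMz, zero_div, Real.zero_rpow (by linarith)]
    simp only [mul_zero]
    exact ⟨hT.le, fun t ht ht' => absurd ht' (not_le.2 ht)⟩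
  set α := M / V with hα
  have hα0 : 0 < α := by positivity
  have hαV : α * V = M := by rw [hα]; field_simp
  have hαm : 0 < α ^ m := Real.rpow_pos_of_pos hα0 m
  have hα1 : α ^ (1 - m) * α ^ m = α := by
    rw [← Real.rpow_add hα0]; simp
  set r1 := 2 * R + ρ / 2 with hr1
  set r2 := 2 * R + 3 * ρ / 4 with hr2
  have hr10 : 0 ≤ r1 := by positivity
  have hr12 : r1 < r2 := by linarith
  have hr2R : r2 < R₀ := by linarith
  set φ := cut x₀ r1 r2 with hφ
  have hφc : ContDiff ℝ 2 φ := cut_contDiff x₀ r1 r2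
  have hφs : HasCompactSupport φ := cut_hcs x₀ hr10 hr12
  have hts : tsupport φ ⊆ ball x₀ R₀ :=
    (cut_tsupport x₀ hr10 hr12).trans (closedBall_subset_ball hr2R)
  have hsub : Icc 0 T ×ˢ tsupport φ ⊆ Icc 0 T ×ˢ closedBall x₀ R₀ :=
    prod_mono le_rfl (hts.trans ball_subset_closedBall)
  have hφL : ∀ x, |spaceLap φ x| ≤ C / ρ ^ 2 := by
    intro x
    refine (hcut x₀ r1 r2 hr10 hr12 x).trans (le_of_eq ?_)
    have : r2 - r1 = ρ / 4 := by rw [hr1, hr2]; ring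
    rw [this, hCdef]
    field_simp
    norm_num
  have hφA : ∀ x, x ∉ A → spaceLap φ x = 0 := by
    intro x hx
    by_cases hxb : x ∈ ball x₀ R₀
    · have : x ∈ ball x₀ (2 * R) := by
        by_contra hn
        exact hx ⟨hxb, hn⟩
      exact cut_lap_zero x₀ hr10 hr12 (ball_subset_ball (by linarith) this)
    · exact spaceLap_zero_of_notMem fun hh => hxb (hts hh)
  have hAm : MeasurableSet A := measurableSet_ball.diff measurableSet_ball
  have hAfin : volume A ≠ ⊤ := ((measure_mono sdiff_subset).trans_lt measure_ball_lt_top).ne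
  have hAball : A ⊆ ball x₀ R₀ := sdiff_subset
  have hct : ∀ τ ∈ Icc 0 T, ContinuousOn (fun x => u τ x) (closedBall x₀ R₀) := fun τ hτ =>
    h2.comp (f := fun x => (τ, x)) (by fun_prop) (fun x hx => ⟨hτ, hx⟩)
  have hit : ∀ τ ∈ Icc 0 T, IntegrableOn (fun x => u τ x) (ball x₀ R₀) := fun τ hτ =>
    ((hct τ hτ).integrableOn_compact (isCompact_closedBall _ _)).mono_set ball_subset_closedBall
  have hitm : ∀ τ ∈ Icc 0 T, IntegrableOn (fun x => u τ x ^ m) A := fun τ hτ =>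
    (((hct τ hτ).rpow_const fun _ _ => Or.inr hm.le).integrableOn_compact
      (isCompact_closedBall _ _)).mono_set (hAball.trans ball_subset_closedBall)
  have h0I : (0 : ℝ) ∈ Icc 0 T := ⟨le_rfl, hT.le⟩
  have hTI : T ∈ Icc 0 T := ⟨hT.le, le_rfl⟩
  have hconstA : ∀ c : ℝ, ∫ _ in A, c = c * V := by
    intro c
    rw [setIntegral_const]; simp [Measure.real, hVdef, mul_comm]
  have hconstI : ∀ c : ℝ, IntegrableOn (fun _ : EuclideanSpace ℝ (Fin d) => c) A :=
    fun c => integrableOn_const hAfin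
  -- generic flux bound
  have hgen : ∀ τ ∈ Ioo 0 T, ∀ G, ∫ x in A, u τ x ^ m ≤ G →
      - ∫ x, u τ x ^ m * spaceLap φ x ≤ C / ρ ^ 2 * G := by
    intro τ hτ G hG
    have hτI : τ ∈ Icc 0 T := ⟨hτ.1.le, hτ.2.le⟩
    have e1 : ∫ x, u τ x ^ m * spaceLap φ x = ∫ x in A, u τ x ^ m * spaceLap φ x := by
      rw [setIntegral_eq_integral_of_forall_compl_eq_zero]
      intro x hx
      rw [hφA x hx, mul_zero]
    rw [e1, ← integral_neg]
    refine le_trans ?_ (mul_le_mul_of_nonneg_left hG (by positivity))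
    rw [← integral_const_mul]
    refine setIntegral_mono_on ?_ ((hitm τ hτI).const_mul _) hAm ?_
    · exact (integ_lap hφs hφc ((fde_space h3 hτ).continuousOn.mono hts)).neg.integrableOn
    · intro x hx
      have e2 : 0 ≤ u τ x ^ m :=
        Real.rpow_nonneg (h1 τ hτI x (ball_subset_closedBall (hAball hx))) m
      have e3 := (abs_le.1 (hφL x)).1
      nlinarith
  have hflux := fun (s t B : ℝ) hs0 hst htT hB => flux (s := s) (t := t) (B := B) hm isOpen_ball h3
    hφc hφs hts (cut_nonneg x₀ r1 r2) (h2.mono hsub) hs0 hst htT hB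
  -- Jensen type bound
  have hJ : ∀ τ ∈ Ioo 0 T, ∫ x in A, u τ x ^ m ≤ V * α ^ m := by
    intro τ hτ
    have hτI : τ ∈ Icc 0 T := ⟨hτ.1.le, hτ.2.le⟩
    have e1 : ∫ x in A, u τ x ^ m ≤ ∫ x in A, (α ^ m * (1 - m) + α ^ m * m / α * u τ x) := by
      refine setIntegral_mono_on (hitm τ hτI) ?_ hAm ?_
      · exact (hconstI _).add (((hit τ hτI).mono_set hAball).const_mul _)
      · intro x hx
        exact tangent hm hm1 hα0 (h1 τ hτI x (ball_subset_closedBall (hAball hx)))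
    have e2 : ∫ x in A, (α ^ m * (1 - m) + α ^ m * m / α * u τ x) =
        α ^ m * (1 - m) * V + α ^ m * m / α * ∫ x in A, u τ x := by
      rw [integral_add (hconstI _) (((hit τ hτI).mono_set hAball).const_mul _), hconstA,
        integral_const_mul]
    have e3 : ∫ x in A, u τ x ≤ M := by
      refine le_trans ?_ (hmass τ hτI)
      refine setIntegral_mono_set (hit τ hτI) ?_ (Eventually.of_forall hAball)
      exact (ae_restrict_iff' measurableSet_ball).2 (Eventually.of_forall fun x hx =>
        h1 τ hτI x (ball_subset_closedBall hx))
    rw [e2] at e1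
    refine e1.trans ?_
    have e4 : α ^ m * m / α * ∫ x in A, u τ x ≤ α ^ m * m / α * M :=
      mul_le_mul_of_nonneg_left e3 (by positivity)
    have e5 : α ^ m * m / α * M = α ^ m * m * V := by rw [← hαV]; field_simp
    linarith
  have hu0φ : ∫ x, u 0 x * φ x = M := by
    rw [← hmass0]
    symm
    have e1 : ∫ x, u 0 x * φ x = ∫ x in ball x₀ R₀, u 0 x * φ x := by
      rw [setIntegral_eq_integral_of_forall_compl_eq_zero]
      intro x hx
      rw [image_eq_zero_of_notMem_tsupport (fun hh => hx (hts hh)), mul_zero]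
    rw [e1]
    refine setIntegral_congr_fun measurableSet_ball fun x hx => ?_
    beta_reduce
    by_cases hz : u₀ x = 0
    · rw [h4 x hx, hz, zero_mul]
    · have := mem_closedBall.1 (hsupp hz)
      rw [dist_eq_norm] at this
      rw [hφ, cut_one x₀ hr10 hr12 (by linarith), mul_one]
  have huTφ : ∫ x, u T x * φ x = 0 := by
    refine integral_eq_zero_of_ae (Eventually.of_forall fun x => ?_)
    simp only [Pi.zero_apply]
    by_cases hx : x ∈ tsupport φ
    · rw [h6 x (ball_subset_closedBall (hts hx)), zero_mul]
    · rw [image_eq_zero_of_notMem_tsupport hx, mul_zero]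
  have hT2 : T ≥ 2 * (1 / (2 * C) * ρ ^ 2 * α ^ (1 - m)) := by
    have e1 := hflux 0 T (C / ρ ^ 2 * (V * α ^ m)) le_rfl hT.le le_rfl
      (fun τ hτ => hgen τ hτ _ (hJ τ hτ))
    rw [hu0φ, huTφ, zero_add, sub_zero] at e1
    have e2 : α ^ (1 - m) * ρ ^ 2 ≤ T * C := by
      have e3 : α ^ (1 - m) * ρ ^ 2 * (α ^ m * V / ρ ^ 2) ≤ T * C * (α ^ m * V / ρ ^ 2) := by
        calc _ = (α ^ (1 - m) * α ^ m) * V := by field_simp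
          _ ≤ T * (C / ρ ^ 2 * (V * α ^ m)) := by rw [hα1, hαV]; exact e1
          _ = _ := by ring
      exact le_of_mul_le_mul_right e3 (by positivity)
    calc 2 * (1 / (2 * C) * ρ ^ 2 * α ^ (1 - m)) = α ^ (1 - m) * ρ ^ 2 / C := by field_simp
      _ ≤ T := by rw [div_le_iff₀ hC]; exact e2
  refine ⟨hT2, fun t ht htle => ?_⟩
  have htT : t < T := by linarith
  have htI : t ∈ Icc 0 T := ⟨ht.le, htT.le⟩
  have htO : t ∈ Ioo 0 T := ⟨ht, htT⟩
  have hhalf : M / 2 ≤ ∫ x, u t x * φ x := by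
    have e1 := hflux 0 t (C / ρ ^ 2 * (V * α ^ m)) le_rfl ht.le htT.le
      (fun τ hτ => hgen τ ⟨hτ.1, hτ.2.trans htT⟩ _ (hJ τ ⟨hτ.1, hτ.2.trans htT⟩))
    rw [hu0φ, sub_zero] at e1
    have e2 : t * (C / ρ ^ 2 * (V * α ^ m)) ≤ M / 2 := by
      calc t * (C / ρ ^ 2 * (V * α ^ m)) ≤
          (1 / (2 * C) * ρ ^ 2 * α ^ (1 - m)) * (C / ρ ^ 2 * (V * α ^ m)) :=
            mul_le_mul_of_nonneg_right htle (by positivity)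
        _ = (α ^ (1 - m) * α ^ m) * V / 2 := by field_simp
        _ = M / 2 := by rw [hα1, hαV]
    linarith
  have hx₀ : x₀ ∈ ball x₀ R₀ := mem_ball_self (by linarith)
  have hU : 0 ≤ u t x₀ := h1 t htI x₀ (ball_subset_closedBall hx₀)
  set U := u t x₀ ^ m with hUdef
  set q := m / (1 - m) with hq
  have h1m : 0 < 1 - m := by linarith
  have hB2 : ∀ τ ∈ Ioo t T, ∫ x in A, u τ x ^ m ≤ (T / t) ^ q * U * V := by
    intro τ hτ
    have hτI : τ ∈ Icc 0 T := ⟨ht.le.trans hτ.1.le, hτ.2.le⟩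
    rw [← hconstA]
    refine setIntegral_mono_on (hitm τ hτI) (hconstI _) hAm ?_
    intro x hx
    have e1 := hben (τ / t) t ((one_le_div ht).2 hτ.1.le) ht
      (by rw [div_mul_cancel₀ _ ht.ne']; exact hτ.2) x (hAball hx)
    rw [div_mul_cancel₀ _ ht.ne'] at e1
    have e2 := hal t htO x (hAball hx) hx.2
    have e3 : (τ / t) ^ (1 / (1 - m)) ≤ (T / t) ^ (1 / (1 - m)) := by
      refine Real.rpow_le_rpow (div_nonneg hτI.1 ht.le) ?_ (by positivity)
      exact div_le_div_of_nonneg_right hτ.2.le ht.le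
    have e4 : u τ x ≤ (T / t) ^ (1 / (1 - m)) * u t x₀ :=
      e1.trans (mul_le_mul e3 e2 (h1 t htI x (ball_subset_closedBall (hAball hx))) (by positivity))
    have e5 := Real.rpow_le_rpow (h1 τ hτI x (ball_subset_closedBall (hAball hx))) e4 hm.le
    rw [Real.mul_rpow (by positivity) hU, ← Real.rpow_mul (by positivity)] at e5
    rwa [show 1 / (1 - m) * m = q by rw [hq]; ring] at e5
  have e1 := hflux t T (C / ρ ^ 2 * ((T / t) ^ q * U * V)) ht.le htT.le le_rfl
      (fun τ hτ => hgen τ ⟨ht.trans hτ.1, hτ.2⟩ _ (hB2 τ hτ))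
  rw [huTφ, zero_add, Real.div_rpow hT.le ht.le] at e1
  have hTq : 0 < T ^ q := Real.rpow_pos_of_pos hT q
  have htq : 0 < t ^ q := Real.rpow_pos_of_pos ht q
  have hU0 : 0 ≤ U := Real.rpow_nonneg hU m
  have e2 : M / 2 ≤ T * (C / ρ ^ 2 * (T ^ q / t ^ q * U * V)) := by
    refine (hhalf.trans e1).trans (mul_le_mul_of_nonneg_right (by linarith) (by positivity))
  have e3 : T ^ (-(1 / (1 - m))) = (T * T ^ q)⁻¹ := by
    rw [Real.rpow_neg hT.le]
    congr 1
    have : 1 / (1 - m) = 1 + q := by rw [hq]; field_simp; ring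
    rw [this, Real.rpow_add hT, Real.rpow_one]
  rw [e3, ge_iff_le]
  calc 1 / (2 * C) * ρ ^ 2 * V⁻¹ * (T * T ^ q)⁻¹ * t ^ q * M
      = (1 / C * ρ ^ 2 * V⁻¹ * (T * T ^ q)⁻¹ * t ^ q) * (M / 2) := by ring
    _ ≤ (1 / C * ρ ^ 2 * V⁻¹ * (T * T ^ q)⁻¹ * t ^ q) * (T * (C / ρ ^ 2 * (T ^ q / t ^ q * U * V))) :=
        mul_le_mul_of_nonneg_left e2 (by positivity)
    _ = U := by field_simp

end

/-- **Theorem 2.2: positivity for the minimal Dirichlet problem.** -/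
theorem minimal_dirichlet_positivity
    (d : ℕ) (hd : 1 ≤ d) :
    ∃ a b : ℝ, 0 < a ∧ 0 < b ∧
      ∀ (m : ℝ), 0 < m → m < 1 →
      ∀ (x₀ : EuclideanSpace ℝ (Fin d)) (R R₀ T : ℝ), 0 < R → 2 * R < R₀ → 0 < T →
      ∀ (u : ℝ → EuclideanSpace ℝ (Fin d) → ℝ) (u₀ : EuclideanSpace ℝ (Fin d) → ℝ),
        (∀ x, 0 ≤ u₀ x) →
        (Function.support u₀ ⊆ closedBall x₀ R) →
        (∃ x, u₀ x ≠ 0) →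
        IsDirichletSol m x₀ R₀ T u u₀ →
        T ≥ 2 * (a * (R₀ - 2 * R) ^ 2 *
          ((∫ x in ball x₀ R, u₀ x) /
            (volume (ball x₀ R₀ \ ball x₀ (2 * R))).toReal) ^ (1 - m)) ∧
        ∀ t : ℝ, 0 < t →
          t ≤ a * (R₀ - 2 * R) ^ 2 *
            ((∫ x in ball x₀ R, u₀ x) /
              (volume (ball x₀ R₀ \ ball x₀ (2 * R))).toReal) ^ (1 - m) →
          u t x₀ ^ m ≥
            b * (R₀ - 2 * R) ^ 2 * (volume (ball x₀ R₀ \ ball x₀ (2 * R))).toReal⁻¹ *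
              T ^ (-(1 / (1 - m))) * t ^ (m / (1 - m)) * ∫ x in ball x₀ R, u₀ x := by
  obtain ⟨a, b, ha, hb, h⟩ := minimal_aux d hd
  exact ⟨a, b, ha, hb, fun m hm hm1 x₀ R R₀ T hR hRR hT u u₀ h0 hs _ hsol =>
    h m hm hm1 x₀ R R₀ T hR hRR hT u u₀ h0 hs hsol⟩
end

section
/- (Decay of the L^{p_c} norm and universal upper bound on the extinction time, Section 1.4.1.) Let d ≥ 3 and 0 < m < m_c, where m_c = (d−2)/d, and let p_c = d(1−m)/2. There exists a positive constant K depending only on m and d such that: if u solves the homogeneous Dirichlet problem for the FDE ∂ₜu = Δ(u^m) on a ball B ⊂ ℝ^d with nonnegative initial data u₀ ∈ L^{p_c}(B) and extinction time T, then for every 0 ≤ s ≤ t ≤ T: ‖u(t,·)‖_{L^{p_c}(B)}^{1−m} ≤ ‖u(s,·)‖_{L^{p_c}(B)}^{1−m} − K (t − s). In particular, T ≤ K^{−1} ‖u₀‖_{L^{p_c}(B)}^{1−m}. -/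
open MeasureTheory Metric Set Real

lemma aux_max_deriv (k : ℕ) (x : ℝ) :
    HasDerivAt (fun y : ℝ => (max y 0) ^ (k + 2)) ((k + 2 : ℝ) * (max x 0) ^ (k + 1)) x := by
  rcases lt_trichotomy x 0 with h | h | h
  · have h1 : (fun y : ℝ => (max y 0) ^ (k + 2)) =ᶠ[nhds x] fun _ => 0 := by
      filter_upwards [Iio_mem_nhds h] with y hy
      rw [max_eq_right (le_of_lt hy)]; simp
    rw [max_eq_right h.le]
    simpa using (hasDerivAt_const x (0 : ℝ)).congr_of_eventuallyEq h1
  · subst h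
    have hh : HasDerivAt (fun y : ℝ => y ^ (k + 2)) 0 0 := by
      simpa using hasDerivAt_pow (k + 2) (0 : ℝ)
    simp only [max_self, ne_eq, Nat.add_eq_zero_iff, one_ne_zero, and_false, not_false_eq_true,
      zero_pow, mul_zero]
    rw [hasDerivAt_iff_isLittleO] at hh ⊢
    refine Asymptotics.IsBigO.trans_isLittleO ?_ hh
    refine Asymptotics.IsBigO.of_bound 1 (Filter.Eventually.of_forall fun y => ?_)
    simp only [max_self, ne_eq, Nat.add_eq_zero_iff, OfNat.ofNat_ne_zero, and_false,
      not_false_eq_true, zero_pow, sub_zero, smul_eq_mul, mul_zero, one_mul, norm_pow]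
    gcongr
    rw [Real.norm_eq_abs, Real.norm_eq_abs, abs_of_nonneg (le_max_right y 0)]
    exact max_le (le_abs_self y) (abs_nonneg y)
  · have h1 : (fun y : ℝ => (max y 0) ^ (k + 2)) =ᶠ[nhds x] fun y => y ^ (k + 2) := by
      filter_upwards [Ioi_mem_nhds h] with y hy
      rw [max_eq_left (le_of_lt hy)]
    rw [max_eq_left h.le]
    have := (hasDerivAt_pow (k + 2) x).congr_of_eventuallyEq h1
    simpa using this

lemma aux_max_contDiff (k : ℕ) : ContDiff ℝ 1 (fun y : ℝ => (max y 0) ^ (k + 2)) := by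
  rw [contDiff_one_iff_deriv]
  refine ⟨fun x => (aux_max_deriv k x).differentiableAt, ?_⟩
  have : deriv (fun y : ℝ => (max y 0) ^ (k + 2)) =
      fun x => (k + 2 : ℝ) * (max x 0) ^ (k + 1) := by
    ext x; exact (aux_max_deriv k x).deriv
  rw [this]; fun_prop

/-- truncated power -/
noncomputable def tpow (ε a : ℝ) (k : ℕ) (u : ℝ) : ℝ := u ^ a * (max (1 - ε / u) 0) ^ k

lemma tpow_zero {ε a : ℝ} {k : ℕ} (hk : k ≠ 0) {u : ℝ} (hu : 0 < u) (h : u ≤ ε) :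
    tpow ε a k u = 0 := by
  have : 1 - ε / u ≤ 0 := by
    have : 1 ≤ ε / u := by rw [le_div_iff₀ hu]; linarith
    linarith
  simp [tpow, max_eq_right this, hk]

lemma tpow_nonneg {ε a : ℝ} {k : ℕ} {u : ℝ} (hu : 0 ≤ u) : 0 ≤ tpow ε a k u := by
  unfold tpow; positivity

lemma tpow_deriv (ε a : ℝ) (k : ℕ) {u : ℝ} (hu : 0 < u) :
    HasDerivAt (tpow ε a (k + 2))
      (a * tpow ε (a - 1) (k + 2) u + (k + 2) * ε * tpow ε (a - 2) (k + 1) u) u := by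
  have h1 : HasDerivAt (fun u : ℝ => 1 - ε / u) (ε / u ^ 2) u := by
    have := ((hasDerivAt_inv hu.ne').const_mul ε).const_sub 1
    refine this.congr_deriv ?_
    rw [div_eq_mul_inv]; ring
  have h2 := (aux_max_deriv k (1 - ε / u)).comp u h1
  have h3 := (Real.hasDerivAt_rpow_const (p := a) (Or.inl hu.ne')).mul h2
  refine h3.congr_deriv ?_
  simp only [tpow, Function.comp]
  have : u ^ (a - 2) = u ^ a / u ^ 2 := by
    rw [Real.rpow_sub hu]; norm_num
  rw [this]
  field_simp

lemma tpow_contDiffOn (ε a : ℝ) (k : ℕ) : ContDiffOn ℝ 1 (tpow ε a (k + 2)) (Ioi 0) := by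
  unfold tpow
  apply ContDiffOn.mul
  · intro x hx
    exact (Real.contDiffAt_rpow_const_of_ne (ne_of_gt hx)).contDiffWithinAt
  · apply (aux_max_contDiff k).comp_contDiffOn
    apply contDiffOn_const.sub
    apply contDiffOn_const.div contDiffOn_id
    intro x hx; exact ne_of_gt hx

lemma indicator_contDiff {E : Type*} [NormedAddCommGroup E] [NormedSpace ℝ E]
    {U K : Set E} (hU : IsOpen U) (hK : IsCompact K)
    (hKU : K ⊆ U) {f : E → ℝ} (hf : ContDiffOn ℝ 1 f U) (h0 : ∀ x ∈ U \ K, f x = 0) :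
    ContDiff ℝ 1 (U.indicator f) ∧ HasCompactSupport (U.indicator f) := by
  have hz : ∀ x ∉ K, U.indicator f x = 0 := by
    intro x hx
    by_cases hxU : x ∈ U
    · rw [indicator_of_mem hxU]; exact h0 x ⟨hxU, hx⟩
    · exact indicator_of_notMem hxU f
  refine ⟨?_, HasCompactSupport.intro hK hz⟩
  rw [contDiff_iff_contDiffAt]
  intro x
  by_cases hxU : x ∈ U
  · refine (hf.contDiffAt (hU.mem_nhds hxU)).congr_of_eventuallyEq ?_
    filter_upwards [hU.mem_nhds hxU] with y hy using indicator_of_mem hy f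
  · have hxK : x ∈ Kᶜ := fun h => hxU (hKU h)
    refine (contDiffAt_const (c := (0 : ℝ))).congr_of_eventuallyEq ?_
    filter_upwards [hK.isClosed.isOpen_compl.mem_nhds hxK] with y hy using hz y hy

lemma fderiv_indicator {E : Type*} [NormedAddCommGroup E] [NormedSpace ℝ E]
    {U : Set E} (hU : IsOpen U) {f : E → ℝ} {x : E} (hx : x ∈ U) :
    fderiv ℝ (U.indicator f) x = fderiv ℝ f x := by
  apply Filter.EventuallyEq.fderiv_eq
  filter_upwards [hU.mem_nhds hx] with y hy using indicator_of_mem hy f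

lemma integrableOn_cpt {E : Type*} [NormedAddCommGroup E] [NormedSpace ℝ E]
    [FiniteDimensional ℝ E] [MeasureSpace E] [BorelSpace E]
    [IsFiniteMeasureOnCompacts (volume : Measure E)]
    {U K : Set E} (hU : IsOpen U) (hK : IsCompact K)
    (hKU : K ⊆ U) {f : E → ℝ} (hf : ContinuousOn f U) (h0 : ∀ x ∈ U \ K, f x = 0) :
    IntegrableOn f U := by
  have h1 : IntegrableOn f K := (hf.mono hKU).integrableOn_compact hK
  have h2 : IntegrableOn f (U \ K) := by
    refine (integrableOn_zero (α := E) (ε' := ℝ)).congr_fun (fun x hx => (h0 x hx).symm) ?_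
    exact hU.measurableSet.diff hK.measurableSet
  have := h1.union h2
  rwa [union_sdiff_cancel hKU] at this

lemma integral_fderiv_zero {E : Type*} [NormedAddCommGroup E] [NormedSpace ℝ E]
    [FiniteDimensional ℝ E] [MeasureSpace E] [BorelSpace E]
    [(volume : Measure E).IsAddHaarMeasure]
    {U K : Set E} (hU : IsOpen U) (hK : IsCompact K)
    (hKU : K ⊆ U) {f : E → ℝ} (hf : ContDiffOn ℝ 1 f U) (h0 : ∀ x ∈ U \ K, f x = 0) (e : E) :
    IntegrableOn (fun x => fderiv ℝ f x e) U ∧ ∫ x in U, fderiv ℝ f x e = 0 := by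
  obtain ⟨hc, hs⟩ := indicator_contDiff hU hK hKU hf h0
  set F := U.indicator f
  have hcont : Continuous (fun x => fderiv ℝ F x e) :=
    (hc.continuous_fderiv one_ne_zero).clm_apply continuous_const
  have hsup : HasCompactSupport (fun x => fderiv ℝ F x e) := hs.fderiv_apply ℝ e
  have hint : Integrable (fun x => fderiv ℝ F x e) := hcont.integrable_of_hasCompactSupport hsup
  have heq : EqOn (fun x => fderiv ℝ F x e) (fun x => fderiv ℝ f x e) U := by
    intro x hx
    simp only [F, fderiv_indicator hU hx]
  refine ⟨hint.integrableOn.congr_fun heq hU.measurableSet, ?_⟩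
  rw [← setIntegral_congr_fun hU.measurableSet heq]
  have hz : ∀ x ∉ U, fderiv ℝ F x e = 0 := by
    intro x hx
    have hxK : x ∈ Kᶜ := fun h => hx (hKU h)
    have : F =ᶠ[nhds x] fun _ => 0 := by
      filter_upwards [hK.isClosed.isOpen_compl.mem_nhds hxK] with y hy
      by_cases hyU : y ∈ U
      · simp only [F, indicator_of_mem hyU]; exact h0 y ⟨hyU, hy⟩
      · exact indicator_of_notMem hyU f
    rw [this.fderiv_eq]; simp
  rw [setIntegral_eq_integral_of_forall_compl_eq_zero hz]
  have := integral_mul_fderiv_eq_neg_fderiv_mul_of_integrable (μ := (volume : Measure E))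
    (f := fun _ : E => (1 : ℝ)) (g := F) (v := e) (by simp) (by simpa using hint)
    (by simpa using hc.continuous.integrable_of_hasCompactSupport hs)
    (fun x _ => differentiableAt_const _) (fun x _ => hc.differentiable one_ne_zero x)
  simpa using this

set_option maxHeartbeats 1000000 in
lemma sobolev_ball (d : ℕ) (hd : 3 ≤ d) : ∃ C : ℝ, 0 < C ∧
    ∀ (U K : Set (EuclideanSpace ℝ (Fin d))), IsOpen U → IsCompact K → K ⊆ U →
    ∀ f : EuclideanSpace ℝ (Fin d) → ℝ, ContDiffOn ℝ 1 f U → (∀ x ∈ U \ K, f x = 0) →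
    IntegrableOn (fun x => ‖fderiv ℝ f x‖ ^ 2) U ∧
    (∫ x in U, ‖f x‖ ^ (2 * d / (d - 2) : ℝ)) ^ ((d - 2) / d : ℝ) ≤
      C * ∫ x in U, ‖fderiv ℝ f x‖ ^ 2 := by
  have hd3 : (3 : ℝ) ≤ d := by exact_mod_cast hd
  have hd2 : (0 : ℝ) < d - 2 := by linarith
  have hd0 : (0 : ℝ) < d := by linarith
  set C0 : ℝ := NNReal.toReal (eLpNormLESNormFDerivOfEqInnerConst
    (volume : Measure (EuclideanSpace ℝ (Fin d))) ((2 : NNReal) : ℝ)) with hC0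
  have hC0n : 0 ≤ C0 := NNReal.coe_nonneg _
  refine ⟨C0 ^ 2 + 1, by positivity, ?_⟩
  intro U K hU hK hKU f hf h0
  obtain ⟨hc, hs⟩ := indicator_contDiff hU hK hKU hf h0
  set F := U.indicator f with hF
  have hp'0 : (0 : ℝ) < 2 * d / (d - 2) := by positivity
  set p' : NNReal := ⟨2 * d / (d - 2), hp'0.le⟩ with hp'
  have hp'c : (p' : ℝ) = 2 * d / (d - 2) := rfl
  have hfin : Module.finrank ℝ (EuclideanSpace ℝ (Fin d)) = d := by simp
  have key := eLpNorm_le_eLpNorm_fderiv_of_eq_inner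
    (volume : Measure (EuclideanSpace ℝ (Fin d))) hc hs (p := 2) (p' := p')
    (by norm_num) (by rw [hfin]; omega)
    (by rw [hfin, hp'c]; simp only [NNReal.coe_inv, NNReal.coe_ofNat]; field_simp)
  have hcf : Continuous (fderiv ℝ F) := hc.continuous_fderiv one_ne_zero
  have hsf : HasCompactSupport (fderiv ℝ F) := hs.fderiv ℝ
  have hm1 : MemLp F p' volume := hc.continuous.memLp_of_hasCompactSupport hs
  have hm2 : MemLp (fderiv ℝ F) (2 : NNReal) volume := hcf.memLp_of_hasCompactSupport hsf
  rw [hm1.eLpNorm_eq_integral_rpow_norm (by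
      rw [ne_eq, ENNReal.coe_eq_zero]; intro h; rw [← NNReal.coe_eq_zero] at h
      exact hp'0.ne' h) ENNReal.coe_ne_top,
    hm2.eLpNorm_eq_integral_rpow_norm (by simp) ENNReal.coe_ne_top] at key
  simp only [ENNReal.coe_toReal, NNReal.coe_ofNat] at key
  rw [hp'c] at key
  rw [← ENNReal.ofReal_coe_nnreal, ← ENNReal.ofReal_mul (NNReal.coe_nonneg _)] at key
  have hI2 : 0 ≤ ∫ x, ‖fderiv ℝ F x‖ ^ (2 : ℝ) := integral_nonneg fun x => by positivity
  have hI1 : 0 ≤ ∫ x, ‖F x‖ ^ (2 * d / (d - 2) : ℝ) := integral_nonneg fun x => by positivity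
  rw [ENNReal.ofReal_le_ofReal_iff (by positivity)] at key
  have heq1 : ∫ x, ‖F x‖ ^ (2 * d / (d - 2) : ℝ) = ∫ x in U, ‖f x‖ ^ (2 * d / (d - 2) : ℝ) := by
    rw [← setIntegral_eq_integral_of_forall_compl_eq_zero (s := U)]
    · refine setIntegral_congr_fun hU.measurableSet fun x hx => ?_
      simp only [F, indicator_of_mem hx]
    · intro x hx
      simp only [F, indicator_of_notMem hx, norm_zero]
      exact Real.zero_rpow hp'0.ne'
  have hint : Integrable (fun x => ‖fderiv ℝ F x‖ ^ 2) := by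
    have h1 : Continuous (fun x => ‖fderiv ℝ F x‖ ^ 2) := hcf.norm.pow 2
    refine h1.integrable_of_hasCompactSupport ?_
    refine hsf.mono ?_
    intro x hx hx0
    apply hx
    show ‖fderiv ℝ F x‖ ^ 2 = 0
    rw [hx0, norm_zero]; norm_num
  have heqon : EqOn (fun x => ‖fderiv ℝ F x‖ ^ 2) (fun x => ‖fderiv ℝ f x‖ ^ 2) U := by
    intro x hx
    simp only [F, fderiv_indicator hU hx]
  have heq2 : ∫ x, ‖fderiv ℝ F x‖ ^ (2 : ℝ) = ∫ x in U, ‖fderiv ℝ f x‖ ^ 2 := by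
    rw [← setIntegral_congr_fun hU.measurableSet heqon,
      setIntegral_eq_integral_of_forall_compl_eq_zero]
    · simp
    intro x hx
    have hxK : x ∈ Kᶜ := fun h => hx (hKU h)
    have : F =ᶠ[nhds x] fun _ => 0 := by
      filter_upwards [hK.isClosed.isOpen_compl.mem_nhds hxK] with y hy
      by_cases hyU : y ∈ U
      · simp only [F, indicator_of_mem hyU]; exact h0 y ⟨hyU, hy⟩
      · exact indicator_of_notMem hyU f
    rw [this.fderiv_eq]; simp
  refine ⟨hint.integrableOn.congr_fun heqon hU.measurableSet, ?_⟩
  rw [heq1] at key hI1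
  rw [heq2] at key hI2
  change _ ≤ C0 * _ at key
  set A := ∫ x in U, ‖f x‖ ^ (2 * d / (d - 2) : ℝ)
  set D := ∫ x in U, ‖fderiv ℝ f x‖ ^ 2
  have h2 := pow_le_pow_left₀ (by positivity) key 2
  have e1 : (A ^ (2 * d / (d - 2) : ℝ)⁻¹) ^ 2 = A ^ ((d - 2) / d : ℝ) := by
    rw [← Real.rpow_natCast, ← Real.rpow_mul hI1]
    congr 1
    push_cast
    field_simp
  have e2 : (C0 * D ^ (2 : ℝ)⁻¹) ^ 2 = C0 ^ 2 * D := by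
    rw [mul_pow, ← Real.rpow_natCast (D ^ _), ← Real.rpow_mul hI2]
    norm_num
  rw [e1, e2] at h2
  nlinarith

noncomputable def gfun (ε p u : ℝ) : ℝ := p * tpow ε (p - 1) 3 u + 3 * ε * tpow ε (p - 2) 2 u

noncomputable def gfun' (ε p u : ℝ) : ℝ :=
  p * (p - 1) * tpow ε (p - 2) 3 u + 6 * (p - 1) * ε * tpow ε (p - 3) 2 u
    + 6 * ε ^ 2 * tpow ε (p - 4) 1 u

lemma G_deriv (ε p : ℝ) {u : ℝ} (hu : 0 < u) : HasDerivAt (tpow ε p 3) (gfun ε p u) u := by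
  refine (tpow_deriv ε p 1 hu).congr_deriv ?_
  simp only [gfun]; norm_num

lemma g_deriv (ε p : ℝ) {u : ℝ} (hu : 0 < u) : HasDerivAt (gfun ε p) (gfun' ε p u) u := by
  have h1 := (tpow_deriv ε (p - 1) 1 hu).const_mul p
  have h2 := (tpow_deriv ε (p - 2) 0 hu).const_mul (3 * ε)
  refine (h1.add h2).congr_deriv ?_
  simp only [gfun']
  rw [show p - 1 - 1 = p - 2 by ring, show p - 1 - 2 = p - 3 by ring,
    show p - 2 - 1 = p - 3 by ring, show p - 2 - 2 = p - 4 by ring]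
  push_cast
  simp only [zero_add]
  ring

lemma g_contDiffOn (ε p : ℝ) : ContDiffOn ℝ 1 (gfun ε p) (Ioi 0) := by
  unfold gfun
  exact (contDiffOn_const.mul (tpow_contDiffOn ε (p - 1) 1)).add
    (contDiffOn_const.mul (tpow_contDiffOn ε (p - 2) 0))

lemma g_zero {ε p : ℝ} {u : ℝ} (hu : 0 < u) (h : u ≤ ε) : gfun ε p u = 0 := by
  simp [gfun, tpow_zero (k := 3) (by norm_num) hu h, tpow_zero (k := 2) (by norm_num) hu h]

noncomputable def hfun' (ε q u : ℝ) : ℝ := q * tpow ε (q - 1) 3 u + 3 * ε * tpow ε (q - 2) 2 u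

lemma scalar_ineq {ε p q m u : ℝ} (hε : 0 < ε) (hp : 1 < p) (hm : 0 < m) (hq : 0 < q)
    (hqe : 2 * q = p + m - 1) (hu : 0 < u) :
    m * p * (p - 1) / (q + 3) ^ 2 * (gfun ε q u) ^ 2 ≤ gfun' ε p u * (m * u ^ (m - 1)) := by
  rcases le_or_gt u ε with h | h
  · rw [g_zero hu h]
    simp [gfun', tpow_zero (k := 3) (by norm_num) hu h, tpow_zero (k := 2) (by norm_num) hu h,
      tpow_zero (k := 1) (by norm_num) hu h]
  have hr0 : 0 ≤ max (1 - ε / u) 0 := le_max_right _ _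
  have hr1 : max (1 - ε / u) 0 ≤ 1 := by
    apply max_le _ zero_le_one
    have : 0 ≤ ε / u := by positivity
    linarith
  have hp1 : 0 < p - 1 := by linarith
  have hg' : p * (p - 1) * tpow ε (p - 2) 3 u ≤ gfun' ε p u := by
    unfold gfun'
    have h1 : 0 ≤ 6 * (p - 1) * ε * tpow ε (p - 3) 2 u :=
      mul_nonneg (by positivity) (tpow_nonneg hu.le)
    have h2 : 0 ≤ 6 * ε ^ 2 * tpow ε (p - 4) 1 u :=
      mul_nonneg (by positivity) (tpow_nonneg hu.le)
    linarith
  have hh0 : 0 ≤ gfun ε q u := by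
    unfold gfun
    exact add_nonneg (mul_nonneg hq.le (tpow_nonneg hu.le))
      (mul_nonneg (by positivity) (tpow_nonneg hu.le))
  have hh : gfun ε q u ≤ (q + 3) * (u ^ (q - 1) * (max (1 - ε / u) 0) ^ 2) := by
    unfold gfun tpow
    set r := max (1 - ε / u) 0
    have e1 : u ^ (q - 1) = u ^ (q - 2) * u := by
      rw [← Real.rpow_add_one hu.ne']; congr 1; ring
    have hx : 0 < u ^ (q - 2) := Real.rpow_pos_of_pos hu _
    have a1 : q * (u ^ (q - 1) * r ^ 3) ≤ q * (u ^ (q - 1) * r ^ 2) := by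
      have : r ^ 3 ≤ r ^ 2 := pow_le_pow_of_le_one hr0 hr1 (by norm_num)
      have : 0 < u ^ (q - 1) := Real.rpow_pos_of_pos hu _
      gcongr
    have a2 : 3 * ε * (u ^ (q - 2) * r ^ 2) ≤ 3 * (u ^ (q - 1) * r ^ 2) := by
      rw [e1]
      have : 0 ≤ u ^ (q - 2) * r ^ 2 := by positivity
      nlinarith
    linarith
  have hsq : (gfun ε q u) ^ 2 ≤ (q + 3) ^ 2 * (u ^ (p - 2) * u ^ (m - 1) *
      (max (1 - ε / u) 0) ^ 3) := by
    refine (pow_le_pow_left₀ hh0 hh 2).trans ?_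
    have e2 : u ^ (p - 2) * u ^ (m - 1) = (u ^ (q - 1)) ^ 2 := by
      rw [← Real.rpow_add hu, ← Real.rpow_natCast, ← Real.rpow_mul hu.le]
      congr 1; push_cast; linarith
    rw [e2, mul_pow, mul_pow, ← pow_mul]
    have : max (1 - ε / u) 0 ^ (2 * 2) ≤ max (1 - ε / u) 0 ^ 3 :=
      pow_le_pow_of_le_one hr0 hr1 (by norm_num)
    gcongr
  calc m * p * (p - 1) / (q + 3) ^ 2 * (gfun ε q u) ^ 2
      ≤ m * p * (p - 1) / (q + 3) ^ 2 * ((q + 3) ^ 2 * (u ^ (p - 2) * u ^ (m - 1) *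
      (max (1 - ε / u) 0) ^ 3)) := by gcongr
    _ = (p * (p - 1) * tpow ε (p - 2) 3 u) * (m * u ^ (m - 1)) := by
        unfold tpow; field_simp
    _ ≤ _ := by
        have : 0 < u ^ (m - 1) := Real.rpow_pos_of_pos hu _
        gcongr

lemma norm_sq_le {d : ℕ} (L : EuclideanSpace ℝ (Fin d) →L[ℝ] ℝ) :
    ‖L‖ ^ 2 ≤ ∑ i, (L (EuclideanSpace.single i 1)) ^ 2 := by
  have hS : 0 ≤ ∑ i, (L (EuclideanSpace.single i 1)) ^ 2 := Finset.sum_nonneg fun i _ => sq_nonneg _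
  have : ‖L‖ ≤ √(∑ i, (L (EuclideanSpace.single i 1)) ^ 2) := by
    refine L.opNorm_le_bound (Real.sqrt_nonneg _) fun x => ?_
    have hx : L x = ∑ i, x i * L (EuclideanSpace.single i 1) := by
      have h := (EuclideanSpace.basisFun (Fin d) ℝ).sum_repr x
      conv_lhs => rw [← h]
      simp
    rw [hx, EuclideanSpace.norm_eq, ← Real.sqrt_mul hS, Real.norm_eq_abs]
    apply Real.abs_le_sqrt
    have := Finset.sum_mul_sq_le_sq_mul_sq Finset.univ (fun i => x i)
      (fun i => L (EuclideanSpace.single i 1))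
    simp only [Real.norm_eq_abs, sq_abs]
    linarith
  calc ‖L‖ ^ 2 ≤ (√(∑ i, (L (EuclideanSpace.single i 1)) ^ 2)) ^ 2 := by gcongr
    _ = _ := Real.sq_sqrt hS

lemma energy {d : ℕ} {ε p q m : ℝ} (hε : 0 < ε) (hp : 1 < p) (hm : 0 < m) (hq : 0 < q)
    (hqe : 2 * q = p + m - 1) {B K : Set (EuclideanSpace ℝ (Fin d))} (hB : IsOpen B)
    (hK : IsCompact K) (hKB : K ⊆ B) {U : EuclideanSpace ℝ (Fin d) → ℝ}
    (hU : ContDiffOn ℝ 2 U B) (hpos : ∀ x ∈ B, 0 < U x) (hsm : ∀ x ∈ B \ K, U x ≤ ε)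
    (hI : IntegrableOn (fun x => ‖fderiv ℝ (fun y => tpow ε q 3 (U y)) x‖ ^ 2) B) :
    ∫ x in B, gfun ε p (U x) * spaceLap (fun y => U y ^ m) x ≤
      - (m * p * (p - 1) / (q + 3) ^ 2 *
        ∫ x in B, ‖fderiv ℝ (fun y => tpow ε q 3 (U y)) x‖ ^ 2) := by
  set e : Fin d → EuclideanSpace ℝ (Fin d) := fun i => EuclideanSpace.single i 1 with he
  set c := m * p * (p - 1) / (q + 3) ^ 2 with hc
  have hp1 : 0 < p - 1 := by linarith
  have hc0 : 0 < c := by positivity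
  have hv : ContDiffOn ℝ 2 (fun y => U y ^ m) B := fun x hx =>
    (hU x hx).rpow_const_of_ne (hpos x hx).ne'
  have hdv : ∀ i, ContDiffOn ℝ 1 (fun y => fderiv ℝ (fun y => U y ^ m) y (e i)) B := fun i =>
    (hv.fderiv_of_isOpen hB (by norm_num)).clm_apply contDiffOn_const
  have hgU : ContDiffOn ℝ 1 (fun y => gfun ε p (U y)) B :=
    (g_contDiffOn ε p).comp (hU.of_le (by norm_num)) fun x hx => hpos x hx
  set V : Fin d → EuclideanSpace ℝ (Fin d) → ℝ :=
    fun i y => gfun ε p (U y) * fderiv ℝ (fun y => U y ^ m) y (e i) with hV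
  have hVc : ∀ i, ContDiffOn ℝ 1 (V i) B := fun i => hgU.mul (hdv i)
  have hV0 : ∀ i, ∀ x ∈ B \ K, V i x = 0 := by
    intro i x hx
    simp only [V, g_zero (hpos x hx.1) (hsm x hx), zero_mul]
  have hdiv := fun i => integral_fderiv_zero hB hK hKB (hVc i) (hV0 i) (e i)
  have hdivI : IntegrableOn (fun x => ∑ i, fderiv ℝ (V i) x (e i)) B :=
    integrable_finsetSum _ fun i _ => (hdiv i).1
  have hdiv0 : ∫ x in B, ∑ i, fderiv ℝ (V i) x (e i) = 0 := by
    rw [integral_finsetSum _ fun i _ => (hdiv i).1]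
    exact Finset.sum_eq_zero fun i _ => (hdiv i).2
  have hlapc : ContinuousOn (fun x => gfun ε p (U x) * spaceLap (fun y => U y ^ m) x) B := by
    refine hgU.continuousOn.mul ?_
    unfold spaceLap
    refine continuousOn_finsetSum _ fun i _ => ?_
    exact ((hdv i).continuousOn_fderiv_of_isOpen hB (by norm_num)).clm_apply continuousOn_const
  have hlapI : IntegrableOn (fun x => gfun ε p (U x) * spaceLap (fun y => U y ^ m) x) B :=
    integrableOn_cpt hB hK hKB hlapc fun x hx => by
      rw [g_zero (hpos x hx.1) (hsm x hx), zero_mul]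
  have hpt : ∀ x ∈ B, gfun ε p (U x) * spaceLap (fun y => U y ^ m) x ≤
      ∑ i, fderiv ℝ (V i) x (e i) - c * ‖fderiv ℝ (fun y => tpow ε q 3 (U y)) x‖ ^ 2 := by
    intro x hx
    have hUd : HasFDerivAt U (fderiv ℝ U x) x :=
      ((hU.contDiffAt (hB.mem_nhds hx)).differentiableAt (by norm_num)).hasFDerivAt
    have h1 : HasFDerivAt (fun y => gfun ε p (U y)) (gfun' ε p (U x) • fderiv ℝ U x) x :=
      (g_deriv ε p (hpos x hx)).comp_hasFDerivAt x hUd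
    have h2 : HasFDerivAt (fun y => tpow ε q 3 (U y)) (gfun ε q (U x) • fderiv ℝ U x) x :=
      (G_deriv ε q (hpos x hx)).comp_hasFDerivAt x hUd
    have h3 : HasFDerivAt (fun y => U y ^ m) ((m * U x ^ (m - 1)) • fderiv ℝ U x) x :=
      (Real.hasDerivAt_rpow_const (Or.inl (hpos x hx).ne')).comp_hasFDerivAt x hUd
    have hVd : ∀ i, fderiv ℝ (V i) x (e i) =
        gfun ε p (U x) * fderiv ℝ (fun y => fderiv ℝ (fun y => U y ^ m) y (e i)) x (e i) +
        gfun' ε p (U x) * (m * U x ^ (m - 1)) * (fderiv ℝ U x (e i)) ^ 2 := by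
      intro i
      have h4 : HasFDerivAt (fun y => fderiv ℝ (fun y => U y ^ m) y (e i)) _ x :=
        (((hdv i).contDiffAt (hB.mem_nhds hx)).differentiableAt (by norm_num)).hasFDerivAt
      have h5 := (h1.mul h4).fderiv
      have h6 : fderiv ℝ (V i) x = _ := h5
      rw [h6, h3.fderiv]
      simp
      ring
    rw [Finset.sum_congr rfl fun i _ => hVd i, Finset.sum_add_distrib, ← Finset.mul_sum,
      ← Finset.mul_sum]
    have h7 := norm_sq_le (fderiv ℝ (fun y => tpow ε q 3 (U y)) x)
    have h8 : ∑ i, (fderiv ℝ (fun y => tpow ε q 3 (U y)) x (EuclideanSpace.single i 1)) ^ 2 =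
        (gfun ε q (U x)) ^ 2 * ∑ i, (fderiv ℝ U x (e i)) ^ 2 := by
      rw [h2.fderiv, Finset.mul_sum]
      refine Finset.sum_congr rfl fun i _ => ?_
      simp [e, mul_pow]
    rw [h8] at h7
    have h9 := scalar_ineq hε hp hm hq hqe (hpos x hx)
    have h10 : 0 ≤ ∑ i, (fderiv ℝ U x (e i)) ^ 2 := Finset.sum_nonneg fun i _ => sq_nonneg _
    have h11 := mul_le_mul_of_nonneg_left h7 hc0.le
    have h12 := mul_le_mul_of_nonneg_right h9 h10
    have h13 : spaceLap (fun y => U y ^ m) x =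
      ∑ i, fderiv ℝ (fun y => fderiv ℝ (fun y => U y ^ m) y (e i)) x (e i) := rfl
    rw [h13]
    nlinarith
  have := setIntegral_mono_on hlapI (hdivI.sub (hI.const_mul c)) hB.measurableSet hpt
  refine this.trans (le_of_eq ?_)
  have e1 := integral_sub hdivI (hI.const_mul c)
  rw [hdiv0, integral_const_mul] at e1
  rw [← zero_sub, ← e1]
  rfl

lemma ode {Y D : ℝ → ℝ} {s t κ θ : ℝ} (hst : s ≤ t)
    (hd : ∀ τ ∈ Icc s t, HasDerivAt Y (D τ) τ) (hD : ∀ τ ∈ Icc s t, D τ ≤ 0)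
    (hD2 : ∀ τ ∈ Icc s t, 0 < Y τ → D τ ≤ -(κ * (Y τ) ^ θ)) (hY : 0 < Y t) (hθ : θ < 1) :
    Y t ^ (1 - θ) ≤ Y s ^ (1 - θ) - (1 - θ) * κ * (t - s) := by
  have hc : ContinuousOn Y (Icc s t) := fun τ hτ => (hd τ hτ).continuousAt.continuousWithinAt
  have hanti : AntitoneOn Y (Icc s t) := by
    refine antitoneOn_of_deriv_nonpos (convex_Icc s t) hc
      (fun τ hτ => (hd τ (interior_subset hτ)).differentiableAt.differentiableWithinAt) ?_
    intro τ hτ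
    rw [(hd τ (interior_subset hτ)).deriv]
    exact hD τ (interior_subset hτ)
  have hpos : ∀ τ ∈ Icc s t, 0 < Y τ := fun τ hτ =>
    hY.trans_le (hanti hτ (right_mem_Icc.2 hst) hτ.2)
  have hd' : ∀ τ ∈ Icc s t, HasDerivAt (fun τ => Y τ ^ (1 - θ))
      (D τ * (1 - θ) * Y τ ^ (1 - θ - 1)) τ := fun τ hτ =>
    (hd τ hτ).rpow_const (Or.inl (hpos τ hτ).ne')
  have := (convex_Icc s t).image_sub_le_mul_sub_of_deriv_le (f := fun τ => Y τ ^ (1 - θ))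
    (C := -((1 - θ) * κ))
    (fun τ hτ => (hd' τ hτ).continuousAt.continuousWithinAt)
    (fun τ hτ => (hd' τ (interior_subset hτ)).differentiableAt.differentiableWithinAt)
    (fun τ hτ => by
      have hτ' := interior_subset hτ
      rw [(hd' τ hτ').deriv]
      have h1 := hD2 τ hτ' (hpos τ hτ')
      have h2 : Y τ ^ θ * Y τ ^ (1 - θ - 1) = 1 := by
        rw [← Real.rpow_add (hpos τ hτ')]
        simp
      have h3 : 0 < Y τ ^ (1 - θ - 1) := Real.rpow_pos_of_pos (hpos τ hτ') _
      have h4 : 0 < (1 - θ) * Y τ ^ (1 - θ - 1) := mul_pos (by linarith) h3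
      calc D τ * (1 - θ) * Y τ ^ (1 - θ - 1) = D τ * ((1 - θ) * Y τ ^ (1 - θ - 1)) := by ring
        _ ≤ -(κ * (Y τ) ^ θ) * ((1 - θ) * Y τ ^ (1 - θ - 1)) :=
          mul_le_mul_of_nonneg_right h1 h4.le
        _ = -((1 - θ) * κ) * (Y τ ^ θ * Y τ ^ (1 - θ - 1)) := by ring
        _ = _ := by rw [h2, mul_one])
    s (left_mem_Icc.2 hst) t (right_mem_Icc.2 hst) hst
  linarith

lemma trunc_bound {ε p N M u : ℝ} (hε : 0 < ε) (hp : 1 < p) (hN : 1 ≤ N) (hu : 0 < u)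
    (huM : u ≤ M) :
    u ^ p - N * ε * M ^ (p - 1) ≤ u ^ p * (max (1 - ε / u) 0) ^ N := by
  have e1 : u ^ p = u ^ (p - 1) * u := by
    rw [← Real.rpow_add_one hu.ne']; congr 1; ring
  have h1 : u ^ (p - 1) ≤ M ^ (p - 1) := Real.rpow_le_rpow hu.le huM (by linarith)
  have h0 : 0 < u ^ (p - 1) := Real.rpow_pos_of_pos hu _
  have h2 : 0 ≤ (max (1 - ε / u) 0) ^ N := Real.rpow_nonneg (le_max_right _ _) _
  have h3 : 1 - N * (ε / u) ≤ (max (1 - ε / u) 0) ^ N := by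
    rcases le_or_gt u ε with h | h
    · have : 1 ≤ ε / u := by rw [le_div_iff₀ hu]; linarith
      nlinarith
    · have : ε / u ≤ 1 := by rw [div_le_one hu]; exact h.le
      rw [max_eq_left (by linarith)]
      have := one_add_mul_self_le_rpow_one_add (s := -(ε / u)) (by linarith) hN
      rw [← sub_eq_add_neg] at this
      linarith
  have h4 : N * ε * u ^ (p - 1) ≤ N * ε * M ^ (p - 1) := by gcongr
  have h5 : u ^ p * (1 - N * (ε / u)) ≤ u ^ p * (max (1 - ε / u) 0) ^ N :=
    mul_le_mul_of_nonneg_left h3 (by rw [e1]; positivity)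
  have h6 : u ^ p * (1 - N * (ε / u)) = u ^ p - N * ε * u ^ (p - 1) := by
    rw [e1]; field_simp
  linarith

lemma tpow_le {ε a : ℝ} {k : ℕ} {u : ℝ} (hε : 0 < ε) (hu : 0 < u) : tpow ε a k u ≤ u ^ a := by
  unfold tpow
  have hr1 : max (1 - ε / u) 0 ≤ 1 := by
    apply max_le _ zero_le_one
    have : 0 ≤ ε / u := by positivity
    linarith
  have h := pow_le_one₀ (n := k) (le_max_right (1 - ε / u) 0) hr1
  have : 0 < u ^ a := Real.rpow_pos_of_pos hu _
  nlinarith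

lemma tpow_ge {ε p N M u : ℝ} (hε : 0 < ε) (hp : 1 < p) (hN : 3 ≤ N) (hu : 0 < u)
    (huM : u ≤ M) : u ^ p - N * ε * M ^ (p - 1) ≤ tpow ε p 3 u := by
  refine (trunc_bound hε hp (by linarith) hu huM).trans ?_
  unfold tpow
  have hr0 : 0 ≤ max (1 - ε / u) 0 := le_max_right _ _
  have hr1 : max (1 - ε / u) 0 ≤ 1 := by
    apply max_le _ zero_le_one
    have : 0 ≤ ε / u := by positivity
    linarith
  have : (max (1 - ε / u) 0) ^ N ≤ (max (1 - ε / u) 0) ^ 3 := by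
    rcases hr0.eq_or_lt with h | h
    · rw [← h, Real.zero_rpow (by linarith)]; norm_num
    · rw [← Real.rpow_natCast]
      exact Real.rpow_le_rpow_of_exponent_ge h hr1 (by exact_mod_cast hN)
  gcongr

lemma tpow_rpow {ε q s u : ℝ} (hu : 0 < u) :
    (tpow ε q 3 u) ^ s = u ^ (q * s) * (max (1 - ε / u) 0) ^ (3 * s) := by
  unfold tpow
  have hr0 : 0 ≤ max (1 - ε / u) 0 := le_max_right _ _
  rw [Real.mul_rpow (by positivity) (by positivity), Real.rpow_mul hu.le, Real.rpow_mul hr0]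
  congr 2
  rw [← Real.rpow_natCast]; norm_num

section sol
variable {d : ℕ} {m : ℝ} {x₀ : EuclideanSpace ℝ (Fin d)} {ρ T : ℝ}
    {u : ℝ → EuclideanSpace ℝ (Fin d) → ℝ} {u₀ : EuclideanSpace ℝ (Fin d) → ℝ}

lemma exists_cpt (h : IsDirichletSol m x₀ ρ T u u₀) {a b ε : ℝ} (ha : 0 < a) (hb : b < T)
    (hε : 0 < ε) : ∃ K : Set (EuclideanSpace ℝ (Fin d)), IsCompact K ∧ K ⊆ ball x₀ ρ ∧
      ∀ t ∈ Icc a b, ∀ x ∈ ball x₀ ρ \ K, u t x ≤ ε := by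
  obtain ⟨h0, hcont, -, -, hbd, -, -⟩ := h
  have hsub : Icc a b ×ˢ closedBall x₀ ρ ⊆ Icc 0 T ×ˢ closedBall x₀ ρ :=
    prod_mono (Icc_subset_Icc ha.le hb.le) le_rfl
  have hcmp : IsCompact (Icc a b ×ˢ closedBall x₀ ρ) :=
    isCompact_Icc.prod (isCompact_closedBall x₀ ρ)
  have hS := (hcont.mono hsub).preimage_isClosed_of_isClosed hcmp.isClosed (isClosed_Ici (a := ε))
  have hSc := hcmp.of_isClosed_subset hS inter_subset_left
  refine ⟨_, hSc.image continuous_snd, ?_, ?_⟩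
  · rintro x ⟨⟨t, y⟩, ⟨⟨ht, hy⟩, hu⟩, rfl⟩
    simp only [mem_preimage, mem_Ici] at hu ht hy
    rcases (mem_closedBall.1 hy).eq_or_lt with h1 | h1
    · have := hbd t ⟨ha.trans_le ht.1, ht.2.trans hb.le⟩ y (mem_sphere.2 h1)
      linarith
    · exact mem_ball.2 h1
  · intro t ht x hx
    by_contra hlt
    push Not at hlt
    exact hx.2 ⟨(t, x), ⟨⟨ht, ball_subset_closedBall hx.1⟩, hlt.le⟩, rfl⟩

lemma exists_bd (h : IsDirichletSol m x₀ ρ T u u₀) :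
    ∃ M : ℝ, 0 < M ∧ ∀ t ∈ Icc 0 T, ∀ x ∈ closedBall x₀ ρ, u t x ≤ M := by
  obtain ⟨C, hC⟩ := (isCompact_Icc.prod (isCompact_closedBall x₀ ρ)).exists_bound_of_continuousOn
    h.2.1
  refine ⟨max C 1, by positivity, fun t ht x hx => ?_⟩
  have := hC (t, x) ⟨ht, hx⟩
  exact (le_abs_self _).trans (this.trans (le_max_left _ _))

lemma sol_pos (h : IsDirichletSol m x₀ ρ T u u₀) {t : ℝ} (ht : t ∈ Ioo 0 T)
    {x : EuclideanSpace ℝ (Fin d)} (hx : x ∈ ball x₀ ρ) : 0 < u t x :=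
  h.2.2.1.1 (t, x) ⟨ht, hx⟩

lemma sol_smooth (h : IsDirichletSol m x₀ ρ T u u₀) {t : ℝ} (ht : t ∈ Ioo 0 T) :
    ContDiffOn ℝ 2 (u t) (ball x₀ ρ) := by
  have h1 : ContDiffOn ℝ 2 (fun p : ℝ × EuclideanSpace ℝ (Fin d) => u p.1 p.2)
    (Ioo 0 T ×ˢ ball x₀ ρ) := h.2.2.1.2.1.of_le (WithTop.coe_le_coe.2 (le_top : (2 : ℕ∞) ≤ ⊤))
  exact h1.comp (f := fun x => (t, x)) (contDiffOn_const.prodMk contDiffOn_id)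
    fun x hx => ⟨ht, hx⟩

lemma sol_hasDerivAt (h : IsDirichletSol m x₀ ρ T u u₀) {t : ℝ} (ht : t ∈ Ioo 0 T)
    {x : EuclideanSpace ℝ (Fin d)} (hx : x ∈ ball x₀ ρ) :
    HasDerivAt (fun s => u s x) (fderiv ℝ (fun p : ℝ × EuclideanSpace ℝ (Fin d) => u p.1 p.2)
      (t, x) (1, 0)) t := by
  have hopen : IsOpen (Ioo 0 T ×ˢ ball x₀ ρ) := isOpen_Ioo.prod isOpen_ball
  have h1 : DifferentiableAt ℝ (fun p : ℝ × EuclideanSpace ℝ (Fin d) => u p.1 p.2) (t, x) :=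
by
    have hsm := h.2.2.1.2.1
    have hmem : ((t, x) : ℝ × EuclideanSpace ℝ (Fin d)) ∈ Ioo 0 T ×ˢ ball x₀ ρ := ⟨ht, hx⟩
    have h1 := hsm.differentiableOn (by simp)
    exact (h1 (t, x) hmem).differentiableAt (hopen.mem_nhds hmem)
  have h2 : HasDerivAt (fun s : ℝ => (s, x)) ((1 : ℝ), (0 : EuclideanSpace ℝ (Fin d))) t :=
    (hasDerivAt_id t).prodMk (hasDerivAt_const t x)
  have h3 : HasFDerivAt (fun p : ℝ × EuclideanSpace ℝ (Fin d) => u p.1 p.2) _ (t, x) :=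
    h1.hasFDerivAt
  generalize fderiv ℝ (fun p : ℝ × EuclideanSpace ℝ (Fin d) => u p.1 p.2) (t, x) = L at h3 ⊢
  exact HasFDerivAt.comp_hasDerivAt (f := fun s : ℝ => (s, x)) t h3 h2

lemma F_deriv (h : IsDirichletSol m x₀ ρ T u u₀) {ε p : ℝ} (hε : 0 < ε) {t : ℝ}
    (ht : t ∈ Ioo 0 T) :
    HasDerivAt (fun τ => ∫ x in ball x₀ ρ, tpow ε p 3 (u τ x))
      (∫ x in ball x₀ ρ, gfun ε p (u t x) * spaceLap (fun y => u t y ^ m) x) t := by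
  set B := ball x₀ ρ with hB
  set a := t / 2 with ha
  set b := (t + T) / 2 with hb
  have ha0 : 0 < a := by have := ht.1; positivity
  have hbT : b < T := by have := ht.2; simp only [hb]; linarith
  have hat : a < t := by have := ht.1; simp only [ha]; linarith
  have htb : t < b := by have := ht.2; simp only [hb]; linarith
  have hab : Icc a b ⊆ Ioo 0 T := fun τ hτ => ⟨ha0.trans_le hτ.1, hτ.2.trans_lt hbT⟩
  obtain ⟨K, hK, hKB, hKε⟩ := exists_cpt h ha0 hbT hε
  set Df : ℝ × EuclideanSpace ℝ (Fin d) → ℝ := fun z => gfun ε p (u z.1 z.2) *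
    fderiv ℝ (fun p : ℝ × EuclideanSpace ℝ (Fin d) => u p.1 p.2) z (1, 0) with hDf
  have hopen : IsOpen (Ioo 0 T ×ˢ B) := isOpen_Ioo.prod isOpen_ball
  have hsm := h.2.2.1.2.1
  have hDfc : ContinuousOn Df (Ioo 0 T ×ˢ B) := by
    refine ContinuousOn.mul ?_ ?_
    · exact (g_contDiffOn ε p).continuousOn.comp hsm.continuousOn
        fun z hz => h.2.2.1.1 z hz
    · exact (hsm.continuousOn_fderiv_of_isOpen hopen (by simp)).clm_apply continuousOn_const
  obtain ⟨C, hC⟩ := (isCompact_Icc (a := a) (b := b)).prod hK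
    |>.exists_bound_of_continuousOn (hDfc.mono (prod_mono hab hKB))
  have hbound : ∀ τ ∈ Icc a b, ∀ x ∈ B, ‖Df (τ, x)‖ ≤ max C 0 := by
    intro τ hτ x hx
    by_cases hxK : x ∈ K
    · exact (hC (τ, x) ⟨hτ, hxK⟩).trans (le_max_left _ _)
    · simp only [hDf, g_zero (sol_pos h (hab hτ) hx) (hKε τ hτ x ⟨hx, hxK⟩), zero_mul, norm_zero]
      exact le_max_right _ _
  have hGc : ∀ τ ∈ Ioo 0 T, ContinuousOn (fun x => tpow ε p 3 (u τ x)) B := fun τ hτ =>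
    (tpow_contDiffOn ε p 1).continuousOn.comp (sol_smooth h hτ).continuousOn
      fun x hx => sol_pos h hτ hx
  have hslice : ContinuousOn (fun x => Df (t, x)) B :=
    hDfc.comp (f := fun x => (t, x)) (by fun_prop) fun x hx => ⟨ht, hx⟩
  have hmain := (hasDerivAt_integral_of_dominated_loc_of_deriv_le (μ := volume.restrict B)
    (F := fun τ x => tpow ε p 3 (u τ x)) (F' := fun τ x => Df (τ, x)) (x₀ := t)
    (s := Icc a b) (bound := fun _ => max C 0) (Icc_mem_nhds hat htb)
    (by
      filter_upwards [Icc_mem_nhds hat htb] with τ hτ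
      exact (hGc τ (hab hτ)).aestronglyMeasurable measurableSet_ball)
    (by
      refine integrableOn_cpt isOpen_ball hK hKB (hGc t ht) fun x hx => ?_
      exact tpow_zero (by norm_num) (sol_pos h ht hx.1) (hKε t ⟨hat.le, htb.le⟩ x hx))
    (hslice.aestronglyMeasurable measurableSet_ball)
    (by
      filter_upwards [ae_restrict_mem measurableSet_ball] with x hx τ hτ
      exact hbound τ hτ x hx)
    (by
      have : IntegrableOn (fun _ : EuclideanSpace ℝ (Fin d) => max C 0) B :=
        integrableOn_const (measure_ball_lt_top.ne)
      exact this)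
    (by
      filter_upwards [ae_restrict_mem measurableSet_ball] with x hx τ hτ
      exact (G_deriv ε p (sol_pos h (hab hτ) hx)).comp τ (sol_hasDerivAt h (hab hτ) hx))).2
  refine hmain.congr_deriv ?_
  refine setIntegral_congr_fun measurableSet_ball fun x hx => ?_
  simp only [hDf]
  rw [← (sol_hasDerivAt h ht hx).deriv, h.2.2.1.2.2 (t, x) ⟨ht, hx⟩]

lemma F_cont (h : IsDirichletSol m x₀ ρ T u u₀) {p : ℝ} (hp : 0 < p) :
    ContinuousOn (fun τ => ∫ x in ball x₀ ρ, u τ x ^ p) (Icc 0 T) := by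
  obtain ⟨M, hM, hMb⟩ := exists_bd h
  have hc : ContinuousOn (fun z : ℝ × EuclideanSpace ℝ (Fin d) => u z.1 z.2 ^ p)
      (Icc 0 T ×ˢ closedBall x₀ ρ) := h.2.1.rpow_const fun z hz => Or.inr hp.le
  refine continuousOn_of_dominated (bound := fun _ => M ^ p) ?_ ?_ ?_ ?_
  · intro τ hτ
    have : ContinuousOn (fun x => u τ x ^ p) (ball x₀ ρ) :=
      hc.comp (f := fun x => (τ, x)) (by fun_prop)
        fun x hx => ⟨hτ, ball_subset_closedBall hx⟩
    exact this.aestronglyMeasurable measurableSet_ball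
  · intro τ hτ
    filter_upwards [ae_restrict_mem measurableSet_ball] with x hx
    have h0 := h.1 τ hτ x (ball_subset_closedBall hx)
    rw [Real.norm_eq_abs, abs_of_nonneg (by positivity)]
    exact Real.rpow_le_rpow h0 (hMb τ hτ x (ball_subset_closedBall hx)) hp.le
  · have : IntegrableOn (fun _ : EuclideanSpace ℝ (Fin d) => M ^ p) (ball x₀ ρ) :=
        integrableOn_const (measure_ball_lt_top.ne)
    exact this
  · filter_upwards [ae_restrict_mem measurableSet_ball] with x hx
    exact hc.comp (f := fun τ => (τ, x)) (by fun_prop)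
        fun τ hτ => ⟨hτ, ball_subset_closedBall hx⟩

end sol

lemma interior_ineq {d : ℕ} (hd : 3 ≤ d) {m : ℝ} (hm0 : 0 < m) {p q C : ℝ}
    (hp : 1 < p) (hq : 0 < q) (hqe : 2 * q = p + m - 1) (hqp : q * (2 * d / (d - 2) : ℝ) = p)
    (hC : 0 < C)
    (hSob : ∀ (U K : Set (EuclideanSpace ℝ (Fin d))), IsOpen U → IsCompact K → K ⊆ U →
      ∀ f : EuclideanSpace ℝ (Fin d) → ℝ, ContDiffOn ℝ 1 f U → (∀ x ∈ U \ K, f x = 0) →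
      IntegrableOn (fun x => ‖fderiv ℝ f x‖ ^ 2) U ∧
      (∫ x in U, ‖f x‖ ^ (2 * d / (d - 2) : ℝ)) ^ ((d - 2) / d : ℝ) ≤
        C * ∫ x in U, ‖fderiv ℝ f x‖ ^ 2)
    {x₀ : EuclideanSpace ℝ (Fin d)} {ρ T : ℝ} (hρ : 0 < ρ)
    {u : ℝ → EuclideanSpace ℝ (Fin d) → ℝ} {u₀ : EuclideanSpace ℝ (Fin d) → ℝ}
    (h : IsDirichletSol m x₀ ρ T u u₀) {s t : ℝ} (hs : 0 < s) (hst : s ≤ t) (htT : t < T) :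
    (∫ x in ball x₀ ρ, u t x ^ p) ^ (1 - (d - 2) / d : ℝ) ≤
      (∫ x in ball x₀ ρ, u s x ^ p) ^ (1 - (d - 2) / d : ℝ) -
        (1 - (d - 2) / d) * (m * p * (p - 1) / (q + 3) ^ 2 / C) * (t - s) := by
  have hd3 : (3 : ℝ) ≤ d := by exact_mod_cast hd
  have hd2 : (0 : ℝ) < d - 2 := by linarith
  have hd0 : (0 : ℝ) < d := by linarith
  obtain ⟨M, hM, hMb⟩ := exists_bd h
  set B := ball x₀ ρ with hBdef
  set S : ℝ := 2 * d / (d - 2) with hS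
  have hS2 : 2 ≤ S := by rw [hS, le_div_iff₀ hd2]; linarith
  set θ : ℝ := (d - 2) / d with hθ
  have hθ1 : θ < 1 := by rw [hθ, div_lt_one hd0]; linarith
  have hθ0 : 0 < θ := by positivity
  set c := m * p * (p - 1) / (q + 3) ^ 2 with hc
  have hp1 : 0 < p - 1 := by linarith
  have hc0 : 0 < c := by positivity
  set F : ℝ → ℝ := fun τ => ∫ x in B, u τ x ^ p with hF
  set A : ℝ := 3 * S * M ^ (p - 1) * volume.real B with hA
  have hA0 : 0 ≤ A := by positivity
  have hst' : Icc s t ⊆ Ioo 0 T := fun τ hτ => ⟨hs.trans_le hτ.1, hτ.2.trans_lt htT⟩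
  have hcB : ∀ z : ℝ, IntegrableOn (fun _ : EuclideanSpace ℝ (Fin d) => z) B := fun z =>
    integrableOn_const (measure_ball_lt_top.ne)
  have huc : ∀ τ ∈ Ioo 0 T, ContinuousOn (u τ) B := fun τ hτ => (sol_smooth h hτ).continuousOn
  have huM : ∀ τ ∈ Ioo 0 T, ∀ x ∈ B, u τ x ≤ M := fun τ hτ x hx =>
    hMb τ ⟨hτ.1.le, hτ.2.le⟩ x (ball_subset_closedBall hx)
  have hFI : ∀ τ ∈ Ioo 0 T, IntegrableOn (fun x => u τ x ^ p) B := by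
    intro τ hτ
    refine Integrable.mono' (hcB (M ^ p))
      (((huc τ hτ).rpow_const fun x hx => Or.inr (by linarith)).aestronglyMeasurable
        measurableSet_ball) ?_
    filter_upwards [ae_restrict_mem measurableSet_ball] with x hx
    have h0 := sol_pos h hτ hx
    rw [Real.norm_eq_abs, abs_of_nonneg (by positivity)]
    exact Real.rpow_le_rpow h0.le (huM τ hτ x hx) (by linarith)
  have hFpos : 0 < F t := by
    have ht := hst' (right_mem_Icc.2 hst)
    rw [hF, setIntegral_pos_iff_support_of_nonneg_ae _ (hFI t ht)]
    · refine (measure_ball_pos volume x₀ hρ).trans_le (measure_mono fun x hx => ⟨?_, hx⟩)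
      exact (Real.rpow_pos_of_pos (sol_pos h ht hx) p).ne'
    · filter_upwards [ae_restrict_mem measurableSet_ball] with x hx
      exact (Real.rpow_pos_of_pos (sol_pos h ht hx) p).le
  have hconst : ∀ ε : ℝ, ∫ x in B, (3 * S * ε * M ^ (p - 1)) = A * ε := by
    intro ε
    rw [setIntegral_const, smul_eq_mul, hA]; ring
  have key : ∀ ε : ℝ, 0 < ε → 2 * A * ε < F t →
      (F t - 2 * A * ε) ^ (1 - θ) ≤ F s ^ (1 - θ) - (1 - θ) * (c / C) * (t - s) := by
    intro ε hε hFε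
    obtain ⟨K, hK, hKB, hKε⟩ := exists_cpt h hs htT hε
    set Fe : ℝ → ℝ := fun τ => ∫ x in B, tpow ε p 3 (u τ x) with hFe
    set H : ℝ → ℝ := fun τ => ∫ x in B, ‖tpow ε q 3 (u τ x)‖ ^ S with hH
    have htc : ∀ a : ℝ, ∀ τ ∈ Ioo 0 T, ContDiffOn ℝ 1 (fun x => tpow ε a 3 (u τ x)) B :=
      fun a τ hτ => (tpow_contDiffOn ε a 1).comp ((sol_smooth h hτ).of_le (by norm_num))
        fun x hx => sol_pos h hτ hx
    have ht0 : ∀ a : ℝ, ∀ τ ∈ Icc s t, ∀ x ∈ B \ K, tpow ε a 3 (u τ x) = 0 :=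
      fun a τ hτ x hx => tpow_zero (by norm_num) (sol_pos h (hst' hτ) hx.1) (hKε τ hτ x hx)
    have hGI : ∀ τ ∈ Icc s t, IntegrableOn (fun x => tpow ε p 3 (u τ x)) B := fun τ hτ =>
      integrableOn_cpt isOpen_ball hK hKB (htc p τ (hst' hτ)).continuousOn (ht0 p τ hτ)
    have hHI : ∀ τ ∈ Icc s t, IntegrableOn (fun x => ‖tpow ε q 3 (u τ x)‖ ^ S) B := fun τ hτ =>
      integrableOn_cpt isOpen_ball hK hKB
        ((htc q τ (hst' hτ)).continuousOn.norm.rpow_const fun x hx => Or.inr (by linarith))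
        fun x hx => by
          simp only [ht0 q τ hτ x hx, norm_zero]
          exact Real.zero_rpow (by linarith)
    have hFeF : ∀ τ ∈ Icc s t, Fe τ ≤ F τ := fun τ hτ =>
      setIntegral_mono_on (hGI τ hτ) (hFI τ (hst' hτ)) measurableSet_ball
        fun x hx => tpow_le hε (sol_pos h (hst' hτ) hx)
    have hFFe : ∀ τ ∈ Icc s t, F τ - A * ε ≤ Fe τ := fun τ hτ => by
      have h1 := integral_sub (hFI τ (hst' hτ)) (hcB (3 * S * ε * M ^ (p - 1)))
      rw [hconst] at h1
      rw [hF, ← h1]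
      exact setIntegral_mono_on ((hFI τ (hst' hτ)).sub (hcB _)) (hGI τ hτ) measurableSet_ball
        fun x hx => tpow_ge hε hp (by linarith) (sol_pos h (hst' hτ) hx) (huM τ (hst' hτ) x hx)
    have hFH : ∀ τ ∈ Icc s t, F τ - A * ε ≤ H τ := fun τ hτ => by
      have h1 := integral_sub (hFI τ (hst' hτ)) (hcB (3 * S * ε * M ^ (p - 1)))
      rw [hconst] at h1
      rw [hF, ← h1]
      refine setIntegral_mono_on ((hFI τ (hst' hτ)).sub (hcB _)) (hHI τ hτ) measurableSet_ball
        fun x hx => ?_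
      have hu := sol_pos h (hst' hτ) hx
      rw [Real.norm_of_nonneg (tpow_nonneg hu.le), tpow_rpow hu, hqp]
      exact trunc_bound hε hp (by linarith) hu (huM τ (hst' hτ) x hx)
    have hH0 : ∀ τ, 0 ≤ H τ := fun τ => integral_nonneg fun x => by positivity
    set D : ℝ → ℝ := fun τ => ∫ x in B, gfun ε p (u τ x) * spaceLap (fun y => u τ y ^ m) x
      with hD
    have hDH : ∀ τ ∈ Icc s t, D τ ≤ -(c / C * (H τ) ^ θ) := by
      intro τ hτ
      obtain ⟨hI, hsob⟩ := hSob B K isOpen_ball hK hKB _ (htc q τ (hst' hτ)) (ht0 q τ hτ)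
      have hen := energy hε hp hm0 hq hqe isOpen_ball hK hKB (sol_smooth h (hst' hτ))
        (fun x hx => sol_pos h (hst' hτ) hx) (hKε τ hτ) hI
      refine hen.trans (neg_le_neg ?_)
      rw [div_mul_eq_mul_div, div_le_iff₀ hC, mul_assoc]
      refine mul_le_mul_of_nonneg_left ?_ hc0.le
      rw [mul_comm]
      exact hsob
    have hcC : 0 < c / C := by positivity
    have hode := ode (Y := fun τ => Fe τ - A * ε) (D := D) (κ := c / C) (θ := θ) hst
      (fun τ hτ => (F_deriv h hε (hst' hτ)).sub_const _)
      (fun τ hτ => (hDH τ hτ).trans (by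
        have : 0 ≤ H τ ^ θ := Real.rpow_nonneg (hH0 τ) _
        have := mul_nonneg hcC.le this
        linarith))
      (fun τ hτ hpos => (hDH τ hτ).trans (by
        have h1 : Fe τ - A * ε ≤ H τ := by linarith [hFeF τ hτ, hFH τ hτ]
        have := Real.rpow_le_rpow hpos.le h1 hθ0.le
        exact neg_le_neg (mul_le_mul_of_nonneg_left this hcC.le)))
      (by have := hFFe t (right_mem_Icc.2 hst); linarith) hθ1
    have h1 : (F t - 2 * A * ε) ^ (1 - θ) ≤ (Fe t - A * ε) ^ (1 - θ) := by
      have := hFFe t (right_mem_Icc.2 hst)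
      exact Real.rpow_le_rpow (by linarith) (by linarith) (by linarith)
    have h2 : (Fe s - A * ε) ^ (1 - θ) ≤ (F s) ^ (1 - θ) := by
      have hl := left_mem_Icc.2 hst
      have ha : F t - A * ε ≤ Fe t := hFFe t (right_mem_Icc.2 hst)
      have hb : 0 ≤ Fe s - A * ε := by
        by_contra hneg
        push Not at hneg
        have hanti : AntitoneOn Fe (Icc s t) := by
          refine antitoneOn_of_deriv_nonpos (convex_Icc s t)
            (fun τ hτ => (F_deriv h hε (hst' hτ)).continuousAt.continuousWithinAt)
            (fun τ hτ => (F_deriv h hε (hst' (interior_subset hτ))).differentiableAt.differentiableWithinAt) ?_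
          intro τ hτ
          rw [(F_deriv h hε (hst' (interior_subset hτ))).deriv]
          refine (hDH τ (interior_subset hτ)).trans ?_
          have : 0 ≤ H τ ^ θ := Real.rpow_nonneg (hH0 τ) _
          have := mul_nonneg hcC.le this
          linarith
        have := hanti hl (right_mem_Icc.2 hst) hst
        linarith
      have h3 : 0 ≤ A * ε := by positivity
      exact Real.rpow_le_rpow hb (by linarith [hFeF s hl]) (by linarith)
    linarith
  have hlim : Filter.Tendsto (fun ε : ℝ => (F t - 2 * A * ε) ^ (1 - θ)) (nhdsWithin 0 (Ioi 0))
      (nhds (F t ^ (1 - θ))) := by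
    have h1 : ContinuousAt (fun ε : ℝ => (F t - 2 * A * ε) ^ (1 - θ)) 0 :=
      ContinuousAt.rpow_const (by fun_prop) (Or.inr (by linarith))
    have h2 := h1.tendsto
    simp only [mul_zero, sub_zero] at h2
    exact h2.mono_left nhdsWithin_le_nhds
  refine le_of_tendsto hlim ?_
  have hev : ∀ᶠ ε : ℝ in nhds 0, 2 * A * ε < F t := by
    have : ContinuousAt (fun ε : ℝ => 2 * A * ε) 0 := by fun_prop
    exact this.eventually_lt continuousAt_const (by simpa using hFpos)
  filter_upwards [self_mem_nhdsWithin, nhdsWithin_le_nhds hev] with ε hε h2 using key ε hε h2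

/-- **Decay of the `L^{p_c}` norm and universal upper bound on the extinction time
(Section 1.4.1).** Here `p_c = d(1-m)/2`. -/
theorem Lpc_decay_and_extinction_bound
    (d : ℕ) (hd : 3 ≤ d) (m : ℝ) (hm0 : 0 < m) (hmc : m < (d - 2 : ℝ) / d) :
    ∃ K : ℝ, 0 < K ∧
      ∀ (x₀ : EuclideanSpace ℝ (Fin d)) (ρ T : ℝ), 0 < ρ → 0 < T →
      ∀ (u : ℝ → EuclideanSpace ℝ (Fin d) → ℝ) (u₀ : EuclideanSpace ℝ (Fin d) → ℝ),
        (∀ x ∈ ball x₀ ρ, 0 ≤ u₀ x) →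
        IntegrableOn (fun x => u₀ x ^ (d * (1 - m) / 2)) (ball x₀ ρ) →
        IsDirichletSol m x₀ ρ T u u₀ →
        (∀ s t : ℝ, 0 ≤ s → s ≤ t → t ≤ T →
          ((∫ x in ball x₀ ρ, u t x ^ (d * (1 - m) / 2)) ^
              (2 / (d * (1 - m)))) ^ (1 - m) ≤
            ((∫ x in ball x₀ ρ, u s x ^ (d * (1 - m) / 2)) ^
              (2 / (d * (1 - m)))) ^ (1 - m) - K * (t - s)) ∧
        T ≤ K⁻¹ *
          ((∫ x in ball x₀ ρ, u₀ x ^ (d * (1 - m) / 2)) ^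
            (2 / (d * (1 - m)))) ^ (1 - m) := by
  have hd3 : (3 : ℝ) ≤ d := by exact_mod_cast hd
  have hd2 : (0 : ℝ) < d - 2 := by linarith
  have hd0 : (0 : ℝ) < d := by linarith
  have hmd : m * d < d - 2 := by rwa [lt_div_iff₀ hd0] at hmc
  have hm1 : 0 < 1 - m := by nlinarith
  set p : ℝ := d * (1 - m) / 2 with hp
  have hp1 : 1 < p := by rw [hp, lt_div_iff₀ two_pos]; linarith
  set q : ℝ := (p + m - 1) / 2 with hq
  have hq' : q = (1 - m) * (d - 2) / 4 := by rw [hq, hp]; ring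
  have hq0 : 0 < q := by rw [hq']; positivity
  have hqp : q * (2 * d / (d - 2) : ℝ) = p := by rw [hq', hp]; field_simp; norm_num
  obtain ⟨C, hC, hSob⟩ := sobolev_ball d hd
  set θ : ℝ := (d - 2) / d with hθ
  have hθ1 : θ < 1 := by rw [hθ, div_lt_one hd0]; linarith
  have hp10 : 0 < p - 1 := by linarith
  have hθ10 : 0 < 1 - θ := by linarith
  set K : ℝ := (1 - θ) * (m * p * (p - 1) / (q + 3) ^ 2 / C) with hK
  have hK0 : 0 < K := by positivity
  refine ⟨K, hK0, ?_⟩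
  intro x₀ ρ T hρ hT u u₀ hu₀ _ h
  have hexp : ∀ y : ℝ, 0 ≤ y → (y ^ (2 / (d * (1 - m)))) ^ (1 - m) = y ^ (1 - θ) := by
    intro y hy
    rw [← Real.rpow_mul hy]
    congr 1
    rw [hθ]; field_simp; ring
  have hF0 : ∀ τ ∈ Icc 0 T, 0 ≤ ∫ x in ball x₀ ρ, u τ x ^ p := by
    intro τ hτ
    refine setIntegral_nonneg measurableSet_ball fun x hx => ?_
    exact Real.rpow_nonneg (h.1 τ hτ x (ball_subset_closedBall hx)) _
  have hΦ : ContinuousOn (fun τ => (∫ x in ball x₀ ρ, u τ x ^ p) ^ (1 - θ)) (Icc 0 T) :=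
    (F_cont h (by linarith)).rpow_const fun _ _ => Or.inr hθ10.le
  have hmain : ∀ s t : ℝ, 0 ≤ s → s ≤ t → t ≤ T →
      (∫ x in ball x₀ ρ, u t x ^ p) ^ (1 - θ) ≤
        (∫ x in ball x₀ ρ, u s x ^ p) ^ (1 - θ) - K * (t - s) := by
    intro s t hs hst htT
    rcases hst.eq_or_lt with rfl | hlt
    · simp
    set Φ : ℝ → ℝ := fun τ => (∫ x in ball x₀ ρ, u τ x ^ p) ^ (1 - θ) with hΦd
    have hev : ∀ᶠ δ : ℝ in nhdsWithin 0 (Ioi 0), 0 < δ ∧ δ < (t - s) / 2 := by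
      filter_upwards [Ioo_mem_nhdsGT (show (0 : ℝ) < (t - s) / 2 by linarith)] with δ hδ using hδ
    have hl1 : Filter.Tendsto (fun δ : ℝ => Φ (t - δ)) (nhdsWithin 0 (Ioi 0)) (nhds (Φ t)) := by
      refine (hΦ t ⟨hs.trans hst, htT⟩).tendsto.comp (tendsto_nhdsWithin_iff.2 ⟨?_, ?_⟩)
      · have : ContinuousAt (fun δ : ℝ => t - δ) 0 := by fun_prop
        simpa using this.tendsto.mono_left nhdsWithin_le_nhds
      · filter_upwards [hev] with δ hδ
        constructor <;> linarith [hδ.1, hδ.2]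
    have hl2 : Filter.Tendsto (fun δ : ℝ => Φ (s + δ)) (nhdsWithin 0 (Ioi 0)) (nhds (Φ s)) := by
      refine (hΦ s ⟨hs, hst.trans htT⟩).tendsto.comp (tendsto_nhdsWithin_iff.2 ⟨?_, ?_⟩)
      · have : ContinuousAt (fun δ : ℝ => s + δ) 0 := by fun_prop
        simpa using this.tendsto.mono_left nhdsWithin_le_nhds
      · filter_upwards [hev] with δ hδ
        constructor <;> linarith [hδ.1, hδ.2]
    have hl3 : Filter.Tendsto (fun δ : ℝ => K * ((t - δ) - (s + δ))) (nhdsWithin 0 (Ioi 0))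
        (nhds (K * (t - s))) := by
      have : ContinuousAt (fun δ : ℝ => K * ((t - δ) - (s + δ))) 0 := by fun_prop
      simpa using this.tendsto.mono_left nhdsWithin_le_nhds
    refine le_of_tendsto_of_tendsto hl1 (hl2.sub hl3) ?_
    filter_upwards [hev] with δ hδ
    exact interior_ineq hd hm0 hp1 hq0 (by rw [hq]; ring) hqp hC hSob hρ h
      (by linarith [hδ.1]) (by linarith [hδ.2]) (by linarith [hδ.1])
  constructor
  · intro s t hs hst htT
    rw [hexp _ (hF0 t ⟨hs.trans hst, htT⟩), hexp _ (hF0 s ⟨hs, hst.trans htT⟩)]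
    exact hmain s t hs hst htT
  · have h1 := hmain 0 T le_rfl hT.le le_rfl
    have hT0 : ∫ x in ball x₀ ρ, u T x ^ p = 0 := by
      refine setIntegral_eq_zero_of_forall_eq_zero fun x hx => ?_
      rw [h.2.2.2.2.2.1 x (ball_subset_closedBall hx)]
      exact Real.zero_rpow (by linarith)
    have h00 : ∫ x in ball x₀ ρ, u 0 x ^ p = ∫ x in ball x₀ ρ, u₀ x ^ p := by
      refine setIntegral_congr_fun measurableSet_ball fun x hx => ?_
      simp only [h.2.2.2.1 x hx]
    rw [hT0, Real.zero_rpow hθ10.ne', h00] at h1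
    rw [hexp _ (h00 ▸ hF0 0 ⟨le_rfl, hT.le⟩), inv_mul_eq_div, le_div_iff₀ hK0]
    linarith
end
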